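/- arXiv:math/0209109 — 4 statements merged into one kernel-verified Lean document; each statement's English description precedes it below -/
import Mathlib

section
/- For every n ≥ 1, the map ρ_* : C_*(P_{n+1}; ℤ/2) → C_*(I^n; ℤ/2) induced by the canonical cellular projection P_{n+1} → I^n is a chain map and commutes with the diagonals: ρ_* ∘ ∂ = ∂ ∘ ρ_* and (ρ_* ⊗ ρ_*) ∘ Δ_P = Δ_{I^n} ∘ ρ_*, where Δ_{I^n} is the Serre diagonal of the cube; that is, ρ_* is a map of differential graded coalgebras over ℤ/2. -/
open scoped Classical

namespace SU

/-- min of a finset of naturals (0 for the empty set). -/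
def fmin (s : Finset ℕ) : ℕ := s.min.untopD 0
/-- max of a finset of naturals (0 for the empty set). -/
def fmax (s : Finset ℕ) : ℕ := s.max.unbotD 0

/-- `L` is an ordered partition of the finite set `S`. -/
def IsOrderedPartition (S : Finset ℕ) (L : List (Finset ℕ)) : Prop :=
  (∀ B ∈ L, B ≠ ∅) ∧ List.Pairwise Disjoint L ∧ L.foldr (· ∪ ·) ∅ = S

def StepIncreasing (L : List (Finset ℕ)) : Prop :=
  ∀ j, j + 1 < L.length → fmin (L.getD j ∅) < fmax (L.getD (j+1) ∅)

def StepDecreasing (L : List (Finset ℕ)) : Prop :=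
  ∀ j, j + 1 < L.length → fmin (L.getD (j+1) ∅) < fmax (L.getD j ∅)

/-- maximal strictly decreasing consecutive subwords, in order of occurrence. -/
def decRuns : List ℕ → List (List ℕ)
  | [] => []
  | a :: l =>
    match decRuns l with
    | [] => [[a]]
    | r :: rs => if r.headD 0 < a then (a :: r) :: rs else [a] :: r :: rs

/-- maximal strictly increasing consecutive subwords, in order of occurrence. -/
def incRuns : List ℕ → List (List ℕ)
  | [] => []
  | a :: l =>
    match incRuns l with
    | [] => [[a]]
    | r :: rs => if a < r.headD 0 then (a :: r) :: rs else [a] :: r :: rs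

/-- The word `σ(1) σ(2) ⋯ σ(n)` of a permutation, with values in `{1,…,n}`. -/
def permWord (n : ℕ) (σ : Equiv.Perm (Fin n)) : List ℕ :=
  List.ofFn (fun k => ((σ k : ℕ) + 1))

def decBlocks (w : List ℕ) : List (Finset ℕ) := (decRuns w).map List.toFinset
def incBlocks (w : List ℕ) : List (Finset ℕ) := (incRuns w).map List.toFinset

end SU


open scoped Classical

namespace SU

def inversions (w : List ℕ) : ℕ :=
  ((Finset.range w.length ×ˢ Finset.range w.length).filter
    (fun ab => ab.1 < ab.2 ∧ w.getD ab.2 0 < w.getD ab.1 0)).card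

/-- Sign of the permutation taking the increasing word to the concatenation of the
blocks of `L`, each listed in increasing order. -/
def psgn (L : List (Finset ℕ)) : ℤ :=
  (-1) ^ inversions ((L.map (fun s => s.sort (· ≤ ·))).flatten)

def shuffSgn (M N : Finset ℕ) : ℤ := psgn [M, N]

/-- degree of an ordered partition: `Σ (#block − 1)`. -/
def degp (L : List (Finset ℕ)) : ℕ := (L.map (fun s => s.card - 1)).sum

def eps1 (L : List (Finset ℕ)) : ℕ :=
  ∑ k ∈ Finset.range L.length, (L.length - 1 - k) * (L.getD k ∅).card

def sgn1 (L : List (Finset ℕ)) : ℤ := (-1) ^ eps1 L * psgn L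
def sgn2 (L : List (Finset ℕ)) : ℤ :=
  (-1) ^ (eps1 L + Nat.choose (L.length - 1) 2) * psgn L
def rsgn (L : List (Finset ℕ)) : ℤ :=
  (-1) ^ (∑ k ∈ Finset.range L.length, (L.getD k ∅).card * ((L.getD k ∅).card - 1) / 2)

/-- Entry of a matrix, with `0` outside the index range; `i` counts rows from the top,
`j` counts columns from the left, both 0-based. -/
def entry {q p : ℕ} (M : Matrix (Fin q) (Fin p) ℕ) (i j : ℕ) : ℕ :=
  if h : i < q ∧ j < p then M ⟨i, h.1⟩ ⟨j, h.2⟩ else 0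

def colBlock {q p : ℕ} (M : Matrix (Fin q) (Fin p) ℕ) (j : ℕ) : Finset ℕ :=
  ((Finset.range q).image (fun i => entry M i j)).erase 0

def rowBlock {q p : ℕ} (M : Matrix (Fin q) (Fin p) ℕ) (i : ℕ) : Finset ℕ :=
  ((Finset.range p).image (fun j => entry M i j)).erase 0

/-- column face `c(O) = U_1|⋯|U_p`. -/
def colFace {q p : ℕ} (M : Matrix (Fin q) (Fin p) ℕ) : List (Finset ℕ) :=
  (List.range p).map (colBlock M)

/-- row face `r(O) = V_q|⋯|V_1` (rows listed from bottom to top). -/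
def rowFace {q p : ℕ} (M : Matrix (Fin q) (Fin p) ℕ) : List (Finset ℕ) :=
  ((List.range q).map (rowBlock M)).reverse

/-- set of nonzero entries of a matrix. -/
def entrySet {q p : ℕ} (M : Matrix (Fin q) (Fin p) ℕ) : Finset ℕ :=
  (((Finset.range q) ×ˢ (Finset.range p)).image (fun ij => entry M ij.1 ij.2)).erase 0

def IsOrderedMatrix {q p : ℕ} (M : Matrix (Fin q) (Fin p) ℕ) : Prop :=
  0 < q ∧ 0 < p ∧
  entrySet M = Finset.Icc 1 (p + q - 1) ∧
  (∀ i < q, ∃ j < p, entry M i j ≠ 0) ∧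
  (∀ j < p, ∃ i < q, entry M i j ≠ 0) ∧
  (∀ i₁ j₁ i₂ j₂, entry M i₁ j₁ ≠ 0 → entry M i₂ j₂ ≠ 0 →
      entry M i₁ j₁ = entry M i₂ j₂ → i₁ = i₂ ∧ j₁ = j₂) ∧
  (∀ i j₁ j₂, j₁ < j₂ → entry M i j₁ ≠ 0 → entry M i j₂ ≠ 0 → entry M i j₁ < entry M i j₂) ∧
  (∀ j i₁ i₂, i₁ < i₂ → entry M i₁ j ≠ 0 → entry M i₂ j ≠ 0 → entry M i₁ j < entry M i₂ j)

def IsStepMatrix {q p : ℕ} (M : Matrix (Fin q) (Fin p) ℕ) : Prop :=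
  IsOrderedMatrix M ∧
  (∀ i j₁ j₂ j₃, j₁ ≤ j₂ → j₂ ≤ j₃ → entry M i j₁ ≠ 0 → entry M i j₃ ≠ 0 → entry M i j₂ ≠ 0) ∧
  (∀ j i₁ i₂ i₃, i₁ ≤ i₂ → i₂ ≤ i₃ → entry M i₁ j ≠ 0 → entry M i₃ j ≠ 0 → entry M i₂ j ≠ 0) ∧
  (∃! i, entry M i i ≠ 0) ∧
  (∀ i₁ i₂, entry M (i₁+1) i₁ ≠ 0 → entry M (i₂+1) i₂ ≠ 0 → i₁ = i₂) ∧
  (∀ i₁ i₂, entry M i₁ (i₁+1) ≠ 0 → entry M i₂ (i₂+1) ≠ 0 → i₁ = i₂)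

def DCond {q p : ℕ} (M : Matrix (Fin q) (Fin p) ℕ) (i j : ℕ) : Prop :=
  i + 1 < q ∧ j < p ∧ entry M (i+1) j = 0 ∧ entry M i j ≠ 0 ∧
  (∃ k < p, k ≠ j ∧ entry M i k ≠ 0) ∧
  (∀ ℓ < j, entry M (i+1) ℓ < entry M i j) ∧
  (∀ ℓ, j < ℓ → ℓ < p → entry M (i+1) ℓ ≠ 0 → entry M i j < entry M (i+1) ℓ)

/-- the down-shift operator `D_{i,j}` (0-based indices). -/
noncomputable def Dop {q p : ℕ} (M : Matrix (Fin q) (Fin p) ℕ) (i j : ℕ) :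
    Matrix (Fin q) (Fin p) ℕ :=
  if DCond M i j then
    Matrix.of fun a b =>
      if (a : ℕ) = i ∧ (b : ℕ) = j then 0
      else if (a : ℕ) = i + 1 ∧ (b : ℕ) = j then entry M i j
      else M a b
  else M

def RCond {q p : ℕ} (M : Matrix (Fin q) (Fin p) ℕ) (i j : ℕ) : Prop :=
  j + 1 < p ∧ i < q ∧ entry M i (j+1) = 0 ∧ entry M i j ≠ 0 ∧
  (∃ k < q, k ≠ i ∧ entry M k j ≠ 0) ∧
  (∀ ℓ < i, entry M ℓ (j+1) < entry M i j) ∧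
  (∀ ℓ, i < ℓ → ℓ < q → entry M ℓ (j+1) ≠ 0 → entry M i j < entry M ℓ (j+1))

/-- the right-shift operator `R_{i,j}` (0-based indices). -/
noncomputable def Rop {q p : ℕ} (M : Matrix (Fin q) (Fin p) ℕ) (i j : ℕ) :
    Matrix (Fin q) (Fin p) ℕ :=
  if RCond M i j then
    Matrix.of fun a b =>
      if (a : ℕ) = i ∧ (b : ℕ) = j then 0
      else if (a : ℕ) = i ∧ (b : ℕ) = j + 1 then entry M i j
      else M a b
  else M

inductive Shift
  | D (i j : ℕ)
  | R (i j : ℕ)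

noncomputable def applyShift {q p : ℕ} (g : Shift) (M : Matrix (Fin q) (Fin p) ℕ) :
    Matrix (Fin q) (Fin p) ℕ :=
  match g with
  | .D i j => Dop M i j
  | .R i j => Rop M i j

/-- `F` is obtained from `E` by a sequence of shift operators in which the down-shifts
occur with nondecreasing row indices and the right-shifts with nondecreasing column
indices (the list records the operators in order of application). -/
def DerivedFrom {q p : ℕ} (E F : Matrix (Fin q) (Fin p) ℕ) : Prop :=
  ∃ L : List Shift,
    (∀ i₁ j₁ i₂ j₂, List.Sublist [Shift.D i₁ j₁, Shift.D i₂ j₂] L → i₁ ≤ i₂) ∧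
    (∀ i₁ j₁ i₂ j₂, List.Sublist [Shift.R i₁ j₁, Shift.R i₂ j₂] L → j₁ ≤ j₂) ∧
    F = L.foldl (fun M g => applyShift g M) E

def IsConfigMatrix {q p : ℕ} (F : Matrix (Fin q) (Fin p) ℕ) : Prop :=
  IsOrderedMatrix F ∧ ∃ E, IsStepMatrix E ∧ DerivedFrom E F

/-- configuration sign of `F` derived from the step matrix `E`. -/
def csgnFrom {q p : ℕ} (E F : Matrix (Fin q) (Fin p) ℕ) : ℤ :=
  (-1) ^ Nat.choose q 2 * rsgn (colFace E) * sgn1 (rowFace F) * sgn2 (colFace E) *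
    sgn2 (colFace F)

noncomputable def csgn {q p : ℕ} (F : Matrix (Fin q) (Fin p) ℕ) : ℤ :=
  if h : ∃ E, IsStepMatrix E ∧ DerivedFrom E F then csgnFrom h.choose F else 1

end SU
section CoreC
open scoped Classical

namespace SU

/-- the row (0-based) of column `j` containing the value `v`. -/
noncomputable def rowOf {q p : ℕ} (M : Matrix (Fin q) (Fin p) ℕ) (j v : ℕ) : ℕ :=
  if h : ∃ i, i < q ∧ entry M i j = v then h.choose else q

/-- the column (0-based) of row `i` containing the value `v`. -/
noncomputable def colOf {q p : ℕ} (M : Matrix (Fin q) (Fin p) ℕ) (i v : ℕ) : ℕ :=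
  if h : ∃ j, j < p ∧ entry M i j = v then h.choose else p

/-- `R_{M_j}`: right-shifts moving each entry of `S` from column `j` to column `j+1`
(0-based), applied in increasing order of the entries. -/
noncomputable def applyRset {q p : ℕ} (M : Matrix (Fin q) (Fin p) ℕ) (j : ℕ) (S : Finset ℕ) :
    Matrix (Fin q) (Fin p) ℕ :=
  (S.sort (· ≤ ·)).foldl (fun acc v => Rop acc (rowOf acc j v) j) M

/-- `D_{N_i}`: down-shifts moving each entry of `S` from row `i` to row `i+1`
(0-based), applied in increasing order of the entries. -/
noncomputable def applyDset {q p : ℕ} (M : Matrix (Fin q) (Fin p) ℕ) (i : ℕ) (S : Finset ℕ) :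
    Matrix (Fin q) (Fin p) ℕ :=
  (S.sort (· ≤ ·)).foldl (fun acc v => Dop acc i (colOf acc i v)) M

/-- `D_{N_{q−1}} ⋯ D_{N_1} R_{M_{p−1}} ⋯ R_{M_1} E`, where `Mf j` is the set `M_j`
(`1 ≤ j ≤ p−1`) and `Nf i` is the set `N_i` (`1 ≤ i ≤ q−1`). -/
noncomputable def structComposite {q p : ℕ} (E : Matrix (Fin q) (Fin p) ℕ)
    (Mf Nf : ℕ → Finset ℕ) : Matrix (Fin q) (Fin p) ℕ :=
  (List.range (q-1)).foldl (fun acc i => applyDset acc i (Nf (i+1)))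
    ((List.range (p-1)).foldl (fun acc j => applyRset acc j (Mf (j+1))) E)

variable (K : Type) [CommRing K]

/-- boundary of a basis element of `C_*(P)`. -/
noncomputable def bnd (u : List (Finset ℕ)) : (List (Finset ℕ)) →₀ K :=
  ∑ k ∈ Finset.range u.length,
    ∑ M ∈ (u.getD k ∅).powerset,
      if M ≠ ∅ ∧ M ≠ u.getD k ∅ then
        ((((-1 : ℤ) ^ (degp (u.take k) + M.card)) * shuffSgn M (u.getD k ∅ \ M) : ℤ) : K) •
          Finsupp.single (u.take k ++ M :: (u.getD k ∅ \ M) :: u.drop (k+1)) (1 : K)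
      else 0

/-- `Δ_P` on the top cell `{1,…,m}`: the sum of `csgn F · c(F) ⊗ r(F)` over all
configuration matrices `F` with nonzero entry set `{1,…,m}` (with `Δ_P({1}) = {1}⊗{1}`). -/
noncomputable def deltaTop (m : ℕ) : (List (Finset ℕ) × List (Finset ℕ)) →₀ K :=
  if m = 1 then Finsupp.single ([{1}], [{1}]) 1
  else
    ∑ qq ∈ Finset.Icc 1 m, ∑ pp ∈ Finset.Icc 1 m,
      ∑ G : Fin qq → Fin pp → Fin (m+1),
        if IsConfigMatrix (Matrix.of fun i j => ((G i j : ℕ))) ∧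
            entrySet (Matrix.of fun i j => ((G i j : ℕ))) = Finset.Icc 1 m then
          ((csgn (Matrix.of fun i j => ((G i j : ℕ))) : ℤ) : K) •
            Finsupp.single (colFace (Matrix.of fun i j => ((G i j : ℕ))),
                            rowFace (Matrix.of fun i j => ((G i j : ℕ)))) 1
        else 0

/-- relabel a subset of `{1,…,#U}` along the order isomorphism `{1,…,#U} ≅ U`. -/
def relabel (U : Finset ℕ) (s : Finset ℕ) : Finset ℕ :=
  s.image (fun i => (U.sort (· ≤ ·)).getD (i - 1) 0)

/-- `Δ_P` on a basis element, via the standard comultiplicative extension with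
Koszul signs. -/
noncomputable def deltaFun : List (Finset ℕ) → ((List (Finset ℕ) × List (Finset ℕ)) →₀ K)
  | [] => Finsupp.single ([], []) 1
  | U :: L =>
      (deltaTop K U.card).sum fun ab c₁ =>
        (deltaFun L).sum fun ab' c₂ =>
          (c₁ * c₂ * (((-1 : ℤ) ^ (degp ab.2 * degp ab'.1) : ℤ) : K)) •
            Finsupp.single (ab.1.map (relabel U) ++ ab'.1, ab.2.map (relabel U) ++ ab'.2) 1

/-- linear extension of `Δ_P`. -/
noncomputable def deltaChain (f : (List (Finset ℕ)) →₀ K) :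
    (List (Finset ℕ) × List (Finset ℕ)) →₀ K :=
  f.sum fun u c => c • deltaFun K u

/-- `∂⊗1 + 1⊗∂` on the (concrete model of the) tensor square. -/
noncomputable def bndTensor (t : (List (Finset ℕ) × List (Finset ℕ)) →₀ K) :
    (List (Finset ℕ) × List (Finset ℕ)) →₀ K :=
  t.sum fun ab c =>
    c • ((bnd K ab.1).sum (fun a' c' => c' • Finsupp.single (a', ab.2) (1 : K)) +
         (((-1 : ℤ) ^ degp ab.1 : ℤ) : K) •
           (bnd K ab.2).sum (fun b' c' => c' • Finsupp.single (ab.1, b') (1 : K)))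

end SU
end CoreC
section Cube
open scoped Classical

namespace SU

/-- `s` is a set of consecutive integers. -/
def IsInterval (s : Finset ℕ) : Prop :=
  ∀ a ∈ s, ∀ b ∈ s, ∀ x, a ≤ x → x ≤ b → x ∈ s

/-- index of the block of `u` containing `x`. -/
def blockIdx (u : List (Finset ℕ)) (x : ℕ) : ℕ :=
  u.findIdx (fun s => decide (x ∈ s))

/-- The cube cell associated to a partition whose blocks are intervals.  Coordinates:
`0 = [0]`, `1 = [1]`, `2 = [I]`; coordinate `i` (0-based, comparing `i+1` and `i+2`)
is `[I]` if `i+1` and `i+2` lie in the same block, `[0]` if the block of `i+1` precedes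
the block of `i+2`, and `[1]` otherwise. -/
def rhoCode (n : ℕ) (u : List (Finset ℕ)) : Fin n → Fin 3 := fun i =>
  if blockIdx u ((i : ℕ) + 1) = blockIdx u ((i : ℕ) + 2) then 2
  else if blockIdx u ((i : ℕ) + 1) < blockIdx u ((i : ℕ) + 2) then 0 else 1

/-- `ρ_*` on a basis element: the corresponding cube cell if all blocks are intervals,
and `0` otherwise. -/
noncomputable def rhoBasis (n : ℕ) (u : List (Finset ℕ)) : (Fin n → Fin 3) →₀ ZMod 2 :=
  if ∀ s ∈ u, IsInterval s then Finsupp.single (rhoCode n u) 1 else 0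

noncomputable def rhoMap (n : ℕ) (f : (List (Finset ℕ)) →₀ ZMod 2) :
    (Fin n → Fin 3) →₀ ZMod 2 :=
  f.sum fun u c => c • rhoBasis n u

/-- mod 2 cubical boundary: `∂[I] = [0] + [1]`, extended multiplicatively. -/
noncomputable def cubeBnd (n : ℕ) (c : Fin n → Fin 3) : (Fin n → Fin 3) →₀ ZMod 2 :=
  ∑ i : Fin n,
    if c i = 2 then
      Finsupp.single (Function.update c i 0) (1 : ZMod 2) +
        Finsupp.single (Function.update c i 1) 1
    else 0

noncomputable def cubeBndMap (n : ℕ) (f : (Fin n → Fin 3) →₀ ZMod 2) :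
    (Fin n → Fin 3) →₀ ZMod 2 :=
  f.sum fun c k => k • cubeBnd n c

/-- Serre diagonal of the cube:  `Δ[I] = [0]⊗[I] + [I]⊗[1]`, extended
multiplicatively (mod 2). -/
noncomputable def cubeDiag (n : ℕ) (c : Fin n → Fin 3) :
    ((Fin n → Fin 3) × (Fin n → Fin 3)) →₀ ZMod 2 :=
  ∑ S ∈ (Finset.univ.filter (fun i => c i = 2)).powerset,
    Finsupp.single
      ((fun i => if c i = 2 then (if i ∈ S then 2 else 0) else c i),
       (fun i => if c i = 2 then (if i ∈ S then 1 else 2) else c i)) 1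

noncomputable def cubeDiagMap (n : ℕ) (f : (Fin n → Fin 3) →₀ ZMod 2) :
    ((Fin n → Fin 3) × (Fin n → Fin 3)) →₀ ZMod 2 :=
  f.sum fun c k => k • cubeDiag n c

/-- `ρ_* ⊗ ρ_*` on the concrete model of the tensor square. -/
noncomputable def rhoTensor (n : ℕ)
    (t : (List (Finset ℕ) × List (Finset ℕ)) →₀ ZMod 2) :
    ((Fin n → Fin 3) × (Fin n → Fin 3)) →₀ ZMod 2 :=
  t.sum fun ab k =>
    k • ((rhoBasis n ab.1).sum fun x kx =>
          (rhoBasis n ab.2).sum fun y ky =>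
            (kx * ky) • Finsupp.single (x, y) (1 : ZMod 2))

/-!
Both identities are proved for arbitrary functions of the resulting cube cells, by induction on the
blocks of `u`, after replacing the cube coordinates by functions on all of `ℕ`: the coordinate `x`
of `a ++ b` only depends on `a` if `x` or `x + 1` lies in a block of `a`, and only on `b` otherwise.
This reduces them to a partition with a single block `U`.

For the diagonal, a configuration matrix with entries `1, …, n + 1` places the entry `k + 1` in some
row `r k` and column `c k`. If all blocks of both faces are intervals, then `r` and `c` have convex
fibers, so that by the shift relations each step from `k + 1` to `k + 2` changes exactly one of
them, and both increase. These matrices are therefore indexed by the set `T ⊆ {0, …, n - 1}` of the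
steps which change the row, and `T` is also the set of coordinates `[I]` whose contribution to the
Serre diagonal is `[I] ⊗ [1]`. Each such matrix is indeed obtained from a step matrix by shifts.

For the boundary, the terms `M | U ∖ M` with both parts intervals come from cutting `U` between `x`
and `x + 1`, in one order or the other, unless `U` is not an interval; in that case no coordinate
distinguishes `M | U ∖ M` from `U ∖ M | M`, and the two terms cancel mod 2.
-/

section Placement

open scoped Matrix

variable {q p m : ℕ} {r c r' c' : ℕ → ℕ} {M : Matrix (Fin q) (Fin p) ℕ}

/-- `M` is the matrix whose nonzero entries are `1, …, m`, the entry `k + 1` sitting in row `r k`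
and column `c k`. Entries are shifted by one so that positions are functions of `k < m`. -/
def IsPlacement (m : ℕ) (r c : ℕ → ℕ) (M : Matrix (Fin q) (Fin p) ℕ) : Prop :=
  ∀ i j k, entry M i j = k + 1 ↔ k < m ∧ r k = i ∧ c k = j

lemma entry_of_lt {i j : ℕ} (hi : i < q) (hj : j < p) : entry M i j = M ⟨i, hi⟩ ⟨j, hj⟩ :=
  dif_pos ⟨hi, hj⟩

lemma lt_of_entry_ne_zero {i j : ℕ} (h : entry M i j ≠ 0) : i < q ∧ j < p := by
  by_contra hlt
  exact h (dif_neg hlt)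

lemma entry_transpose (i j : ℕ) : entry Mᵀ i j = entry M j i := by
  simp only [entry, and_comm, Matrix.transpose_apply]

lemma IsPlacement.transpose (h : IsPlacement m r c M) : IsPlacement m c r Mᵀ := fun i j k ↦ by
  rw [entry_transpose, h j i k, and_comm (a := r k = j)]

lemma IsPlacement.entry_eq (h : IsPlacement m r c M) {k : ℕ} (hk : k < m) :
    entry M (r k) (c k) = k + 1 :=
  (h _ _ _).2 ⟨hk, rfl, rfl⟩

lemma IsPlacement.row_lt (h : IsPlacement m r c M) {k : ℕ} (hk : k < m) : r k < q :=
  (lt_of_entry_ne_zero (by rw [h.entry_eq hk]; exact k.succ_ne_zero)).1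

lemma IsPlacement.col_lt (h : IsPlacement m r c M) {k : ℕ} (hk : k < m) : c k < p :=
  h.transpose.row_lt hk

lemma IsPlacement.entry_ne_zero_iff (h : IsPlacement m r c M) {i j : ℕ} :
    entry M i j ≠ 0 ↔ ∃ k < m, r k = i ∧ c k = j := by
  refine ⟨fun hne ↦ ?_, ?_⟩
  · obtain ⟨k, hk⟩ := Nat.exists_eq_succ_of_ne_zero hne
    exact ⟨k, (h i j k).1 hk⟩
  · rintro ⟨k, hk⟩
    rw [(h i j k).2 hk]
    exact k.succ_ne_zero

lemma IsPlacement.eq_of_row_eq_of_col_eq (h : IsPlacement m r c M) {k l : ℕ} (hk : k < m)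
    (hl : l < m) (hr : r k = r l) (hc : c k = c l) : k = l := by
  have := h.entry_eq hk
  rw [hr, hc, h.entry_eq hl] at this
  omega

lemma IsPlacement.congr (h : IsPlacement m r c M) (hr : ∀ k < m, r k = r' k)
    (hc : ∀ k < m, c k = c' k) : IsPlacement m r' c' M := fun i j k ↦ by
  rw [h i j k]
  exact and_congr_right fun hk ↦ by rw [hr k hk, hc k hk]

lemma IsPlacement.entry_eq_entry {q' p' : ℕ} {M' : Matrix (Fin q') (Fin p') ℕ}
    (h : IsPlacement m r c M) (h' : IsPlacement m r c M') (i j : ℕ) :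
    entry M i j = entry M' i j := by
  have key : ∀ k, entry M i j = k + 1 ↔ entry M' i j = k + 1 := fun k ↦ by rw [h i j k, h' i j k]
  have := key (entry M i j - 1)
  have := key (entry M' i j - 1)
  omega

lemma exists_isPlacement (hr : ∀ k < m, r k < q) (hc : ∀ k < m, c k < p)
    (hinj : ∀ k < m, ∀ l < m, r k = r l → c k = c l → k = l) :
    ∃ M : Matrix (Fin q) (Fin p) ℕ, IsPlacement m r c M := by
  refine ⟨Matrix.of fun a b ↦
    ∑ k ∈ (Finset.range m).filter (fun k ↦ r k = a ∧ c k = b), (k + 1), fun i j k ↦ ?_⟩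
  have hsingle : ∀ l < m, (Finset.range m).filter (fun k ↦ r k = r l ∧ c k = c l) = {l} := by
    intro l hl
    ext k
    simp only [Finset.mem_filter, Finset.mem_range, Finset.mem_singleton]
    refine ⟨fun ⟨hk, h₁, h₂⟩ ↦ hinj k hk l hl h₁ h₂, ?_⟩
    rintro rfl
    exact ⟨hl, rfl, rfl⟩
  constructor
  · intro hkey
    obtain ⟨hi, hj⟩ := lt_of_entry_ne_zero (by rw [hkey]; exact k.succ_ne_zero)
    rw [entry_of_lt hi hj, Matrix.of_apply] at hkey
    obtain ⟨l, hl, -⟩ := Finset.exists_ne_zero_of_sum_ne_zero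
      (by rw [hkey]; exact k.succ_ne_zero)
    simp only [Finset.mem_filter, Finset.mem_range] at hl
    obtain ⟨hlm, rfl, rfl⟩ := hl
    rw [hsingle l hlm, Finset.sum_singleton] at hkey
    obtain rfl : l = k := by omega
    exact ⟨hlm, rfl, rfl⟩
  · rintro ⟨hk, rfl, rfl⟩
    rw [entry_of_lt (hr k hk) (hc k hk), Matrix.of_apply, hsingle k hk, Finset.sum_singleton]

lemma mem_rowBlock {i v : ℕ} : v ∈ rowBlock M i ↔ v ≠ 0 ∧ ∃ j < p, entry M i j = v := by
  simp [rowBlock]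

lemma mem_colBlock {j v : ℕ} : v ∈ colBlock M j ↔ v ≠ 0 ∧ ∃ i < q, entry M i j = v := by
  simp [colBlock]

lemma mem_entrySet {v : ℕ} : v ∈ entrySet M ↔ v ≠ 0 ∧ ∃ i j, entry M i j = v := by
  simp only [entrySet, Finset.mem_erase, Finset.mem_image, Finset.mem_product, Finset.mem_range,
    Prod.exists]
  refine and_congr_right fun hv ↦ exists₂_congr fun i j ↦ and_iff_right_of_imp ?_
  rintro rfl
  exact lt_of_entry_ne_zero hv

lemma IsPlacement.rowBlock_eq (h : IsPlacement m r c M) (i : ℕ) :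
    rowBlock M i = ((Finset.range m).filter (r · = i)).image (· + 1) := by
  ext v
  simp only [mem_rowBlock, Finset.mem_image, Finset.mem_filter, Finset.mem_range]
  constructor
  · rintro ⟨hv, j, -, rfl⟩
    obtain ⟨k, hk⟩ := Nat.exists_eq_succ_of_ne_zero hv
    obtain ⟨hkm, hr, -⟩ := (h i j k).1 hk
    exact ⟨k, ⟨hkm, hr⟩, hk.symm⟩
  · rintro ⟨k, ⟨hk, rfl⟩, rfl⟩
    exact ⟨k.succ_ne_zero, c k, h.col_lt hk, h.entry_eq hk⟩

lemma rowBlock_transpose (j : ℕ) : rowBlock Mᵀ j = colBlock M j := by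
  ext v
  simp only [mem_rowBlock, mem_colBlock, entry_transpose]

lemma IsPlacement.colBlock_eq (h : IsPlacement m r c M) (j : ℕ) :
    colBlock M j = ((Finset.range m).filter (c · = j)).image (· + 1) := by
  rw [← rowBlock_transpose, h.transpose.rowBlock_eq]

lemma IsPlacement.entrySet_eq (h : IsPlacement m r c M) : entrySet M = Finset.Icc 1 m := by
  ext v
  rw [mem_entrySet, Finset.mem_Icc]
  constructor
  · rintro ⟨hv, i, j, rfl⟩
    obtain ⟨k, hk⟩ := Nat.exists_eq_succ_of_ne_zero hv
    have := ((h i j k).1 hk).1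
    omega
  · rintro ⟨hv, hvm⟩
    have hlt : v - 1 < m := by omega
    exact ⟨by omega, _, _, (h.entry_eq hlt).trans (by omega)⟩

lemma IsPlacement.isOrderedMatrix (h : IsPlacement m r c M) (hq : 0 < q) (hp : 0 < p)
    (hm : m + 1 = p + q) (hrow : ∀ i < q, ∃ k < m, r k = i) (hcol : ∀ j < p, ∃ k < m, c k = j)
    (hr : ∀ k l, r k = r l → c k < c l → k < l) (hc : ∀ k l, c k = c l → r k < r l → k < l) :
    IsOrderedMatrix M := by
  refine ⟨hq, hp, ?_, fun i hi ↦ ?_, fun j hj ↦ ?_, fun i₁ j₁ i₂ j₂ h₁ h₂ heq ↦ ?_,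
    fun i j₁ j₂ hj h₁ h₂ ↦ ?_, fun j i₁ i₂ hi h₁ h₂ ↦ ?_⟩
  · rw [h.entrySet_eq]
    congr 1
    omega
  · obtain ⟨k, hk, rfl⟩ := hrow i hi
    exact ⟨c k, h.col_lt hk, h.entry_ne_zero_iff.2 ⟨k, hk, rfl, rfl⟩⟩
  · obtain ⟨k, hk, rfl⟩ := hcol j hj
    exact ⟨r k, h.row_lt hk, h.entry_ne_zero_iff.2 ⟨k, hk, rfl, rfl⟩⟩
  all_goals
    obtain ⟨k, hk, rfl, rfl⟩ := h.entry_ne_zero_iff.1 h₁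
    obtain ⟨l, hl, h₃, h₄⟩ := h.entry_ne_zero_iff.1 h₂
  · subst h₃ h₄
    rw [h.entry_eq hk, h.entry_eq hl, Nat.succ_inj] at heq
    exact heq ▸ ⟨rfl, rfl⟩
  · subst h₄
    rw [h.entry_eq hk, ← h₃, h.entry_eq hl]
    exact Nat.succ_lt_succ (hr k l h₃.symm hj)
  · subst h₃
    rw [h.entry_eq hk, ← h₄, h.entry_eq hl]
    exact Nat.succ_lt_succ (hc k l h₄.symm hi)

lemma IsOrderedMatrix.exists_isPlacement (h : IsOrderedMatrix M)
    (hm : entrySet M = Finset.Icc 1 m) : ∃ r c, IsPlacement m r c M := by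
  obtain ⟨-, -, -, -, -, hinj, -, -⟩ := h
  have hex : ∀ k, ∃ ij : ℕ × ℕ, k < m → entry M ij.1 ij.2 = k + 1 := by
    intro k
    by_cases hk : k < m
    · have hmem : k + 1 ∈ entrySet M := hm ▸ Finset.mem_Icc.2 (by omega)
      obtain ⟨-, i, j, hij⟩ := mem_entrySet.1 hmem
      exact ⟨(i, j), fun _ ↦ hij⟩
    · exact ⟨(0, 0), fun hk' ↦ absurd hk' hk⟩
  choose pos hpos using hex
  refine ⟨fun k ↦ (pos k).1, fun k ↦ (pos k).2, fun i j k ↦ ⟨fun hkey ↦ ?_, ?_⟩⟩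
  · have hmem : k + 1 ∈ entrySet M := mem_entrySet.2 ⟨k.succ_ne_zero, i, j, hkey⟩
    have hk : k < m := by
      rw [hm, Finset.mem_Icc] at hmem
      omega
    have hk' := hpos k hk
    exact ⟨hk, hinj _ _ _ _ (by simp [hk']) (by simp [hkey])
      (hk'.trans hkey.symm)⟩
  · rintro ⟨hk, rfl, rfl⟩
    exact hpos k hk

end Placement

section Staircase

open scoped Matrix

variable {q p m : ℕ} {r c γ : ℕ → ℕ} {D : ℕ → Prop} [DecidablePred D]

lemma entry_Dop {M : Matrix (Fin q) (Fin p) ℕ} {i j : ℕ} (h : DCond M i j) (a b : ℕ) :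
    entry (Dop M i j) a b =
      if a = i ∧ b = j then 0 else if a = i + 1 ∧ b = j then entry M i j else entry M a b := by
  by_cases hab : a < q ∧ b < p
  · rw [entry_of_lt hab.1 hab.2, entry_of_lt hab.1 hab.2, Dop, if_pos h, Matrix.of_apply]
  · have hi := h.1
    have hj := h.2.1
    have hzero (N : Matrix (Fin q) (Fin p) ℕ) : entry N a b = 0 := dif_neg hab
    rw [hzero, hzero, if_neg (c := a = i + 1 ∧ b = j) (by omega), ite_self]

lemma Rop_eq_transpose_Dop (M : Matrix (Fin q) (Fin p) ℕ) (i j : ℕ) :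
    Rop M i j = (Dop Mᵀ j i)ᵀ := by
  have hcond : RCond M i j ↔ DCond Mᵀ j i := by
    simp only [RCond, DCond, entry_transpose]
  by_cases h : RCond M i j
  · ext a b
    simp [Rop, Dop, if_pos h, if_pos (hcond.1 h), entry_transpose, and_comm]
  · rw [Rop, Dop, if_neg h, if_neg (mt hcond.2 h), Matrix.transpose_transpose]

lemma IsPlacement.dCond {M : Matrix (Fin q) (Fin p) ℕ} (h : IsPlacement m r c M) {k : ℕ}
    (hk : k < m) (hq : r k + 1 < q) (hne : ∃ l < m, l ≠ k ∧ r l = r k)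
    (hsep : ∀ l < m, r l = r k + 1 → c l < c k ∧ l < k ∨ c k < c l ∧ k < l) :
    DCond M (r k) (c k) := by
  obtain ⟨l, hl, hlk, hrl⟩ := hne
  rw [DCond, h.entry_eq hk]
  refine ⟨hq, h.col_lt hk, ?_, k.succ_ne_zero, ⟨c l, h.col_lt hl, ?_, ?_⟩, fun j hj ↦ ?_,
    fun j hj _ hne ↦ ?_⟩
  · by_contra hne
    obtain ⟨l', hl', hr', hc'⟩ := h.entry_ne_zero_iff.1 hne
    have := hsep l' hl' hr'
    omega
  · exact fun hcl ↦ hlk (h.eq_of_row_eq_of_col_eq hl hk hrl hcl)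
  · exact h.entry_ne_zero_iff.2 ⟨l, hl, hrl, rfl⟩
  · by_cases hne : entry M (r k + 1) j = 0
    · omega
    · obtain ⟨l', hl', hr', rfl⟩ := h.entry_ne_zero_iff.1 hne
      rw [← hr', h.entry_eq hl']
      have := hsep l' hl' hr'
      omega
  · obtain ⟨l', hl', hr', rfl⟩ := h.entry_ne_zero_iff.1 hne
    rw [← hr', h.entry_eq hl']
    have := hsep l' hl' hr'
    omega

lemma IsPlacement.dop {M : Matrix (Fin q) (Fin p) ℕ} (h : IsPlacement m r c M) {k : ℕ}
    (hk : k < m) (hcond : DCond M (r k) (c k)) :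
    IsPlacement m (Function.update r k (r k + 1)) c (Dop M (r k) (c k)) := by
  intro i j l
  have hzero := hcond.2.2.1
  rw [entry_Dop hcond, h.entry_eq hk]
  rcases eq_or_ne l k with rfl | hlk
  · rw [Function.update_self]
    split_ifs with h₁ h₂
    · exact iff_of_false not_false (by omega)
    · simp [h₂.1, h₂.2, hk]
    · rw [h i j l]
      omega
  · rw [Function.update_of_ne hlk]
    split_ifs with h₁ h₂
    · obtain ⟨rfl, rfl⟩ := h₁
      exact iff_of_false not_false
        fun ⟨hl, hr, hc⟩ ↦ hlk (h.eq_of_row_eq_of_col_eq hl hk hr hc)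
    · refine iff_of_false (by omega) fun hl ↦ ?_
      rw [h₂.1, h₂.2] at hl
      rw [(h _ _ l).2 hl] at hzero
      omega
    · exact h i j l

/-- `F` is obtained from `E` by down-shifts whose row indices are nondecreasing and at most `s`. -/
def DownDerived (s : ℕ) (E F : Matrix (Fin q) (Fin p) ℕ) : Prop :=
  ∃ L : List (ℕ × ℕ), L.Pairwise (·.1 ≤ ·.1) ∧ (∀ ij ∈ L, ij.1 ≤ s) ∧
    F = L.foldl (fun M ij ↦ Dop M ij.1 ij.2) E

lemma DownDerived.refl (s : ℕ) (E : Matrix (Fin q) (Fin p) ℕ) : DownDerived s E E :=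
  ⟨[], List.Pairwise.nil, by simp, rfl⟩

lemma DownDerived.mono {s t : ℕ} {E F : Matrix (Fin q) (Fin p) ℕ} (h : DownDerived s E F)
    (hst : s ≤ t) : DownDerived t E F := by
  obtain ⟨L, hL, hs, hF⟩ := h
  exact ⟨L, hL, fun ij hij ↦ (hs ij hij).trans hst, hF⟩

lemma DownDerived.dop {s : ℕ} {E F : Matrix (Fin q) (Fin p) ℕ} (h : DownDerived s E F) (j : ℕ) :
    DownDerived s E (Dop F s j) := by
  obtain ⟨L, hL, hs, rfl⟩ := h
  refine ⟨L ++ [(s, j)], ?_, ?_, by simp⟩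
  · simpa [List.pairwise_append, hL] using hs
  · simpa [or_imp, forall_and] using hs

lemma DownDerived.derivedFrom {s t : ℕ} {E F : Matrix (Fin q) (Fin p) ℕ}
    {G : Matrix (Fin p) (Fin q) ℕ} (hEF : DownDerived s E F) (hFG : DownDerived t Fᵀ G) :
    DerivedFrom E Gᵀ := by
  obtain ⟨L, hL, -, rfl⟩ := hEF
  obtain ⟨L', hL', -, rfl⟩ := hFG
  refine ⟨L.map (fun ij ↦ Shift.D ij.1 ij.2) ++ L'.map (fun ij ↦ Shift.R ij.2 ij.1), ?_, ?_, ?_⟩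
  · intro i₁ j₁ i₂ j₂ hsub
    have hpair : (L.map (fun ij ↦ Shift.D ij.1 ij.2) ++
        L'.map (fun ij ↦ Shift.R ij.2 ij.1)).Pairwise fun g g' ↦ ∀ i₁ j₁ i₂ j₂,
          g = Shift.D i₁ j₁ → g' = Shift.D i₂ j₂ → i₁ ≤ i₂ := by
      simp only [List.pairwise_append, List.pairwise_map, List.mem_map]
      exact ⟨hL.imp (by grind), hL'.imp (by grind), by grind⟩
    exact List.pairwise_iff_forall_sublist.1 hpair hsub _ _ _ _ rfl rfl
  · intro i₁ j₁ i₂ j₂ hsub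
    have hpair : (L.map (fun ij ↦ Shift.D ij.1 ij.2) ++
        L'.map (fun ij ↦ Shift.R ij.2 ij.1)).Pairwise fun g g' ↦ ∀ i₁ j₁ i₂ j₂,
          g = Shift.R i₁ j₁ → g' = Shift.R i₂ j₂ → j₁ ≤ j₂ := by
      simp only [List.pairwise_append, List.pairwise_map, List.mem_map]
      exact ⟨hL.imp (by grind), hL'.imp (by grind), by grind⟩
    exact List.pairwise_iff_forall_sublist.1 hpair hsub _ _ _ _ rfl rfl
  · rw [List.foldl_append, List.foldl_map, List.foldl_map]
    simp only [applyShift, Rop_eq_transpose_Dop]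
    exact (List.foldl_hom Matrix.transpose fun M ij ↦ by rw [Matrix.transpose_transpose]).symm

/-- In the staircase whose step from `k` to `k + 1` goes down exactly when `D k`, the entry `k`
is the first one of its row. -/
def StartsRow (D : ℕ → Prop) (k : ℕ) : Prop := k = 0 ∨ D (k - 1)

/-- Row of the entry `k` of the hook associated to a staircase: entries starting a row are pushed
to the first column, keeping their row, and all others are pushed to the first row. -/
noncomputable def hookRow (D : ℕ → Prop) [DecidablePred D] (k : ℕ) : ℕ :=
  if StartsRow D k then Nat.count D k else 0

lemma startsRow_or_startsRow_not (D : ℕ → Prop) (k : ℕ) :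
    StartsRow D k ∨ StartsRow (¬ D ·) k := by
  unfold StartsRow
  tauto

lemma StartsRow.eq_zero {D : ℕ → Prop} {k : ℕ} (h : StartsRow D k) (h' : StartsRow (¬ D ·) k) :
    k = 0 := by
  unfold StartsRow at h h'
  tauto

lemma StartsRow.count_lt {k l : ℕ} (h : StartsRow D l) (hkl : k < l) :
    Nat.count D k < Nat.count D l := by
  obtain rfl | hl := h
  · omega
  · obtain ⟨l, rfl⟩ := Nat.exists_eq_succ_of_ne_zero (Nat.ne_zero_of_lt hkl)
    exact (Nat.count_monotone D (by omega)).trans_lt (Nat.count_strict_mono hl l.lt_succ_self)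

lemma StartsRow.lt_of_count_le {k l : ℕ} (hk : StartsRow D k) (hl : ¬ StartsRow D l)
    (hkl : Nat.count D k ≤ Nat.count D l) : k < l := by
  refine lt_of_not_ge fun hlk ↦ ?_
  rcases hlk.eq_or_lt with rfl | hlk
  · exact hl hk
  · exact (hk.count_lt hlk).not_ge hkl

lemma exists_startsRow_count_eq {s v : ℕ} (hs : s ≤ Nat.count D v) :
    ∃ k ≤ v, StartsRow D k ∧ Nat.count D k = s := by
  induction v with
  | zero => exact ⟨0, le_rfl, Or.inl rfl, by simpa using hs.antisymm' (Nat.zero_le s)⟩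
  | succ v ih =>
    rcases le_or_gt s (Nat.count D v) with hsv | hsv
    · obtain ⟨k, hk, hk'⟩ := ih hsv
      exact ⟨k, by omega, hk'⟩
    · have hle : Nat.count D (v + 1) ≤ Nat.count D v + 1 := by
        rw [Nat.count_succ]
        split_ifs <;> omega
      refine ⟨v + 1, le_rfl, Or.inr ?_, by omega⟩
      exact Nat.count_lt_count_succ_iff.1 (hsv.trans_le hs)

lemma count_add_count_not (D : ℕ → Prop) [DecidablePred D] (k : ℕ) :
    Nat.count D k + Nat.count (¬ D ·) k = k := by
  induction k with
  | zero => simp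
  | succ k ih =>
    rw [Nat.count_succ, Nat.count_succ]
    split_ifs <;> omega

/-- Row of the entry `k` while the hook is being unfolded: the entries that do not start a row have
been moved from the first row down to row `s`, those from `w` on even to row `s + 1`, except that
no entry is moved below its row in the staircase. -/
noncomputable def slidingRow (D : ℕ → Prop) [DecidablePred D] (s w k : ℕ) : ℕ :=
  if StartsRow D k then Nat.count D k else min (Nat.count D k) (if w ≤ k then s + 1 else s)

lemma slidingRow_of_startsRow {s w k : ℕ} (hk : StartsRow D k) :
    slidingRow D s w k = Nat.count D k := if_pos hk

lemma slidingRow_of_not_startsRow {s w k : ℕ} (hk : ¬ StartsRow D k) :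
    slidingRow D s w k = min (Nat.count D k) (if w ≤ k then s + 1 else s) := if_neg hk

lemma update_slidingRow {s w : ℕ} (hw : ¬ StartsRow D w) (hs : s < Nat.count D w) :
    Function.update (slidingRow D s (w + 1)) w (s + 1) = slidingRow D s w := by
  funext k
  rcases eq_or_ne k w with rfl | hkw
  · rw [Function.update_self, slidingRow_of_not_startsRow hw, if_pos le_rfl]
    omega
  · simp only [Function.update_of_ne hkw, slidingRow, Nat.succ_le_iff, hkw.symm.le_iff_lt]

lemma slidingRow_succ_eq {s w : ℕ} (h : StartsRow D w ∨ Nat.count D w ≤ s) :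
    slidingRow D s (w + 1) = slidingRow D s w := by
  funext k
  rcases eq_or_ne k w with rfl | hkw
  · by_cases hk : StartsRow D k
    · rw [slidingRow_of_startsRow hk, slidingRow_of_startsRow hk]
    · have := h.resolve_left hk
      rw [slidingRow_of_not_startsRow hk, slidingRow_of_not_startsRow hk]
      split_ifs <;> omega
  · simp only [slidingRow, Nat.succ_le_iff, hkw.symm.le_iff_lt]

lemma IsPlacement.dCond_slidingRow {M : Matrix (Fin q) (Fin p) ℕ} {s w : ℕ}
    (h : IsPlacement m (slidingRow D s (w + 1)) γ M) (hq : ∀ k < m, Nat.count D k < q)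
    (hγ : ∀ k l, k < l → ¬ StartsRow D l → γ k < γ l) (hwm : w < m) (hw : ¬ StartsRow D w)
    (hs : s < Nat.count D w) : DCond M s (γ w) := by
  have hrow : slidingRow D s (w + 1) w = s := by
    rw [slidingRow_of_not_startsRow hw, if_neg (by omega), min_eq_right hs.le]
  have hqw := hq w hwm
  have hcond := h.dCond hwm (by omega) ?_ fun l _ hrl ↦ ?_
  · rwa [hrow] at hcond
  · obtain ⟨z, hz, hzrow, hzs⟩ := exists_startsRow_count_eq hs.le
    exact ⟨z, by omega, fun hzw ↦ hw (hzw ▸ hzrow), by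
      rw [slidingRow_of_startsRow hzrow, hrow, hzs]⟩
  · rw [hrow] at hrl
    by_cases hlrow : StartsRow D l
    · rw [slidingRow_of_startsRow hlrow] at hrl
      have hlw := hlrow.lt_of_count_le hw (by omega)
      exact Or.inl ⟨hγ l w hlw hw, hlw⟩
    · rw [slidingRow_of_not_startsRow hlrow] at hrl
      have hwl : w < l := by
        by_contra hlw
        rw [if_neg (by omega)] at hrl
        omega
      exact Or.inr ⟨hγ w l hwl hlrow, hwl⟩

lemma IsPlacement.exists_downDerived_slidingRow_zero {E M : Matrix (Fin q) (Fin p) ℕ} {s w : ℕ}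
    (h : IsPlacement m (slidingRow D s w) γ M) (hE : DownDerived s E M)
    (hq : ∀ k < m, Nat.count D k < q) (hγ : ∀ k l, k < l → ¬ StartsRow D l → γ k < γ l)
    (hw : w ≤ m) : ∃ F, IsPlacement m (slidingRow D s 0) γ F ∧ DownDerived s E F := by
  induction w generalizing M with
  | zero => exact ⟨M, h, hE⟩
  | succ w ih =>
    by_cases hmove : ¬ StartsRow D w ∧ s < Nat.count D w
    · obtain ⟨hwrow, hs⟩ := hmove
      have hcond := h.dCond_slidingRow hq hγ hw hwrow hs
      have hrow : slidingRow D s (w + 1) w = s := by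
        rw [slidingRow_of_not_startsRow hwrow, if_neg (by omega), min_eq_right hs.le]
      have hnext := h.dop hw (by rwa [hrow])
      rw [hrow, update_slidingRow hwrow hs] at hnext
      exact ih hnext (hE.dop _) (by omega)
    · rw [slidingRow_succ_eq (by rwa [not_and_or, not_not, not_lt] at hmove)] at h
      exact ih h hE (by omega)

lemma slidingRow_zero_eq (D : ℕ → Prop) [DecidablePred D] (s w : ℕ) :
    ∀ k < w, slidingRow D s 0 k = slidingRow D (s + 1) w k := fun k hk ↦ by
  simp only [slidingRow, Nat.zero_le, if_true, if_neg hk.not_ge]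

lemma IsPlacement.exists_downDerived_count {E : Matrix (Fin q) (Fin p) ℕ}
    (h : IsPlacement m (hookRow D) γ E) (hq : ∀ k < m, Nat.count D k < q)
    (hγ : ∀ k l, k < l → ¬ StartsRow D l → γ k < γ l) :
    ∃ F, IsPlacement m (Nat.count D) γ F ∧ DownDerived q E F := by
  have hstage : ∀ s, ∃ F, IsPlacement m (slidingRow D s m) γ F ∧ DownDerived s E F := by
    intro s
    induction s with
    | zero =>
      refine ⟨E, h.congr (fun k hk ↦ ?_) fun _ _ ↦ rfl, .refl 0 E⟩
      simp only [hookRow, slidingRow, if_neg hk.not_ge, min_zero]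
    | succ s ih =>
      obtain ⟨M, hM, hEM⟩ := ih
      obtain ⟨F, hF, hEF⟩ := hM.exists_downDerived_slidingRow_zero hEM hq hγ le_rfl
      exact ⟨F, hF.congr (slidingRow_zero_eq D s m) fun _ _ ↦ rfl, hEF.mono s.le_succ⟩
  obtain ⟨F, hF, hEF⟩ := hstage q
  refine ⟨F, hF.congr (fun k hk ↦ ?_) fun _ _ ↦ rfl, hEF⟩
  simp only [slidingRow, if_neg hk.not_ge, min_eq_left (hq k hk).le, ite_self]

lemma hookRow_le (D : ℕ → Prop) [DecidablePred D] (k : ℕ) : hookRow D k ≤ Nat.count D k := by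
  unfold hookRow
  split_ifs <;> omega

lemma hookRow_of_startsRow {k : ℕ} (hk : StartsRow D k) : hookRow D k = Nat.count D k := if_pos hk

lemma hookRow_of_startsRow_not {k : ℕ} (hk : StartsRow (¬ D ·) k) : hookRow D k = 0 := by
  unfold hookRow
  split_ifs with hD
  · rw [hD.eq_zero hk, Nat.count_zero]
  · rfl

lemma hookRow_not_of_startsRow {k : ℕ} (hk : StartsRow D k) : hookRow (¬ D ·) k = 0 :=
  hookRow_of_startsRow_not (by simpa only [StartsRow, not_not] using hk)

lemma hookRow_lt_hookRow {k l : ℕ} (hl : StartsRow D l) (hkl : k < l) :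
    hookRow D k < hookRow D l := by
  rw [hookRow_of_startsRow hl]
  exact (hookRow_le D k).trans_lt (hl.count_lt hkl)

lemma le_of_hookRow_le {k l : ℕ} (hr : hookRow D k ≤ hookRow D l)
    (hc : hookRow (¬ D ·) k ≤ hookRow (¬ D ·) l) : k ≤ l := by
  by_contra hkl
  rcases startsRow_or_startsRow_not D k with hD | hD
  · exact (hookRow_lt_hookRow hD (not_le.1 hkl)).not_ge hr
  · exact (hookRow_lt_hookRow hD (not_le.1 hkl)).not_ge hc

lemma IsPlacement.entry_hook_ne_zero_iff {n : ℕ}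
    {E : Matrix (Fin (Nat.count D n + 1)) (Fin (Nat.count (¬ D ·) n + 1)) ℕ}
    (hE : IsPlacement (n + 1) (hookRow D) (hookRow (¬ D ·)) E) (i j : ℕ) :
    entry E i j ≠ 0 ↔
      i = 0 ∧ j < Nat.count (¬ D ·) n + 1 ∨ j = 0 ∧ i < Nat.count D n + 1 := by
  rw [hE.entry_ne_zero_iff]
  constructor
  · rintro ⟨k, hk, rfl, rfl⟩
    rcases startsRow_or_startsRow_not D k with hD | hD
    · exact Or.inr ⟨hookRow_not_of_startsRow hD, hE.row_lt hk⟩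
    · exact Or.inl ⟨hookRow_of_startsRow_not hD, hE.col_lt hk⟩
  · rintro (⟨rfl, hj⟩ | ⟨rfl, hi⟩)
    · obtain ⟨k, hk, hD, rfl⟩ := exists_startsRow_count_eq (Nat.lt_succ_iff.1 hj)
      exact ⟨k, by omega, hookRow_of_startsRow_not hD, hookRow_of_startsRow hD⟩
    · obtain ⟨k, hk, hD, rfl⟩ := exists_startsRow_count_eq (Nat.lt_succ_iff.1 hi)
      exact ⟨k, by omega, hookRow_of_startsRow hD, hookRow_not_of_startsRow hD⟩

lemma exists_isStepMatrix_hookRow (D : ℕ → Prop) [DecidablePred D] (n : ℕ) :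
    ∃ E : Matrix (Fin (Nat.count D n + 1)) (Fin (Nat.count (¬ D ·) n + 1)) ℕ,
      IsPlacement (n + 1) (hookRow D) (hookRow (¬ D ·)) E ∧ IsStepMatrix E := by
  have hlt (D : ℕ → Prop) [DecidablePred D] : ∀ k < n + 1, hookRow D k < Nat.count D n + 1 :=
    fun k hk ↦ Nat.lt_succ_iff.2 <|
      (hookRow_le D k).trans (Nat.count_monotone D (Nat.lt_succ_iff.1 hk))
  obtain ⟨E, hE⟩ := exists_isPlacement (m := n + 1) (hlt D) (hlt (¬ D ·)) fun k _ l _ hr hc ↦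
    (le_of_hookRow_le hr.le hc.le).antisymm (le_of_hookRow_le hr.ge hc.ge)
  have hentry := hE.entry_hook_ne_zero_iff
  refine ⟨E, hE, hE.isOrderedMatrix (by omega) (by omega) ?_ (fun i hi ↦ ?_) (fun j hj ↦ ?_)
    (fun k l hr hc ↦ (le_of_hookRow_le hr.le hc.le).lt_of_ne (by rintro rfl; omega))
    (fun k l hc hr ↦ (le_of_hookRow_le hr.le hc.le).lt_of_ne (by rintro rfl; omega)), ?_, ?_,
    ⟨0, (hentry 0 0).2 (by omega), fun i hi ↦ by have := (hentry i i).1 hi; omega⟩, ?_, ?_⟩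
  · have := count_add_count_not D n
    omega
  · obtain ⟨k, hk, hki, -⟩ := hE.entry_ne_zero_iff.1 ((hentry i 0).2 (Or.inr ⟨rfl, hi⟩))
    exact ⟨k, hk, hki⟩
  · obtain ⟨k, hk, -, hkj⟩ := hE.entry_ne_zero_iff.1 ((hentry 0 j).2 (Or.inl ⟨rfl, hj⟩))
    exact ⟨k, hk, hkj⟩
  all_goals
    intros
    simp only [hentry] at *
    omega

lemma exists_isConfigMatrix_count (D : ℕ → Prop) [DecidablePred D] (n : ℕ) :
    ∃ M : Matrix (Fin (Nat.count D n + 1)) (Fin (Nat.count (¬ D ·) n + 1)) ℕ,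
      IsPlacement (n + 1) (Nat.count D) (Nat.count (¬ D ·)) M ∧ IsConfigMatrix M := by
  have hlt (D : ℕ → Prop) [DecidablePred D] : ∀ k < n + 1, Nat.count D k < Nat.count D n + 1 :=
    fun k hk ↦ Nat.lt_succ_iff.2 (Nat.count_monotone D (Nat.lt_succ_iff.1 hk))
  have hsurj (D : ℕ → Prop) [DecidablePred D] :
      ∀ i < Nat.count D n + 1, ∃ k < n + 1, Nat.count D k = i := by
    intro i hi
    obtain ⟨k, hk, -, hki⟩ := exists_startsRow_count_eq (Nat.lt_succ_iff.1 hi)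
    exact ⟨k, by omega, hki⟩
  obtain ⟨E, hE, hstep⟩ := exists_isStepMatrix_hookRow D n
  obtain ⟨F, hF, hEF⟩ := hE.exists_downDerived_count (hlt D) fun k l hkl hl ↦
    hookRow_lt_hookRow ((startsRow_or_startsRow_not D l).resolve_left hl) hkl
  obtain ⟨G, hG, hFG⟩ := hF.transpose.exists_downDerived_count (hlt (¬ D ·)) fun k l hkl hl ↦
    ((startsRow_or_startsRow_not D l).resolve_right hl).count_lt hkl
  refine ⟨Gᵀ, hG.transpose, hG.transpose.isOrderedMatrix (by omega) (by omega) ?_ (hsurj D)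
    (hsurj (¬ D ·)) (fun k l _ ↦ (Nat.count_monotone _).reflect_lt)
    (fun k l _ ↦ (Nat.count_monotone _).reflect_lt), E, hstep, hEF.derivedFrom hFG⟩
  have := count_add_count_not D n
  omega

end Staircase

section ConvexFibers

open scoped Matrix

variable {q p n : ℕ} {r c h : ℕ → ℕ} {M : Matrix (Fin q) (Fin p) ℕ}
  {D : ℕ → Prop} [DecidablePred D]

/-- The fibers of `h` on `{0, …, n}` are sets of consecutive integers. -/
def HasConvexFibers (n : ℕ) (h : ℕ → ℕ) : Prop :=
  ∀ i j k, i ≤ j → j ≤ k → k ≤ n → h i = h k → h j = h k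

/-- The steps `k → k + 1` in `{0, …, n}` at which `h` changes its value. -/
def changes (n : ℕ) (h : ℕ → ℕ) : Finset ℕ := (Finset.range n).filter fun k ↦ h k ≠ h (k + 1)

lemma HasConvexFibers.card_changes_lt (hh : HasConvexFibers n h) (hp : ∀ k ≤ n, h k < p) :
    (changes n h).card < p := by
  have h0 : h 0 ∈ Finset.range p := Finset.mem_range.2 (hp 0 n.zero_le)
  suffices hle : (changes n h).card ≤ ((Finset.range p).erase (h 0)).card from
    hle.trans_lt ((Finset.card_erase_lt_of_mem h0).trans_eq (Finset.card_range p))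
  refine Finset.card_le_card_of_injOn (fun k ↦ h (k + 1)) (fun k hk ↦ ?_) fun k hk l hl hkl ↦ ?_
  · obtain ⟨hkn, hne⟩ := Finset.mem_filter.1 hk
    rw [Finset.mem_range] at hkn
    exact Finset.mem_erase.2 ⟨fun heq ↦ hne (hh 0 k (k + 1) k.zero_le k.le_succ hkn heq.symm),
      Finset.mem_range.2 (hp _ hkn)⟩
  · wlog hlt : k < l generalizing k l
    · rcases (not_lt.1 hlt).eq_or_lt with rfl | hlt
      · rfl
      · exact (this l hl k hk hkl.symm hlt).symm
    obtain ⟨hln, hne⟩ := Finset.mem_filter.1 hl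
    rw [Finset.mem_range] at hln
    exact absurd (hh (k + 1) l (l + 1) hlt l.le_succ hln hkl) hne

lemma IsPlacement.row_eq_succ_iff (hM : IsPlacement (n + 1) r c M) (hpq : n + 2 = p + q)
    (hr : HasConvexFibers n r) (hc : HasConvexFibers n c) {k : ℕ} (hk : k < n) :
    r k = r (k + 1) ↔ c k ≠ c (k + 1) := by
  have hcover : changes n r ∪ changes n c = Finset.range n := by
    ext l
    simp only [changes, Finset.mem_union, Finset.mem_filter, ← and_or_left, Finset.mem_range,
      and_iff_left_iff_imp, ← not_and_or]
    rintro hl ⟨hrl, hcl⟩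
    have := hM.eq_of_row_eq_of_col_eq (by omega) (by omega) hrl hcl
    omega
  have hdisj : Disjoint (changes n r) (changes n c) := by
    rw [← Finset.card_union_eq_card_add_card]
    refine (Finset.card_union_le _ _).antisymm ?_
    have := hr.card_changes_lt fun k hk ↦ hM.row_lt (Nat.lt_succ_iff.2 hk)
    have := hc.card_changes_lt fun k hk ↦ hM.col_lt (Nat.lt_succ_iff.2 hk)
    rw [hcover, Finset.card_range]
    omega
  have hmem : k ∈ changes n r ∪ changes n c := hcover ▸ Finset.mem_range.2 hk
  have hnot : ¬ (k ∈ changes n r ∧ k ∈ changes n c) := fun ⟨h₁, h₂⟩ ↦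
    Finset.disjoint_left.1 hdisj h₁ h₂
  simp only [changes, Finset.mem_union, Finset.mem_filter, Finset.mem_range, hk] at hmem hnot
  tauto

lemma eq_count_of_iff_ne_succ (hD : ∀ k < n, D k ↔ h k ≠ h (k + 1))
    (hmono : ∀ k < n, h k ≤ h (k + 1)) (hsurj : ∀ j ≤ h n, ∃ k ≤ n, h k = j) {k : ℕ}
    (hk : k ≤ n) : h k = Nat.count D k := by
  have hle : ∀ i j, i ≤ j → j ≤ n → h i ≤ h j := fun i j hij ↦ by
    induction j, hij using Nat.le_induction with
    | base => exact fun _ ↦ le_rfl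
    | succ j _ ih => exact fun hj ↦ (ih (by omega)).trans (hmono j (by omega))
  induction k with
  | zero =>
    obtain ⟨l, hl, hl0⟩ := hsurj 0 (Nat.zero_le _)
    have := hle 0 l l.zero_le hl
    rw [Nat.count_zero]
    omega
  | succ k ih =>
    have hstep : h (k + 1) ≤ h k + 1 := by
      by_contra hgt
      obtain ⟨l, hl, hlk⟩ := hsurj (h k + 1) (by have := hle (k + 1) n hk le_rfl; omega)
      rcases le_or_gt l k with hkl | hkl
      · have := hle l k hkl (by omega)
        omega
      · have := hle (k + 1) l hkl hl
        omega
    have := hmono k hk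
    have := ih (by omega)
    rw [Nat.count_succ]
    split_ifs with hDk <;> rw [hD k hk] at hDk <;> omega

lemma IsOrderedMatrix.transpose (hM : IsOrderedMatrix M) : IsOrderedMatrix Mᵀ := by
  obtain ⟨hq, hp, hset, hrow, hcol, hinj, hr, hc⟩ := hM
  have htranspose : entrySet Mᵀ = entrySet M := by
    ext v
    simp only [mem_entrySet, entry_transpose]
    rw [exists_comm]
  refine ⟨hp, hq, by rw [htranspose, hset, add_comm], ?_⟩
  simp only [entry_transpose]
  exact ⟨hcol, hrow, fun i₁ j₁ i₂ j₂ h₁ h₂ h ↦ (hinj _ _ _ _ h₁ h₂ h).symm, hc, hr⟩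

lemma IsOrderedMatrix.col_lt_of_row_eq (hM : IsOrderedMatrix M) {m : ℕ} (h : IsPlacement m r c M)
    {k l : ℕ} (hkl : k < l) (hl : l < m) (hr : r k = r l) : c k < c l := by
  obtain ⟨-, -, -, -, -, -, hrow, -⟩ := hM
  have hk := hkl.trans hl
  have hek := h.entry_eq hk
  have hel := h.entry_eq hl
  refine (lt_or_eq_of_le (not_lt.1 fun hlt ↦ ?_)).resolve_right fun hc ↦
    hkl.ne (h.eq_of_row_eq_of_col_eq hk hl hr hc)
  rw [hr] at hek
  have := hrow (r l) (c l) (c k) hlt (by omega) (by omega)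
  omega

lemma IsOrderedMatrix.exists_row_eq (hM : IsOrderedMatrix M) {m : ℕ} (h : IsPlacement m r c M)
    {i : ℕ} (hi : i < q) : ∃ k < m, r k = i := by
  obtain ⟨-, -, -, hrow, -⟩ := hM
  obtain ⟨j, -, hij⟩ := hrow i hi
  obtain ⟨k, hk, hki, -⟩ := h.entry_ne_zero_iff.1 hij
  exact ⟨k, hk, hki⟩

lemma IsOrderedMatrix.row_eq_count (hM : IsOrderedMatrix M) (h : IsPlacement (n + 1) r c M)
    (hpq : n + 2 = p + q) (hr : HasConvexFibers n r) (hc : HasConvexFibers n c)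
    (hD : ∀ k < n, D k ↔ r k ≠ r (k + 1)) :
    (∀ k ≤ n, r k = Nat.count D k) ∧ q = Nat.count D n + 1 := by
  have hlt := h.row_lt n.lt_succ_self
  have hmono : ∀ k < n, r k ≤ r (k + 1) := fun k hk ↦ by
    by_cases hrk : r k = r (k + 1)
    · exact hrk.le
    · have hck := not_not.1 (mt (h.row_eq_succ_iff hpq hr hc hk).2 hrk)
      exact (hM.transpose.col_lt_of_row_eq h.transpose k.lt_succ_self (by omega) hck).le
  have hcount : ∀ k ≤ n, r k = Nat.count D k := fun k hk ↦
    eq_count_of_iff_ne_succ hD hmono (fun i hi ↦ by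
      obtain ⟨l, hl, hli⟩ := hM.exists_row_eq h (hi.trans_lt hlt)
      exact ⟨l, Nat.lt_succ_iff.1 hl, hli⟩) hk
  refine ⟨hcount, ?_⟩
  obtain ⟨l, hl, hlq⟩ := hM.exists_row_eq h (i := q - 1) (by omega)
  have := Nat.count_monotone D (Nat.lt_succ_iff.1 hl)
  have := hcount l (by omega)
  have := hcount n le_rfl
  omega

lemma IsOrderedMatrix.isPlacement_count (hM : IsOrderedMatrix M) (h : IsPlacement (n + 1) r c M)
    (hpq : n + 2 = p + q) (hr : HasConvexFibers n r) (hc : HasConvexFibers n c)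
    (hD : ∀ k < n, D k ↔ r k ≠ r (k + 1)) :
    IsPlacement (n + 1) (Nat.count D) (Nat.count (¬ D ·)) M ∧
      q = Nat.count D n + 1 ∧ p = Nat.count (¬ D ·) n + 1 := by
  obtain ⟨hrow, hq⟩ := hM.row_eq_count h hpq hr hc hD
  obtain ⟨hcol, hp⟩ := hM.transpose.row_eq_count h.transpose (by omega) hc hr
    (D := (¬ D ·)) fun k hk ↦ by rw [hD k hk, not_not, h.row_eq_succ_iff hpq hr hc hk]
  exact ⟨h.congr (fun k hk ↦ hrow k (by omega)) fun k hk ↦ hcol k (by omega), hq, hp⟩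

end ConvexFibers

section Codes

variable {V : Type*} [Zero V] {u a b : List (Finset ℕ)} {x : ℕ}

/-- The set partitioned by the list of blocks `u`. -/
def blockUnion (u : List (Finset ℕ)) : Finset ℕ := u.foldr (· ∪ ·) ∅

lemma mem_blockUnion : x ∈ blockUnion u ↔ ∃ s ∈ u, x ∈ s := by
  induction u with
  | nil => simp [blockUnion]
  | cons s u ih => simpa [blockUnion] using or_congr_right ih

lemma blockIdx_lt_length_iff : blockIdx u x < u.length ↔ x ∈ blockUnion u := by
  simp [blockIdx, mem_blockUnion, List.findIdx_lt_length]

lemma blockIdx_append (x : ℕ) : blockIdx (a ++ b) x =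
    if x ∈ blockUnion a then blockIdx a x else a.length + blockIdx b x := by
  simp only [← blockIdx_lt_length_iff, blockIdx, List.findIdx_append, add_comm]

/-- The coordinates of the cube cell of `u`, indexed by all natural numbers: the coordinate `x`
compares the blocks of `x` and `x + 1`. -/
def relCode (u : List (Finset ℕ)) (x : ℕ) : Fin 3 :=
  if blockIdx u x = blockIdx u (x + 1) then 2
  else if blockIdx u x < blockIdx u (x + 1) then 0 else 1

/-- The cell with coordinates `f` at the pairs `{x, x + 1}` meeting `S`, and `g` at the others. -/
def glue (S : Finset ℕ) (f g : ℕ → Fin 3) (x : ℕ) : Fin 3 :=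
  if x ∈ S ∨ x + 1 ∈ S then f x else g x

lemma blockIdx_eq_length (hx : x ∉ blockUnion u) : blockIdx u x = u.length :=
  List.findIdx_le_length.antisymm (not_lt.1 (mt blockIdx_lt_length_iff.1 hx))

lemma relCode_append (a b : List (Finset ℕ)) :
    relCode (a ++ b) = glue (blockUnion a) (relCode a) (relCode b) := by
  funext x
  have h (y : ℕ) := blockIdx_lt_length_iff (u := a) (x := y)
  have h' (y : ℕ) := blockIdx_eq_length (u := a) (x := y)
  simp only [relCode, glue, blockIdx_append]
  by_cases h₁ : x ∈ blockUnion a <;> by_cases h₂ : x + 1 ∈ blockUnion a <;> grind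

lemma relCode_eq_of_blockUnion_eq (hab : blockUnion a = blockUnion b)
    (hx : ¬ (x ∈ blockUnion a ∧ x + 1 ∈ blockUnion a)) : relCode a x = relCode b x := by
  have h (y : ℕ) (u : List (Finset ℕ)) := blockIdx_lt_length_iff (u := u) (x := y)
  have h' (y : ℕ) (u : List (Finset ℕ)) := blockIdx_eq_length (u := u) (x := y)
  simp only [relCode]
  by_cases h₁ : x ∈ blockUnion a <;> by_cases h₂ : x + 1 ∈ blockUnion a <;> grind

/-- The value at `u` of the map sending the cube cell with coordinates `c` to `F c`, precomposed
with `ρ_*`. -/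
noncomputable def evalCode (F : (ℕ → Fin 3) → V) (u : List (Finset ℕ)) : V :=
  if ∀ s ∈ u, IsInterval s then F (relCode u) else 0

lemma evalCode_of_isInterval {F : (ℕ → Fin 3) → V} (hu : ∀ s ∈ u, IsInterval s) :
    evalCode F u = F (relCode u) := if_pos hu

lemma evalCode_of_not_isInterval {F : (ℕ → Fin 3) → V} (hu : ¬ ∀ s ∈ u, IsInterval s) :
    evalCode F u = 0 := if_neg hu

lemma evalCode_congr {F G : (ℕ → Fin 3) → V} (h : F (relCode u) = G (relCode u)) :
    evalCode F u = evalCode G u := by rw [evalCode, evalCode, h]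

lemma evalCode_append (F : (ℕ → Fin 3) → V) (a b : List (Finset ℕ)) :
    evalCode F (a ++ b) =
      evalCode (fun f ↦ evalCode (fun g ↦ F (glue (blockUnion a) f g)) b) a := by
  simp only [evalCode, List.forall_mem_append, relCode_append, ite_and]

lemma isInterval_iff_ordConnected {s : Finset ℕ} :
    IsInterval s ↔ (s : Set ℕ).OrdConnected :=
  ⟨fun h ↦ ⟨fun _ ha _ hb _ hx ↦ h _ ha _ hb _ hx.1 hx.2⟩,
    fun h _ ha _ hb _ hax hxb ↦ h.out ha hb ⟨hax, hxb⟩⟩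

end Codes

section Fibers

variable {U : Finset ℕ} {p : ℕ} {h : ℕ → ℕ} {x : ℕ}

/-- The partition of `U` into the fibers of `h` over `0, …, p - 1`, in this order. -/
def fibers (U : Finset ℕ) (p : ℕ) (h : ℕ → ℕ) : List (Finset ℕ) :=
  (List.range p).map fun j ↦ U.filter (h · = j)

lemma mem_fibers {s : Finset ℕ} : s ∈ fibers U p h ↔ ∃ j < p, U.filter (h · = j) = s := by
  simp [fibers]

lemma blockUnion_fibers (hp : ∀ x ∈ U, h x < p) : blockUnion (fibers U p h) = U := by
  ext x
  simp only [mem_blockUnion, mem_fibers]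
  constructor
  · rintro ⟨_, ⟨j, -, rfl⟩, hx⟩
    exact (Finset.mem_filter.1 hx).1
  · exact fun hx ↦ ⟨_, ⟨h x, hp x hx, rfl⟩, Finset.mem_filter.2 ⟨hx, rfl⟩⟩

lemma blockIdx_fibers (hx : x ∈ U) (hp : h x < p) : blockIdx (fibers U p h) x = h x := by
  rw [blockIdx, List.findIdx_eq (by simpa [fibers] using hp)]
  simp only [fibers, List.getElem_map, List.getElem_range, Finset.mem_filter, hx, true_and,
    decide_true]
  exact fun j hj ↦ decide_eq_false hj.ne'

lemma reverse_fibers (hp : ∀ x ∈ U, h x < p) :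
    (fibers U p h).reverse = fibers U p fun x ↦ p - 1 - h x := by
  refine List.ext_getElem (by simp [fibers]) fun j hj _ ↦ ?_
  simp only [fibers, List.length_reverse, List.length_map, List.length_range] at hj
  simp only [fibers, List.getElem_reverse, List.length_map, List.length_range, List.getElem_map,
    List.getElem_range]
  refine Finset.filter_congr fun x hx ↦ ?_
  have := hp x hx
  omega

lemma IsPlacement.colFace_eq {q m : ℕ} {r c : ℕ → ℕ} {M : Matrix (Fin q) (Fin p) ℕ}
    (hM : IsPlacement m r c M) : colFace M = fibers (Finset.Icc 1 m) p fun v ↦ c (v - 1) := by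
  refine List.map_congr_left fun j _ ↦ ?_
  ext v
  simp only [hM.colBlock_eq, Finset.mem_image, Finset.mem_filter, Finset.mem_range, Finset.mem_Icc]
  constructor
  · rintro ⟨k, ⟨hk, rfl⟩, rfl⟩
    exact ⟨by omega, rfl⟩
  · rintro ⟨hv, rfl⟩
    exact ⟨v - 1, ⟨by omega, rfl⟩, by omega⟩

lemma IsPlacement.rowFace_eq {q m : ℕ} {r c : ℕ → ℕ} {M : Matrix (Fin q) (Fin p) ℕ}
    (hM : IsPlacement m r c M) :
    rowFace M = fibers (Finset.Icc 1 m) q fun v ↦ q - 1 - r (v - 1) := by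
  have hrow : (List.range q).map (rowBlock M) = colFace M.transpose :=
    List.map_congr_left fun i _ ↦ by rw [← rowBlock_transpose, Matrix.transpose_transpose]
  rw [rowFace, hrow, hM.transpose.colFace_eq, reverse_fibers fun v hv ↦ hM.row_lt ?_]
  rw [Finset.mem_Icc] at hv
  omega

lemma count_mem_lt_card (hx : x ∈ U) : Nat.count (· ∈ U) x < U.card := by
  simpa using Nat.count_lt_card (p := (· ∈ U)) U.finite_toSet hx

lemma relabel_eq_filter (U s : Finset ℕ) (hs : s ⊆ Finset.Icc 1 U.card) :
    relabel U s = U.filter fun x ↦ Nat.count (· ∈ U) x + 1 ∈ s := by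
  have hfin : (Set.ofPred (· ∈ U)).Finite := U.finite_toSet
  have hU : hfin.toFinset = U := Finset.ext fun x ↦ by simp
  have hnth (k : ℕ) : (U.sort (· ≤ ·)).getD k 0 = Nat.nth (· ∈ U) k := by
    rw [Nat.nth_eq_getD_sort hfin, hU]
  ext x
  simp only [relabel, hnth, Finset.mem_image, Finset.mem_filter]
  constructor
  · rintro ⟨k, hk, rfl⟩
    have hk' := Finset.mem_Icc.1 (hs hk)
    have hlt : k - 1 < hfin.toFinset.card := by rw [hU]; omega
    rw [Nat.count_nth_of_lt_card_finite hfin hlt, Nat.sub_add_cancel hk'.1]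
    exact ⟨Nat.nth_mem_of_lt_card hfin hlt, hk⟩
  · exact fun ⟨hx, hk⟩ ↦ ⟨_, hk, by rw [Nat.add_sub_cancel, Nat.nth_count hx]⟩

lemma map_relabel_fibers (U : Finset ℕ) (p : ℕ) (h : ℕ → ℕ) :
    (fibers (Finset.Icc 1 U.card) p h).map (relabel U) =
      fibers U p fun x ↦ h (Nat.count (· ∈ U) x + 1) := by
  rw [fibers, List.map_map]
  refine List.map_congr_left fun j _ ↦ ?_
  rw [Function.comp_apply, relabel_eq_filter _ _ (Finset.filter_subset _ _)]
  refine Finset.filter_congr fun x hx ↦ ?_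
  have := count_mem_lt_card hx
  simp only [Finset.mem_filter, Finset.mem_Icc, and_iff_right_iff_imp]
  omega

lemma exists_count_mem_eq {k : ℕ} (hk : k < U.card) : ∃ x ∈ U, Nat.count (· ∈ U) x = k := by
  have hfin : (Set.ofPred (· ∈ U)).Finite := U.finite_toSet
  have hlt : k < hfin.toFinset.card := by
    rwa [show hfin.toFinset = U from Finset.ext fun x ↦ by simp]
  exact ⟨_, Nat.nth_mem_of_lt_card hfin hlt, Nat.count_nth_of_lt_card_finite hfin hlt⟩

lemma le_of_count_mem_le {y : ℕ} (hy : y ∈ U)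
    (h : Nat.count (· ∈ U) x ≤ Nat.count (· ∈ U) y) : x ≤ y :=
  not_lt.1 fun hlt ↦ h.not_gt (Nat.count_strict_mono hy hlt)

lemma mem_of_isInterval_fibers (hI : ∀ s ∈ fibers U p h, IsInterval s) {y z : ℕ} (hy : y ∈ U)
    (hz : z ∈ U) (hyz : h y = h z) (hp : h y < p) (hyx : y ≤ x) (hxz : x ≤ z) :
    x ∈ U ∧ h x = h y :=
  Finset.mem_filter.1 <| hI _ (mem_fibers.2 ⟨h y, hp, rfl⟩) y (Finset.mem_filter.2 ⟨hy, rfl⟩) z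
    (Finset.mem_filter.2 ⟨hz, hyz.symm⟩) x hyx hxz

lemma hasConvexFibers_of_isInterval_fibers {n : ℕ} (hU : U.card = n + 1) (hp : ∀ k ≤ n, h k < p)
    (hI : ∀ s ∈ fibers U p (fun x ↦ h (Nat.count (· ∈ U) x)), IsInterval s) :
    HasConvexFibers n h := by
  intro i j k hij hjk hkn hik
  obtain ⟨x, hx, rfl⟩ := exists_count_mem_eq (U := U) (k := i) (by omega)
  obtain ⟨y, hy, rfl⟩ := exists_count_mem_eq (U := U) (k := j) (by omega)
  obtain ⟨z, hz, rfl⟩ := exists_count_mem_eq (U := U) (k := k) (by omega)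
  exact (mem_of_isInterval_fibers hI hx hz hik (hp _ (by omega)) (le_of_count_mem_le hy hij)
    (le_of_count_mem_le hz hjk)).2.trans hik

lemma isInterval_of_isInterval_fibers {n p' : ℕ} {h' : ℕ → ℕ} (hU : U.card = n + 1)
    (hp : ∀ k ≤ n, h k < p) (hp' : ∀ k ≤ n, h' k < p')
    (hI : ∀ s ∈ fibers U p (fun x ↦ h (Nat.count (· ∈ U) x)), IsInterval s)
    (hI' : ∀ s ∈ fibers U p' (fun x ↦ h' (Nat.count (· ∈ U) x)), IsInterval s)
    (hstep : ∀ k < n, h k = h (k + 1) ∨ h' k = h' (k + 1)) : IsInterval U := by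
  intro a ha b hb x hax hxb
  by_contra hx
  have hlt : Nat.count (· ∈ U) a < Nat.count (· ∈ U) x :=
    Nat.count_strict_mono ha (hax.lt_of_ne fun h ↦ hx (h ▸ ha))
  have hle : Nat.count (· ∈ U) x ≤ Nat.count (· ∈ U) b := Nat.count_monotone _ hxb
  have hbU := count_mem_lt_card hb
  obtain ⟨y, hy, hyx⟩ := exists_count_mem_eq (U := U) (k := Nat.count (· ∈ U) x - 1) (by omega)
  obtain ⟨z, hz, hzx⟩ := exists_count_mem_eq (U := U) (k := Nat.count (· ∈ U) x) (by omega)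
  have hyx' : y ≤ x := le_of_not_ge fun h ↦ by
    have := Nat.count_monotone (· ∈ U) h
    omega
  have hxz : x ≤ z := le_of_count_mem_le hz hzx.ge
  have hyz : Nat.count (· ∈ U) z = Nat.count (· ∈ U) y + 1 := by omega
  rcases hstep (Nat.count (· ∈ U) y) (by omega) with h | h <;> rw [← hyz] at h
  · exact hx (mem_of_isInterval_fibers hI hy hz h (hp _ (by omega)) hyx' hxz).1
  · exact hx (mem_of_isInterval_fibers hI' hy hz h (hp' _ (by omega)) hyx' hxz).1

lemma isInterval_of_mem_fibers (hU : IsInterval U) (hh : Monotone h ∨ Antitone h) {s : Finset ℕ}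
    (hs : s ∈ fibers U p h) : IsInterval s := by
  obtain ⟨j, -, rfl⟩ := mem_fibers.1 hs
  rw [isInterval_iff_ordConnected] at hU ⊢
  have hj : (h ⁻¹' {j}).OrdConnected :=
    hh.elim Set.ordConnected_singleton.preimage_mono Set.ordConnected_singleton.preimage_anti
  rw [Finset.coe_filter]
  exact hU.inter hj

lemma relCode_fibers (hx : x ∈ U) (hx' : x + 1 ∈ U) (hp : ∀ y ∈ U, h y < p) :
    relCode (fibers U p h) x =
      if h x = h (x + 1) then 2 else if h x < h (x + 1) then 0 else 1 := by
  rw [relCode, blockIdx_fibers hx (hp x hx), blockIdx_fibers hx' (hp _ hx')]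

end Fibers

section DiagonalTop

variable {V : Type*} [AddCommMonoid V] [Module (ZMod 2) V] {n q p : ℕ} {T : Finset ℕ}

/-- The column face of the configuration matrix in which the row changes between `k + 1` and
`k + 2` for `k ∈ T`, and the column for the other `k < n`. -/
def stairCol (n : ℕ) (T : Finset ℕ) : List (Finset ℕ) :=
  fibers (Finset.Icc 1 (n + 1)) (Nat.count (· ∉ T) n + 1) fun v ↦ Nat.count (· ∉ T) (v - 1)

/-- The row face of the configuration matrix of `stairCol n T`. -/
def stairRow (n : ℕ) (T : Finset ℕ) : List (Finset ℕ) :=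
  fibers (Finset.Icc 1 (n + 1)) (Nat.count (· ∈ T) n + 1) fun v ↦
    Nat.count (· ∈ T) n - Nat.count (· ∈ T) (v - 1)

lemma intCast_csgn (M : Matrix (Fin q) (Fin p) ℕ) : (csgn M : ZMod 2) = 1 := by
  rw [csgn]
  split_ifs <;> simp [csgnFrom, rsgn, sgn1, sgn2, psgn, CharTwo.neg_eq]

/-- The configuration matrices with entry set `{1, …, m}`, as indexed in `deltaTop`. -/
noncomputable def configs (m : ℕ) : Finset ((q : ℕ) × (p : ℕ) × (Fin q → Fin p → Fin (m + 1))) :=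
  ((Finset.Icc 1 m).sigma fun _ ↦ (Finset.Icc 1 m).sigma fun _ ↦ Finset.univ).filter fun x ↦
    IsConfigMatrix (Matrix.of fun i j ↦ (x.2.2 i j : ℕ)) ∧
      entrySet (Matrix.of fun i j ↦ (x.2.2 i j : ℕ)) = Finset.Icc 1 m

/-- The faces of an indexed matrix. -/
def faces {m : ℕ} (x : (q : ℕ) × (p : ℕ) × (Fin q → Fin p → Fin (m + 1))) :
    List (Finset ℕ) × List (Finset ℕ) :=
  (colFace (Matrix.of fun i j ↦ (x.2.2 i j : ℕ)), rowFace (Matrix.of fun i j ↦ (x.2.2 i j : ℕ)))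

lemma deltaTop_eq_sum_configs {m : ℕ} (hm : m ≠ 1) :
    deltaTop (ZMod 2) m = ∑ x ∈ configs m, Finsupp.single (faces x) 1 := by
  simp only [deltaTop, if_neg hm, intCast_csgn, one_smul, configs, Finset.sum_filter,
    Finset.sum_sigma, faces]

lemma isPlacement_of_mem_configs {m : ℕ}
    {x : (q : ℕ) × (p : ℕ) × (Fin q → Fin p → Fin (m + 1))} (hx : x ∈ configs m) :
    ∃ r c, IsPlacement m r c (Matrix.of fun i j ↦ (x.2.2 i j : ℕ)) := by
  obtain ⟨-, hM, hent⟩ := Finset.mem_filter.1 hx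
  exact hM.1.exists_isPlacement hent

lemma exists_mem_configs (n : ℕ) (T : Finset ℕ) :
    ∃ G : Fin (Nat.count (· ∈ T) n + 1) → Fin (Nat.count (· ∉ T) n + 1) → Fin (n + 1 + 1),
      ⟨_, _, G⟩ ∈ configs (n + 1) ∧
      IsPlacement (n + 1) (Nat.count (· ∈ T)) (Nat.count (· ∉ T))
        (Matrix.of fun i j ↦ (G i j : ℕ)) := by
  obtain ⟨M, hM, hconf⟩ := exists_isConfigMatrix_count (· ∈ T) n
  have hlt (i j) : M i j < n + 1 + 1 := by
    by_contra! h
    obtain ⟨k, hk⟩ := Nat.exists_eq_add_of_le' (Nat.one_le_of_lt h)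
    have := ((hM i j k).1 (by rw [entry_of_lt i.2 j.2]; exact hk)).1
    omega
  refine ⟨fun i j ↦ ⟨M i j, hlt i j⟩, Finset.mem_filter.2 ⟨?_, hconf, hM.entrySet_eq⟩, hM⟩
  have := count_add_count_not (· ∈ T) n
  simp only [Finset.mem_sigma, Finset.mem_Icc, Finset.mem_univ, and_true]
  omega

lemma IsPlacement.faces_eq {G : Fin (Nat.count (· ∈ T) n + 1) → Fin (Nat.count (· ∉ T) n + 1) →
    Fin (n + 1 + 1)} (hG : IsPlacement (n + 1) (Nat.count (· ∈ T)) (Nat.count (· ∉ T))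
      (Matrix.of fun i j ↦ (G i j : ℕ))) :
    faces ⟨_, _, G⟩ = (stairCol n T, stairRow n T) := by
  simp only [faces, hG.colFace_eq, hG.rowFace_eq, stairCol, stairRow, Nat.add_sub_cancel]

lemma eq_of_count_mem_eq {T' : Finset ℕ} (hT : T ⊆ Finset.range n) (hT' : T' ⊆ Finset.range n)
    (h : ∀ k ≤ n, Nat.count (· ∈ T) k = Nat.count (· ∈ T') k) : T = T' := by
  have key : ∀ k < n, k ∈ T ↔ k ∈ T' := fun k hk ↦ by
    have h₁ := h k hk.le
    have h₂ := h (k + 1) hk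
    simp only [Nat.count_succ] at h₂
    split_ifs at h₂ <;> simp_all
  ext k
  exact ⟨fun hk ↦ (key k (Finset.mem_range.1 (hT hk))).1 hk,
    fun hk ↦ (key k (Finset.mem_range.1 (hT' hk))).2 hk⟩

lemma exists_eq_of_mem_configs {x : (q : ℕ) × (p : ℕ) × (Fin q → Fin p → Fin (n + 1 + 1))}
    (hx : x ∈ configs (n + 1)) {r c : ℕ → ℕ}
    (h : IsPlacement (n + 1) r c (Matrix.of fun i j ↦ (x.2.2 i j : ℕ)))
    (hr : HasConvexFibers n r) (hc : HasConvexFibers n c) :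
    ∃ G : Fin (Nat.count (· ∈ changes n r) n + 1) → Fin (Nat.count (· ∉ changes n r) n + 1) →
      Fin (n + 1 + 1), x = ⟨_, _, G⟩ ∧
        IsPlacement (n + 1) (Nat.count (· ∈ changes n r)) (Nat.count (· ∉ changes n r))
          (Matrix.of fun i j ↦ (G i j : ℕ)) := by
  obtain ⟨q, p, G⟩ := x
  obtain ⟨-, ⟨hM, -⟩, hent⟩ := Finset.mem_filter.1 hx
  have hpq : n + 2 = p + q := by
    have hcard := congrArg Finset.card (hM.2.2.1.symm.trans hent)
    simp only [Nat.card_Icc] at hcard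
    omega
  obtain ⟨hG, rfl, rfl⟩ := hM.isPlacement_count h hpq hr hc (D := (· ∈ changes n r))
    fun k hk ↦ by simp [changes, hk]
  exact ⟨G, rfl, hG⟩

lemma linearCombination_deltaTop (Θ : List (Finset ℕ) × List (Finset ℕ) → V)
    (hΘ : ∀ (q p : ℕ) (r c : ℕ → ℕ) (M : Matrix (Fin q) (Fin p) ℕ), IsPlacement (n + 1) r c M →
      Θ (colFace M, rowFace M) ≠ 0 → HasConvexFibers n r ∧ HasConvexFibers n c) :
    Finsupp.linearCombination (ZMod 2) Θ (deltaTop (ZMod 2) (n + 1)) =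
      ∑ T ∈ (Finset.range n).powerset, Θ (stairCol n T, stairRow n T) := by
  obtain rfl | hn := eq_or_ne n 0
  · have hIcc : ({1} : Finset ℕ).filter (fun v ↦ v - 1 = 0) = {1} := by decide
    simp [deltaTop, stairCol, stairRow, fibers, hIcc]
  rw [deltaTop_eq_sum_configs (by omega)]
  simp only [map_sum, Finsupp.linearCombination_single, one_smul]
  choose G hmem hG using exists_mem_configs n
  symm
  refine Finset.sum_of_injOn (fun T ↦ ⟨_, _, G T⟩) ?_ (fun T _ ↦ hmem T) ?_
    fun T _ ↦ by rw [(hG T).faces_eq]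
  · intro T hT T' hT' hTT'
    refine eq_of_count_mem_eq (Finset.mem_powerset.1 hT) (Finset.mem_powerset.1 hT') fun k hk ↦ ?_
    have hentry := congrArg (fun x : (q : ℕ) × (p : ℕ) × (Fin q → Fin p → Fin (n + 1 + 1)) ↦
      entry (Matrix.of fun i j ↦ (x.2.2 i j : ℕ)) (Nat.count (· ∈ T) k) (Nat.count (· ∉ T) k)) hTT'
    exact ((hG T' _ _ k).1 (hentry.symm.trans ((hG T).entry_eq (by omega)))).2.1.symm
  · intro x hx hxT
    by_contra hne
    obtain ⟨r, c, h⟩ := isPlacement_of_mem_configs hx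
    obtain ⟨hr, hc⟩ := hΘ _ _ r c _ h hne
    obtain ⟨G', rfl, hG'⟩ := exists_eq_of_mem_configs hx h hr hc
    refine hxT ⟨changes n r, ?_, ?_⟩
    · exact Finset.mem_coe.2 (Finset.mem_powerset.2 (Finset.filter_subset _ _))
    · have : G (changes n r) = G' := by
        ext i j
        simpa only [entry_of_lt i.2 j.2, Matrix.of_apply] using (hG _).entry_eq_entry hG' i j
      simp only [this]

end DiagonalTop

section SerreSum

variable {V : Type*} [AddCommMonoid V] {U : Finset ℕ} {n : ℕ}

/-- `F a b` summed over the terms `a ⊗ b` of the Serre diagonal of a cube cell which has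
coordinates `[I]` along `E`, and the coordinates `c` elsewhere. -/
noncomputable def serreSum (E : Finset ℕ) (F : (ℕ → Fin 3) → (ℕ → Fin 3) → V) (c : ℕ → Fin 3) : V :=
  ∑ S ∈ E.powerset, F ((E \ S).piecewise 0 c) (S.piecewise 1 c)

/-- The value at `a ⊗ b` of the map sending the tensor of the cube cells with coordinates `f` and
`g` to `F f g`, precomposed with `ρ_* ⊗ ρ_*`. -/
noncomputable def evalPair (F : (ℕ → Fin 3) → (ℕ → Fin 3) → V)
    (ab : List (Finset ℕ) × List (Finset ℕ)) : V :=
  if (∀ s ∈ ab.1, IsInterval s) ∧ ∀ s ∈ ab.2, IsInterval s then F (relCode ab.1) (relCode ab.2)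
  else 0

/-- The `x` for which `s` contains both `x` and `x + 1`. -/
def innerEdges (s : Finset ℕ) : Finset ℕ := s.filter (· + 1 ∈ s)

lemma mem_innerEdges {s : Finset ℕ} {x : ℕ} : x ∈ innerEdges s ↔ x ∈ s ∧ x + 1 ∈ s :=
  Finset.mem_filter

lemma innerEdges_subset (s : Finset ℕ) : innerEdges s ⊆ s := Finset.filter_subset _ _

lemma blockUnion_singleton (U : Finset ℕ) : blockUnion [U] = U := Finset.union_empty U

lemma count_succ_of_mem_innerEdges {x : ℕ} (hx : x ∈ innerEdges U) :
    Nat.count (· ∈ U) (x + 1) = Nat.count (· ∈ U) x + 1 := by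
  rw [Nat.count_succ, if_pos (mem_innerEdges.1 hx).1]

lemma injOn_count_mem : Set.InjOn (Nat.count (· ∈ U)) U := fun _ hx _ hy h ↦
  (le_of_count_mem_le hy h.le).antisymm (le_of_count_mem_le hx h.ge)

lemma image_count_innerEdges (hI : IsInterval U) (hU : U.card = n + 1) :
    (innerEdges U).image (Nat.count (· ∈ U)) = Finset.range n := by
  ext k
  simp only [Finset.mem_image, Finset.mem_range]
  constructor
  · rintro ⟨x, hx, rfl⟩
    have := count_mem_lt_card (mem_innerEdges.1 hx).2
    rw [count_succ_of_mem_innerEdges hx] at this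
    omega
  · intro hk
    obtain ⟨x, hx, rfl⟩ := exists_count_mem_eq (U := U) (k := k) (by omega)
    obtain ⟨z, hz, hzx⟩ := exists_count_mem_eq (U := U) (k := Nat.count (· ∈ U) x + 1) (by omega)
    have hxz : x < z := lt_of_not_ge fun h ↦ by
      have := Nat.count_monotone (· ∈ U) h
      omega
    exact ⟨x, mem_innerEdges.2 ⟨hx, hI x hx z hz _ x.le_succ hxz⟩, rfl⟩

lemma count_lt_of_mem_innerEdges (hU : U.card = n + 1) {x : ℕ} (hx : x ∈ innerEdges U) :
    Nat.count (· ∈ U) x < n := by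
  have := count_mem_lt_card (mem_innerEdges.1 hx).2
  rw [count_succ_of_mem_innerEdges hx] at this
  omega

lemma map_relabel_stairCol (hU : U.card = n + 1) (T : Finset ℕ) :
    (stairCol n T).map (relabel U) = fibers U (Nat.count (· ∉ T) n + 1) fun x ↦
      Nat.count (· ∉ T) (Nat.count (· ∈ U) x) := by
  rw [stairCol, ← hU, map_relabel_fibers]
  rfl

lemma map_relabel_stairRow (hU : U.card = n + 1) (T : Finset ℕ) :
    (stairRow n T).map (relabel U) = fibers U (Nat.count (· ∈ T) n + 1) fun x ↦
      Nat.count (· ∈ T) n - Nat.count (· ∈ T) (Nat.count (· ∈ U) x) := by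
  rw [stairRow, ← hU, map_relabel_fibers]
  rfl

lemma relCode_singleton {x : ℕ} (hx : x ∈ innerEdges U) : relCode [U] x = 2 := by
  simp [relCode, blockIdx, mem_innerEdges.1 hx]

lemma mem_image_count_iff {S : Finset ℕ} (hS : S ⊆ innerEdges U) {x : ℕ} (hx : x ∈ innerEdges U) :
    Nat.count (· ∈ U) x ∈ S.image (Nat.count (· ∈ U)) ↔ x ∈ S := by
  have hinj : Set.InjOn (Nat.count (· ∈ U)) (innerEdges U) :=
    injOn_count_mem.mono (Finset.coe_subset.2 (innerEdges_subset U))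
  rw [← Finset.mem_coe, Finset.coe_image, hinj.mem_image_iff (Finset.coe_subset.2 hS) hx,
    Finset.mem_coe]

lemma relCode_map_stairCol (hU : U.card = n + 1) {S : Finset ℕ} (hS : S ⊆ innerEdges U) :
    relCode ((stairCol n (S.image (Nat.count (· ∈ U)))).map (relabel U)) =
      (innerEdges U \ S).piecewise 0 (relCode [U]) := by
  set T := S.image (Nat.count (· ∈ U))
  have hp : ∀ y ∈ U, Nat.count (· ∉ T) (Nat.count (· ∈ U) y) < Nat.count (· ∉ T) n + 1 :=
    fun y hy ↦ Nat.lt_succ_of_le (Nat.count_monotone _ (by have := count_mem_lt_card hy; omega))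
  rw [map_relabel_stairCol hU]
  funext x
  by_cases hx : x ∈ innerEdges U
  · obtain ⟨hxU, hxU'⟩ := mem_innerEdges.1 hx
    have hxT : Nat.count (· ∈ U) x ∈ T ↔ x ∈ S := mem_image_count_iff hS hx
    rw [relCode_fibers hxU hxU' hp, count_succ_of_mem_innerEdges hx, Nat.count_succ]
    by_cases hxS : x ∈ S <;> simp [hxT, hxS, hx, relCode_singleton]
  · rw [Finset.piecewise_eq_of_notMem _ _ _ fun h ↦ hx (Finset.mem_sdiff.1 h).1]
    refine relCode_eq_of_blockUnion_eq ?_ ?_ <;> rw [blockUnion_fibers hp]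
    exacts [(blockUnion_singleton U).symm, mt mem_innerEdges.2 hx]

lemma relCode_map_stairRow (hU : U.card = n + 1) {S : Finset ℕ} (hS : S ⊆ innerEdges U) :
    relCode ((stairRow n (S.image (Nat.count (· ∈ U)))).map (relabel U)) =
      S.piecewise 1 (relCode [U]) := by
  set T := S.image (Nat.count (· ∈ U))
  have hp : ∀ y ∈ U, Nat.count (· ∈ T) n - Nat.count (· ∈ T) (Nat.count (· ∈ U) y) <
      Nat.count (· ∈ T) n + 1 := fun y _ ↦ by omega
  rw [map_relabel_stairRow hU]
  funext x
  by_cases hx : x ∈ innerEdges U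
  · obtain ⟨hxU, hxU'⟩ := mem_innerEdges.1 hx
    have hxT : Nat.count (· ∈ U) x ∈ T ↔ x ∈ S := mem_image_count_iff hS hx
    have hle := Nat.count_monotone (· ∈ T) (count_lt_of_mem_innerEdges hU hx)
    rw [Nat.succ_eq_add_one, Nat.count_succ] at hle
    rw [relCode_fibers hxU hxU' hp, count_succ_of_mem_innerEdges hx, Nat.count_succ]
    by_cases hxS : x ∈ S
    · rw [if_pos (hxT.2 hxS)] at hle ⊢
      rw [if_neg (by omega), if_neg (by omega), Finset.piecewise_eq_of_mem _ _ _ hxS]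
      rfl
    · simp [hxT, hxS, hx, relCode_singleton]
  · rw [Finset.piecewise_eq_of_notMem _ _ _ fun h ↦ hx (hS h)]
    refine relCode_eq_of_blockUnion_eq ?_ ?_ <;> rw [blockUnion_fibers hp]
    exacts [(blockUnion_singleton U).symm, mt mem_innerEdges.2 hx]

lemma evalPair_of_isInterval {F : (ℕ → Fin 3) → (ℕ → Fin 3) → V} {a b : List (Finset ℕ)}
    (ha : ∀ s ∈ a, IsInterval s) (hb : ∀ s ∈ b, IsInterval s) :
    evalPair F (a, b) = F (relCode a) (relCode b) := if_pos ⟨ha, hb⟩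

lemma isInterval_of_evalPair_ne_zero {F : (ℕ → Fin 3) → (ℕ → Fin 3) → V}
    {ab : List (Finset ℕ) × List (Finset ℕ)} (h : evalPair F ab ≠ 0) :
    (∀ s ∈ ab.1, IsInterval s) ∧ ∀ s ∈ ab.2, IsInterval s :=
  not_not.1 fun hab ↦ h (if_neg hab)

/-- The partitions of `U` corresponding to a pair of partitions of `{1, …, U.card}`. -/
def relabelPair (U : Finset ℕ) (ab : List (Finset ℕ) × List (Finset ℕ)) :
    List (Finset ℕ) × List (Finset ℕ) :=
  ab.map (List.map (relabel U)) (List.map (relabel U))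

lemma isInterval_of_evalPair_stair_ne_zero (hU : U.card = n + 1)
    {F : (ℕ → Fin 3) → (ℕ → Fin 3) → V} {T : Finset ℕ}
    (h : evalPair F (relabelPair U (stairCol n T, stairRow n T)) ≠ 0) : IsInterval U := by
  obtain ⟨hc, hr⟩ := isInterval_of_evalPair_ne_zero h
  simp only [relabelPair, Prod.map, map_relabel_stairCol hU, map_relabel_stairRow hU] at hc hr
  refine isInterval_of_isInterval_fibers (h' := fun k ↦ Nat.count (· ∈ T) n - Nat.count (· ∈ T) k)
    hU (fun k hk ↦ Nat.lt_succ_of_le (Nat.count_monotone _ hk)) (fun k _ ↦ by omega) hc hr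
    fun k _ ↦ ?_
  by_cases hkT : k ∈ T <;> simp [Nat.count_succ, hkT]

lemma evalPair_stair (hU : U.card = n + 1) (hI : IsInterval U)
    (F : (ℕ → Fin 3) → (ℕ → Fin 3) → V) {S : Finset ℕ} (hS : S ⊆ innerEdges U) :
    evalPair F (relabelPair U (stairCol n (S.image (Nat.count (· ∈ U))),
        stairRow n (S.image (Nat.count (· ∈ U))))) =
      F ((innerEdges U \ S).piecewise 0 (relCode [U])) (S.piecewise 1 (relCode [U])) := by
  rw [relabelPair, Prod.map_apply, evalPair_of_isInterval, relCode_map_stairCol hU hS,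
    relCode_map_stairRow hU hS]
  · rw [map_relabel_stairCol hU]
    exact fun s ↦ isInterval_of_mem_fibers hI <| .inl <|
      (Nat.count_monotone _).comp (Nat.count_monotone _)
  · rw [map_relabel_stairRow hU]
    exact fun s ↦ isInterval_of_mem_fibers hI <| .inr fun x y hxy ↦
      Nat.sub_le_sub_left (Nat.count_monotone _ (Nat.count_monotone _ hxy)) _

lemma hasConvexFibers_of_evalPair_ne_zero (hU : U.card = n + 1)
    {F : (ℕ → Fin 3) → (ℕ → Fin 3) → V} {q p : ℕ} {r c : ℕ → ℕ} {M : Matrix (Fin q) (Fin p) ℕ}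
    (hM : IsPlacement (n + 1) r c M) (h : evalPair F (relabelPair U (colFace M, rowFace M)) ≠ 0) :
    HasConvexFibers n r ∧ HasConvexFibers n c := by
  obtain ⟨hc, hr⟩ := isInterval_of_evalPair_ne_zero h
  simp only [relabelPair, Prod.map, hM.colFace_eq, hM.rowFace_eq, ← hU, map_relabel_fibers] at hc hr
  have hrow : ∀ k ≤ n, r k < q := fun k hk ↦ hM.row_lt (Nat.lt_succ_of_le hk)
  have hr' := hasConvexFibers_of_isInterval_fibers (h := fun k ↦ q - 1 - r k) hU
    (fun k hk ↦ by have := hrow k hk; omega) hr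
  refine ⟨fun i j k hij hjk hkn hik ↦ ?_, hasConvexFibers_of_isInterval_fibers hU
    (fun k hk ↦ hM.col_lt (Nat.lt_succ_of_le hk)) hc⟩
  have hjk' : q - 1 - r j = q - 1 - r k := hr' i j k hij hjk hkn (congrArg (q - 1 - ·) hik)
  have := hrow j (by omega)
  have := hrow k hkn
  omega

lemma linearCombination_evalPair_deltaTop [Module (ZMod 2) V] (hU : U.Nonempty)
    (F : (ℕ → Fin 3) → (ℕ → Fin 3) → V) :
    Finsupp.linearCombination (ZMod 2) (fun ab ↦ evalPair F (relabelPair U ab))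
        (deltaTop (ZMod 2) U.card) =
      evalCode (serreSum (innerEdges U) F) [U] := by
  obtain ⟨n, hn⟩ := Nat.exists_eq_add_of_le' hU.card_pos
  rw [hn, linearCombination_deltaTop _ fun _ _ _ _ _ ↦ hasConvexFibers_of_evalPair_ne_zero hn]
  by_cases hI : IsInterval U
  · rw [evalCode_of_isInterval (by simpa using hI), serreSum, ← image_count_innerEdges hI hn,
      Finset.powerset_image, Finset.sum_image]
    · exact Finset.sum_congr rfl fun S hS ↦ evalPair_stair hn hI F (Finset.mem_powerset.1 hS)
    · exact Finset.image_injOn_powerset_of_injOn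
        (injOn_count_mem.mono (Finset.coe_subset.2 (innerEdges_subset U)))
  · rw [evalCode_of_not_isInterval (by simpa using hI)]
    exact Finset.sum_eq_zero fun T _ ↦
      not_not.1 (mt (isInterval_of_evalPair_stair_ne_zero hn) hI)

end SerreSum

section Diagonal

variable {V : Type*} [AddCommMonoid V] {U A B : Finset ℕ}

lemma blockUnion_map_relabel {a : List (Finset ℕ)} (ha : blockUnion a = Finset.Icc 1 U.card) :
    blockUnion (a.map (relabel U)) = U := by
  have hsub : ∀ s ∈ a, s ⊆ Finset.Icc 1 U.card := fun s hs x hx ↦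
    ha ▸ mem_blockUnion.2 ⟨s, hs, hx⟩
  ext x
  simp only [mem_blockUnion, List.mem_map, exists_exists_and_eq_and]
  constructor
  · rintro ⟨s, hs, hx⟩
    rw [relabel_eq_filter _ _ (hsub s hs)] at hx
    exact (Finset.mem_filter.1 hx).1
  · intro hx
    have hmem : Nat.count (· ∈ U) x + 1 ∈ blockUnion a := by
      have := count_mem_lt_card hx
      rw [ha, Finset.mem_Icc]
      omega
    obtain ⟨s, hs, hxs⟩ := mem_blockUnion.1 hmem
    refine ⟨s, hs, ?_⟩
    rw [relabel_eq_filter _ _ (hsub s hs)]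
    exact Finset.mem_filter.2 ⟨hx, hxs⟩

lemma blockUnion_of_mem_support_deltaTop {m : ℕ} {ab : List (Finset ℕ) × List (Finset ℕ)}
    (hab : ab ∈ (deltaTop (ZMod 2) m).support) :
    blockUnion ab.1 = Finset.Icc 1 m ∧ blockUnion ab.2 = Finset.Icc 1 m := by
  obtain rfl | hm := eq_or_ne m 1
  · rw [deltaTop, if_pos rfl] at hab
    obtain rfl := Finset.mem_singleton.1 (Finsupp.support_single_subset hab)
    simp [blockUnion]
  rw [deltaTop_eq_sum_configs hm] at hab
  obtain ⟨x, hx, hab⟩ := Finset.mem_biUnion.1 (Finsupp.support_finsetSum hab)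
  obtain rfl := Finset.mem_singleton.1 (Finsupp.support_single_subset hab)
  obtain ⟨r, c, h⟩ := isPlacement_of_mem_configs hx
  rw [faces, h.colFace_eq, h.rowFace_eq]
  constructor <;> refine blockUnion_fibers fun v hv ↦ ?_ <;> rw [Finset.mem_Icc] at hv
  · exact h.col_lt (by omega)
  · have := h.row_lt (k := v - 1) (by omega)
    omega

lemma evalPair_append (F : (ℕ → Fin 3) → (ℕ → Fin 3) → V) (a b a' b' : List (Finset ℕ)) :
    evalPair F (a ++ a', b ++ b') =
      evalPair (fun f g ↦ evalPair (fun f' g' ↦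
        F (glue (blockUnion a) f f') (glue (blockUnion b) g g')) (a', b')) (a, b) := by
  simp only [evalPair, List.forall_mem_append, relCode_append, ← ite_and, and_and_and_comm]

lemma linearCombination_evalPair [Module (ZMod 2) V] {ι : Type*}
    (G : ι → (ℕ → Fin 3) → (ℕ → Fin 3) → V) (t : ι →₀ ZMod 2)
    (ab : List (Finset ℕ) × List (Finset ℕ)) :
    Finsupp.linearCombination (ZMod 2) (fun x ↦ evalPair (G x) ab) t =
      evalPair (fun f g ↦ Finsupp.linearCombination (ZMod 2) (fun x ↦ G x f g) t) ab := by
  simp only [evalPair, Finsupp.linearCombination_apply]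
  split_ifs <;> simp

lemma linearCombination_deltaFun_cons [Module (ZMod 2) V]
    (Θ : List (Finset ℕ) × List (Finset ℕ) → V) (U : Finset ℕ) (L : List (Finset ℕ)) :
    Finsupp.linearCombination (ZMod 2) Θ (deltaFun (ZMod 2) (U :: L)) =
      Finsupp.linearCombination (ZMod 2) (fun ab ↦
        Finsupp.linearCombination (ZMod 2) (fun ab' ↦
          Θ ((relabelPair U ab).1 ++ ab'.1, (relabelPair U ab).2 ++ ab'.2))
          (deltaFun (ZMod 2) L)) (deltaTop (ZMod 2) U.card) := by
  simp only [deltaFun, map_finsuppSum, map_smul, Finsupp.linearCombination_single, one_smul,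
    Finsupp.linearCombination_apply _ (deltaTop (ZMod 2) U.card),
    Finsupp.linearCombination_apply _ (deltaFun (ZMod 2) L), Finsupp.smul_sum, mul_smul,
    Int.cast_pow, Int.cast_neg, Int.cast_one, CharTwo.neg_eq, one_pow, relabelPair, Prod.map]

lemma glue_piecewise {S T : Finset ℕ} {d f g : ℕ → Fin 3} (hS : S ⊆ U)
    (hT : ∀ x ∈ T, x ∉ U ∧ x + 1 ∉ U) :
    glue U (S.piecewise d f) (T.piecewise d g) = (S ∪ T).piecewise d (glue U f g) := by
  funext x
  simp only [glue, Finset.piecewise, Finset.mem_union]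
  have := @hS x
  have := hT x
  grind

lemma serreSum_empty (F : (ℕ → Fin 3) → (ℕ → Fin 3) → V) (c : ℕ → Fin 3) :
    serreSum ∅ F c = F c c := by
  have hc : (∅ \ ∅ : Finset ℕ).piecewise (0 : ℕ → Fin 3) c = c :=
    funext fun x ↦ Finset.piecewise_eq_of_notMem _ _ _ (by simp)
  rw [serreSum, Finset.powerset_empty, Finset.sum_singleton, hc, Finset.piecewise_empty]

lemma serreSum_glue (F : (ℕ → Fin 3) → (ℕ → Fin 3) → V) (f g : ℕ → Fin 3) (hA : A ⊆ U)
    (hB : ∀ x ∈ B, x ∉ U ∧ x + 1 ∉ U) :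
    serreSum (A ∪ B) F (glue U f g) =
      serreSum A (fun a a' ↦ serreSum B (fun b b' ↦ F (glue U a b) (glue U a' b')) g) f := by
  have hAB : Disjoint A B := Finset.disjoint_left.2 fun x hx hx' ↦ (hB x hx').1 (hA hx)
  simp only [serreSum, Finset.powerset_union, ← Finset.image_sup_product]
  rw [Finset.sum_image, Finset.sum_product]
  · refine Finset.sum_congr rfl fun S hS ↦ Finset.sum_congr rfl fun T hT ↦ ?_
    have hSA := Finset.mem_powerset.1 hS
    have hTB := Finset.mem_powerset.1 hT
    have hsdiff : (A ∪ B) \ (S ∪ T) = A \ S ∪ B \ T := by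
      ext x
      have := @hSA x
      have := @hTB x
      have := @Finset.disjoint_left.1 hAB x
      grind
    rw [glue_piecewise (Finset.sdiff_subset.trans hA) fun x hx ↦ hB x (Finset.sdiff_subset hx),
      glue_piecewise (hSA.trans hA) fun x hx ↦ hB x (hTB hx), ← hsdiff]
    rfl
  · rintro ⟨S, T⟩ hST ⟨S', T'⟩ hST' h
    simp only [Finset.coe_product, Set.mem_prod, Finset.mem_coe, Finset.mem_powerset] at hST hST'
    replace h : S ∪ T = S' ∪ T' := h
    ext x <;>
    · have := Finset.ext_iff.1 h x
      have := @hST.1 x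
      have := @hST.2 x
      have := @hST'.1 x
      have := @hST'.2 x
      have := @Finset.disjoint_left.1 hAB x
      grind

/-- The `x` for which `x` and `x + 1` lie in the same block of `u`. -/
def edges (u : List (Finset ℕ)) : Finset ℕ := blockUnion (u.map innerEdges)

lemma edges_cons (U : Finset ℕ) (L : List (Finset ℕ)) :
    edges (U :: L) = innerEdges U ∪ edges L := rfl

lemma mem_edges {u : List (Finset ℕ)} {x : ℕ} : x ∈ edges u ↔ ∃ s ∈ u, x ∈ s ∧ x + 1 ∈ s := by
  simp only [edges, mem_blockUnion, List.mem_map, exists_exists_and_eq_and, mem_innerEdges]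

lemma notMem_of_mem_edges {L : List (Finset ℕ)} (hL : ∀ s ∈ L, Disjoint U s) {x : ℕ}
    (hx : x ∈ edges L) : x ∉ U ∧ x + 1 ∉ U := by
  obtain ⟨s, hs, hx, hx'⟩ := mem_edges.1 hx
  exact ⟨Finset.disjoint_right.1 (hL s hs) hx, Finset.disjoint_right.1 (hL s hs) hx'⟩

lemma serreSum_evalCode (E : Finset ℕ) (c : ℕ → Fin 3) (u : List (Finset ℕ))
    (G : (ℕ → Fin 3) → (ℕ → Fin 3) → (ℕ → Fin 3) → V) :
    serreSum E (fun f g ↦ evalCode (G f g) u) c =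
      evalCode (fun d ↦ serreSum E (fun f g ↦ G f g d) c) u := by
  simp only [serreSum, evalCode]
  split_ifs <;> simp

lemma evalCode_serreSum_cons {L : List (Finset ℕ)} (hL : ∀ s ∈ L, Disjoint U s)
    (F : (ℕ → Fin 3) → (ℕ → Fin 3) → V) :
    evalCode (serreSum (edges (U :: L)) F) (U :: L) =
      evalCode (serreSum (innerEdges U) fun f g ↦
        evalCode (serreSum (edges L) fun f' g' ↦ F (glue U f f') (glue U g g')) L) [U] := by
  rw [← List.singleton_append, evalCode_append, List.singleton_append, blockUnion_singleton]
  congr 1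
  funext f
  rw [serreSum_evalCode]
  congr 1
  funext g
  rw [edges_cons, serreSum_glue _ _ _ (innerEdges_subset U) fun _ ↦ notMem_of_mem_edges hL]

theorem linearCombination_evalPair_deltaFun [Module (ZMod 2) V]
    (F : (ℕ → Fin 3) → (ℕ → Fin 3) → V) {u : List (Finset ℕ)} (hne : ∀ s ∈ u, s ≠ ∅)
    (hdisj : u.Pairwise Disjoint) :
    Finsupp.linearCombination (ZMod 2) (evalPair F) (deltaFun (ZMod 2) u) =
      evalCode (serreSum (edges u) F) u := by
  induction u generalizing F with
  | nil => simp [deltaFun, evalPair, evalCode, show edges [] = ∅ from rfl, serreSum_empty]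
  | cons U L ih =>
    obtain ⟨hU, hL⟩ := List.forall_mem_cons.1 hne
    obtain ⟨hUL, hdisjL⟩ := List.pairwise_cons.1 hdisj
    rw [linearCombination_deltaFun_cons, evalCode_serreSum_cons hUL,
      ← linearCombination_evalPair_deltaTop (Finset.nonempty_iff_ne_empty.2 hU)]
    refine Finsupp.sum_congr fun ab hab ↦ ?_
    obtain ⟨ha, hb⟩ := blockUnion_of_mem_support_deltaTop hab
    have ha' : blockUnion (relabelPair U ab).1 = U := blockUnion_map_relabel ha
    have hb' : blockUnion (relabelPair U ab).2 = U := blockUnion_map_relabel hb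
    simp only [evalPair_append, ha', hb', linearCombination_evalPair, ih _ hL hdisjL]

end Diagonal

section Boundary

variable {V : Type*} [AddCommMonoid V] {U A B M N : Finset ℕ} {x : ℕ}

/-- `F a` summed over the terms `a` of the boundary of a cube cell which has coordinates `[I]`
along `E`, and the coordinates `c` elsewhere. -/
noncomputable def bndSum (E : Finset ℕ) (F : (ℕ → Fin 3) → V) (c : ℕ → Fin 3) : V :=
  ∑ x ∈ E, (F (Function.update c x 0) + F (Function.update c x 1))

lemma glue_update_left {f g : ℕ → Fin 3} (hx : x ∈ U) (v : Fin 3) :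
    glue U (Function.update f x v) g = Function.update (glue U f g) x v := by
  funext y
  simp only [glue, Function.update_apply]
  grind

lemma glue_update_right {f g : ℕ → Fin 3} (hx : x ∉ U ∧ x + 1 ∉ U) (v : Fin 3) :
    glue U f (Function.update g x v) = Function.update (glue U f g) x v := by
  funext y
  simp only [glue, Function.update_apply]
  grind

lemma bndSum_glue (F : (ℕ → Fin 3) → V) (f g : ℕ → Fin 3) (hA : A ⊆ U)
    (hB : ∀ x ∈ B, x ∉ U ∧ x + 1 ∉ U) :
    bndSum (A ∪ B) F (glue U f g) =
      bndSum A (fun a ↦ F (glue U a g)) f + bndSum B (fun b ↦ F (glue U f b)) g := by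
  rw [bndSum, Finset.sum_union (Finset.disjoint_left.2 fun x hx hx' ↦ (hB x hx').1 (hA hx))]
  congr 1 <;> refine Finset.sum_congr rfl fun x hx ↦ ?_
  · simp only [glue_update_left (hA hx)]
  · simp only [glue_update_right (hB x hx)]

lemma bndSum_evalCode (E : Finset ℕ) (c : ℕ → Fin 3) (u : List (Finset ℕ))
    (G : (ℕ → Fin 3) → (ℕ → Fin 3) → V) :
    bndSum E (fun f ↦ evalCode (G f) u) c = evalCode (fun d ↦ bndSum E (fun f ↦ G f d) c) u := by
  simp only [bndSum, evalCode]
  split_ifs <;> simp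

lemma blockUnion_pair (hM : M ⊆ U) : blockUnion [M, U \ M] = U := by
  simp [blockUnion, Finset.union_sdiff_of_subset hM]

lemma relCode_pair_of_mem (hx : x ∈ innerEdges U) :
    relCode [M, U \ M] x = if (x ∈ M ↔ x + 1 ∈ M) then 2 else if x ∈ M then 0 else 1 := by
  obtain ⟨hxU, hxU'⟩ := mem_innerEdges.1 hx
  simp only [relCode, blockIdx, List.findIdx_cons, Finset.mem_sdiff, hxU, hxU']
  by_cases h : x ∈ M <;> by_cases h' : x + 1 ∈ M <;> simp [h, h']

lemma relCode_pair_of_notMem (hM : M ⊆ U) (hx : x ∉ innerEdges U) :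
    relCode [M, U \ M] x = relCode [U] x := by
  refine relCode_eq_of_blockUnion_eq ?_ ?_ <;> rw [blockUnion_pair hM]
  exacts [(blockUnion_singleton U).symm, mt mem_innerEdges.2 hx]

lemma isInterval_union (hM : IsInterval M) (hN : IsInterval N) (hx : x ∈ M) (hx' : x + 1 ∈ N) :
    IsInterval (M ∪ N) := by
  intro a ha b hb y hay hyb
  rw [Finset.mem_union] at ha hb ⊢
  obtain hyx | hxy := le_or_gt y x
  · exact ha.imp (fun ha ↦ hM a ha x hx y hay hyx) fun ha ↦ hN a ha _ hx' y hay (by omega)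
  · exact hb.imp (fun hb ↦ hM x hx b hb y hxy.le hyb) fun hb ↦ hN _ hx' b hb y hxy hyb

lemma evalCode_pair_symm (F : (ℕ → Fin 3) → V) (hU : ¬ IsInterval U) (hM : M ⊆ U) :
    evalCode F [U \ M, M] = evalCode F [M, U \ M] := by
  by_cases hI : IsInterval M ∧ IsInterval (U \ M)
  swap
  · rw [evalCode_of_not_isInterval (by simpa [and_comm] using hI),
      evalCode_of_not_isInterval (by simpa using hI)]
  rw [evalCode_of_isInterval (by simpa [and_comm] using hI),
    evalCode_of_isInterval (by simpa using hI)]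
  congr 1
  funext x
  have hM' : U \ (U \ M) = M := Finset.sdiff_sdiff_eq_self hM
  have hunion : M ∪ U \ M = U := Finset.union_sdiff_of_subset hM
  by_cases hx : x ∈ innerEdges U
  · have hxM : x ∈ M ↔ x + 1 ∈ M := by
      obtain ⟨hxU, hxU'⟩ := mem_innerEdges.1 hx
      have h := mt (isInterval_union hI.1 hI.2 (x := x))
      have h' := isInterval_union hI.2 hI.1 (x := x)
      simp only [Finset.union_comm, hunion, Finset.mem_sdiff] at h h'
      tauto
    have hxM' : x ∈ U \ M ↔ x + 1 ∈ U \ M := by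
      simp only [Finset.mem_sdiff, mem_innerEdges.1 hx, hxM]
    have h := relCode_pair_of_mem (M := U \ M) hx
    rw [hM'] at h
    rw [h, relCode_pair_of_mem hx, if_pos hxM, if_pos hxM']
  · have h := relCode_pair_of_notMem (M := U \ M) Finset.sdiff_subset hx
    rw [hM'] at h
    rw [h, relCode_pair_of_notMem hM hx]

/-- The two parts into which a set is divided between `x` and `x + 1`. -/
def cuts (U : Finset ℕ) (x : ℕ) : Finset (Finset ℕ) := {U.filter (· ≤ x), U.filter (x < ·)}

lemma mem_cuts : M ∈ cuts U x ↔ M = U.filter (· ≤ x) ∨ M = U.filter (x < ·) := by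
  rw [cuts, Finset.mem_insert, Finset.mem_singleton]

lemma sdiff_mem_cuts (hM : M ∈ cuts U x) : U \ M ∈ cuts U x := by
  rw [mem_cuts] at hM ⊢
  refine hM.symm.imp ?_ ?_ <;> rintro rfl <;> ext y <;> grind

lemma isInterval_of_mem_cuts (hU : IsInterval U) (hM : M ∈ cuts U x) : IsInterval M := by
  obtain rfl | rfl := mem_cuts.1 hM <;> intro a ha b hb y hay hyb <;>
    rw [Finset.mem_filter] at ha hb ⊢
  exacts [⟨hU a ha.1 b hb.1 y hay hyb, hyb.trans hb.2⟩,
    ⟨hU a ha.1 b hb.1 y hay hyb, ha.2.trans_le hay⟩]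

lemma mem_iff_succ_mem_of_mem_cuts (hM : M ∈ cuts U x) {y : ℕ} (hy : y ∈ innerEdges U) :
    (y ∈ M ↔ y + 1 ∈ M) ↔ y ≠ x := by
  obtain ⟨hy, hy'⟩ := mem_innerEdges.1 hy
  obtain rfl | rfl := mem_cuts.1 hM <;> simp only [Finset.mem_filter, hy, hy', true_and] <;> omega

lemma mem_ssubsets_of_mem_cuts (hM : M ∈ cuts U x) (hx : x ∈ innerEdges U) :
    M ∈ U.ssubsets.erase ∅ := by
  obtain ⟨hxU, hxU'⟩ := mem_innerEdges.1 hx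
  have hne := mt (mem_iff_succ_mem_of_mem_cuts hM hx).1 (not_not.2 rfl)
  have hsub : M ⊆ U := by obtain rfl | rfl := mem_cuts.1 hM <;> exact Finset.filter_subset _ _
  rw [Finset.mem_erase, Finset.mem_ssubsets, Finset.ssubset_iff_subset_ne]
  refine ⟨?_, hsub, ?_⟩ <;> rintro rfl <;> simp [hxU, hxU'] at hne

lemma exists_eq_filter_le (hU : IsInterval U) (hMU : M ⊆ U) (hM : IsInterval M)
    (hM' : IsInterval (U \ M)) {a b : ℕ} (ha : a ∈ M) (hb : b ∈ U \ M) (hab : a < b) :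
    ∃ x ∈ innerEdges U, M = U.filter (· ≤ x) := by
  have hMne : M.Nonempty := ⟨a, ha⟩
  have hx := M.max'_mem hMne
  have hmax : ∀ y ∈ M, y ≤ M.max' hMne := M.le_max'
  generalize M.max' hMne = x at hx hmax
  obtain ⟨hbU, hbM⟩ := Finset.mem_sdiff.1 hb
  have hxb : x < b := not_le.1 fun hbx ↦ hbM (hM a ha x hx b hab.le hbx)
  refine ⟨x, mem_innerEdges.2 ⟨hMU hx, hU x (hMU hx) b hbU _ x.le_succ hxb⟩, ?_⟩
  ext y
  rw [Finset.mem_filter]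
  refine ⟨fun hy ↦ ⟨hMU hy, hmax y hy⟩, fun ⟨hyU, hyx⟩ ↦ by_contra fun hy ↦ ?_⟩
  have hya : y < a := not_le.1 fun hay ↦ hy (hM a ha x hx y hay hyx)
  exact (Finset.mem_sdiff.1 (hM' y (Finset.mem_sdiff.2 ⟨hyU, hy⟩) b hb a hya.le hab.le)).2 ha

lemma exists_mem_cuts (hU : IsInterval U) (hMU : M ∈ U.ssubsets.erase ∅) (hM : IsInterval M)
    (hM' : IsInterval (U \ M)) : ∃ x ∈ innerEdges U, M ∈ cuts U x := by
  obtain ⟨hne, hss⟩ := Finset.mem_erase.1 hMU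
  obtain ⟨hMU, hUM⟩ := Finset.mem_ssubsets.1 hss
  obtain ⟨a, ha⟩ := Finset.nonempty_iff_ne_empty.2 hne
  obtain ⟨b, hb⟩ := Finset.sdiff_nonempty.2 hUM
  have hMM : U \ (U \ M) = M := Finset.sdiff_sdiff_eq_self hMU
  obtain hab | rfl | hba := lt_trichotomy a b
  · obtain ⟨x, hx, h⟩ := exists_eq_filter_le hU hMU hM hM' ha hb hab
    exact ⟨x, hx, mem_cuts.2 (.inl h)⟩
  · exact absurd ha (Finset.mem_sdiff.1 hb).2
  · obtain ⟨x, hx, h⟩ := exists_eq_filter_le hU Finset.sdiff_subset hM' (hMM.symm ▸ hM) hb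
      (hMM.symm ▸ ha) hba
    exact ⟨x, hx, hMM ▸ sdiff_mem_cuts (mem_cuts.2 (.inl h))⟩

lemma evalCode_of_mem_cuts (F : (ℕ → Fin 3) → V) (hU : IsInterval U) (hM : M ∈ cuts U x)
    (hx : x ∈ innerEdges U) :
    evalCode F [M, U \ M] = F (Function.update (relCode [U]) x (if x ∈ M then 0 else 1)) := by
  have hMU := (Finset.mem_ssubsets.1 (Finset.mem_erase.1 (mem_ssubsets_of_mem_cuts hM hx)).2).1
  rw [evalCode_of_isInterval
    (by simp [isInterval_of_mem_cuts hU hM, isInterval_of_mem_cuts hU (sdiff_mem_cuts hM)])]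
  congr 1
  funext y
  by_cases hy : y ∈ innerEdges U
  · rw [relCode_pair_of_mem hy, Function.update_apply, relCode_singleton hy]
    have := mem_iff_succ_mem_of_mem_cuts hM hy
    by_cases hyx : y = x
    · rw [if_neg (mt this.1 (not_not.2 hyx)), if_pos hyx, hyx]
    · rw [if_pos (this.2 hyx), if_neg hyx]
  · rw [relCode_pair_of_notMem hMU hy, Function.update_of_ne (ne_of_mem_of_not_mem hx hy).symm]

lemma sum_cuts (F : (ℕ → Fin 3) → V) (hU : IsInterval U) (hx : x ∈ innerEdges U) :
    ∑ M ∈ cuts U x, evalCode F [M, U \ M] =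
      F (Function.update (relCode [U]) x 0) + F (Function.update (relCode [U]) x 1) := by
  have hxU := (mem_innerEdges.1 hx).1
  have hne : U.filter (· ≤ x) ≠ U.filter (x < ·) := fun h ↦ by
    simpa [hxU] using Finset.ext_iff.1 h x
  rw [Finset.sum_congr rfl fun M hM ↦ evalCode_of_mem_cuts F hU hM hx, cuts, Finset.sum_pair hne]
  simp [hxU]

lemma sum_ssubsets_of_isInterval (F : (ℕ → Fin 3) → V) (hU : IsInterval U) :
    ∑ M ∈ U.ssubsets.erase ∅, evalCode F [M, U \ M] =
      bndSum (innerEdges U) F (relCode [U]) := by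
  have hdisj : (innerEdges U : Set ℕ).PairwiseDisjoint (cuts U) := fun x hx y _ hxy ↦
    Finset.disjoint_left.2 fun M hMx hMy ↦ (mem_iff_succ_mem_of_mem_cuts hMx hx).1
      ((mem_iff_succ_mem_of_mem_cuts hMy hx).2 hxy) rfl
  rw [bndSum, ← Finset.sum_congr rfl fun x hx ↦ sum_cuts F hU hx, ← Finset.sum_biUnion hdisj]
  symm
  refine Finset.sum_subset (Finset.biUnion_subset.2 fun x hx M hM ↦
    mem_ssubsets_of_mem_cuts hM hx) fun M hM hMcuts ↦ evalCode_of_not_isInterval fun hI ↦ ?_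
  exact hMcuts (Finset.mem_biUnion.2
    (exists_mem_cuts hU hM (hI M (by simp)) (hI (U \ M) (by simp))))

variable [Module (ZMod 2) V]

lemma sum_ssubsets_of_not_isInterval (F : (ℕ → Fin 3) → V) (hU : ¬ IsInterval U) :
    ∑ M ∈ U.ssubsets.erase ∅, evalCode F [M, U \ M] = 0 := by
  refine Finset.sum_involution (fun M _ ↦ U \ M) ?_ ?_ ?_ ?_ <;> intro M hM <;>
    obtain ⟨hne, hss⟩ := Finset.mem_erase.1 hM <;>
    obtain ⟨hMU, hUM⟩ := Finset.mem_ssubsets.1 hss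
  · rw [Finset.sdiff_sdiff_eq_self hMU, evalCode_pair_symm F hU hMU, ← two_smul (ZMod 2),
      CharTwo.two_eq_zero (R := ZMod 2), zero_smul]
  · obtain ⟨x, hx⟩ := Finset.nonempty_iff_ne_empty.2 hne
    exact fun _ h ↦ (Finset.mem_sdiff.1 (h.symm ▸ hx)).2 hx
  · exact Finset.mem_erase.2 ⟨Finset.sdiff_eq_empty_iff_subset.not.2 hUM,
      Finset.mem_ssubsets.2 (Finset.sdiff_ssubset hMU (Finset.nonempty_iff_ne_empty.2 hne))⟩
  · exact Finset.sdiff_sdiff_eq_self hMU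

lemma sum_ssubsets (F : (ℕ → Fin 3) → V) (U : Finset ℕ) :
    ∑ M ∈ U.ssubsets.erase ∅, evalCode F [M, U \ M] =
      evalCode (bndSum (innerEdges U) F) [U] := by
  by_cases hU : IsInterval U
  · rw [sum_ssubsets_of_isInterval F hU, evalCode_of_isInterval (by simpa using hU)]
  · rw [sum_ssubsets_of_not_isInterval F hU, evalCode_of_not_isInterval (by simpa using hU)]

lemma linearCombination_bnd (Φ : List (Finset ℕ) → V) (u : List (Finset ℕ)) :
    Finsupp.linearCombination (ZMod 2) Φ (bnd (ZMod 2) u) =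
      ∑ k ∈ Finset.range u.length, ∑ M ∈ (u.getD k ∅).ssubsets.erase ∅,
        Φ (u.take k ++ M :: (u.getD k ∅ \ M) :: u.drop (k + 1)) := by
  rw [bnd, map_sum]
  refine Finset.sum_congr rfl fun k _ ↦ ?_
  rw [← Finset.sum_filter, map_sum]
  refine Finset.sum_congr ?_ fun M _ ↦ ?_
  · ext M
    simp only [Finset.mem_filter, Finset.mem_powerset, Finset.mem_erase, Finset.mem_ssubsets,
      Finset.ssubset_iff_subset_ne]
    tauto
  · simp [shuffSgn, psgn, CharTwo.neg_eq]

lemma linearCombination_bnd_cons (Φ : List (Finset ℕ) → V) (U : Finset ℕ)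
    (L : List (Finset ℕ)) :
    Finsupp.linearCombination (ZMod 2) Φ (bnd (ZMod 2) (U :: L)) =
      ∑ M ∈ U.ssubsets.erase ∅, Φ (M :: (U \ M) :: L) +
        Finsupp.linearCombination (ZMod 2) (fun v ↦ Φ (U :: v)) (bnd (ZMod 2) L) := by
  rw [linearCombination_bnd, linearCombination_bnd, List.length_cons, Finset.sum_range_succ',
    add_comm]
  simp

lemma linearCombination_evalCode {ι : Type*} (G : ι → (ℕ → Fin 3) → V) (t : ι →₀ ZMod 2)
    (u : List (Finset ℕ)) :
    Finsupp.linearCombination (ZMod 2) (fun x ↦ evalCode (G x) u) t =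
      evalCode (fun f ↦ Finsupp.linearCombination (ZMod 2) (fun x ↦ G x f) t) u := by
  simp only [evalCode, Finsupp.linearCombination_apply]
  split_ifs <;> simp

theorem linearCombination_evalCode_bnd (F : (ℕ → Fin 3) → V) {u : List (Finset ℕ)}
    (hdisj : u.Pairwise Disjoint) :
    Finsupp.linearCombination (ZMod 2) (evalCode F) (bnd (ZMod 2) u) =
      evalCode (bndSum (edges u) F) u := by
  induction u generalizing F with
  | nil => simp [bnd, evalCode, bndSum, edges, blockUnion]
  | cons U L ih =>
    obtain ⟨hUL, hL⟩ := List.pairwise_cons.1 hdisj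
    have hleft : ∑ M ∈ U.ssubsets.erase ∅, evalCode F (M :: (U \ M) :: L) =
        evalCode (fun f ↦ evalCode (fun g ↦
          bndSum (innerEdges U) (fun a ↦ F (glue U a g)) f) L) [U] := by
      simp only [← bndSum_evalCode]
      rw [← sum_ssubsets]
      refine Finset.sum_congr rfl fun M hM ↦ ?_
      have hMU := (Finset.mem_ssubsets.1 (Finset.mem_erase.1 hM).2).1
      have h := evalCode_append F [M, U \ M] L
      rw [blockUnion_pair hMU] at h
      exact h
    have hright : Finsupp.linearCombination (ZMod 2) (fun v ↦ evalCode F (U :: v))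
        (bnd (ZMod 2) L) =
        evalCode (fun f ↦ evalCode (bndSum (edges L) fun b ↦ F (glue U f b)) L) [U] := by
      have h (v : List (Finset ℕ)) := evalCode_append F [U] v
      simp only [List.singleton_append, blockUnion_singleton] at h
      simp only [h, linearCombination_evalCode, ih _ hL]
    rw [linearCombination_bnd_cons, hleft, hright, edges_cons,
      ← List.singleton_append (l := L), evalCode_append, blockUnion_singleton]
    simp only [bndSum_glue F _ _ (innerEdges_subset U) fun _ ↦ notMem_of_mem_edges hUL]
    simp only [evalCode]
    split_ifs <;> simp

end Boundary

section Projection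

variable {n : ℕ} {u : List (Finset ℕ)} {x : ℕ}

/-- The coordinates of a cell of `I^n` given by a function on all natural numbers; the coordinate
`i : Fin n` compares `i + 1` and `i + 2`. -/
def cubeCode (n : ℕ) (f : ℕ → Fin 3) (i : Fin n) : Fin 3 := f (i + 1)

/-- The `x` for which the coordinate comparing `x` and `x + 1` is `[I]`. -/
noncomputable def cubeEdges (c : Fin n → Fin 3) : Finset ℕ :=
  (Finset.univ.filter (c · = 2)).image fun i : Fin n ↦ (i : ℕ) + 1

lemma mem_cubeEdges {c : Fin n → Fin 3} : x ∈ cubeEdges c ↔ ∃ i, c i = 2 ∧ (i : ℕ) + 1 = x := by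
  simp only [cubeEdges, Finset.mem_image, Finset.mem_filter, Finset.mem_univ, true_and]

lemma injective_val_add_one : Function.Injective fun i : Fin n ↦ (i : ℕ) + 1 := fun _ _ h ↦
  Fin.ext (Nat.succ_injective h)

lemma rhoBasis_eq (n : ℕ) (u : List (Finset ℕ)) :
    rhoBasis n u = evalCode (fun f ↦ Finsupp.single (cubeCode n f) 1) u := rfl

lemma rhoMap_eq (n : ℕ) (t : List (Finset ℕ) →₀ ZMod 2) :
    rhoMap n t = Finsupp.linearCombination (ZMod 2)
      (evalCode fun f ↦ Finsupp.single (cubeCode n f) (1 : ZMod 2)) t := rfl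

lemma rhoTensor_eq (n : ℕ) (t : (List (Finset ℕ) × List (Finset ℕ)) →₀ ZMod 2) :
    rhoTensor n t = Finsupp.linearCombination (ZMod 2)
      (evalPair fun f g ↦ Finsupp.single (cubeCode n f, cubeCode n g) (1 : ZMod 2)) t := by
  rw [rhoTensor, Finsupp.linearCombination_apply]
  congr 1
  funext ab k
  simp only [rhoBasis_eq, evalCode, evalPair, ite_and]
  split_ifs
  · rw [Finsupp.sum_single_index (by simp), Finsupp.sum_single_index (by simp), one_mul, one_smul]
  all_goals simp

lemma cubeBndMap_rhoBasis (n : ℕ) (u : List (Finset ℕ)) :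
    cubeBndMap n (rhoBasis n u) = evalCode (fun f ↦ cubeBnd n (cubeCode n f)) u := by
  simp only [cubeBndMap, rhoBasis_eq, evalCode]
  split_ifs <;> simp

lemma cubeDiagMap_rhoBasis (n : ℕ) (u : List (Finset ℕ)) :
    cubeDiagMap n (rhoBasis n u) = evalCode (fun f ↦ cubeDiag n (cubeCode n f)) u := by
  simp only [cubeDiagMap, rhoBasis_eq, evalCode]
  split_ifs <;> simp

lemma cubeCode_update (f : ℕ → Fin 3) (i : Fin n) (v : Fin 3) :
    cubeCode n (Function.update f (i + 1) v) = Function.update (cubeCode n f) i v := by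
  funext j
  simp [cubeCode, Function.update_apply, Fin.ext_iff]

lemma cubeBnd_cubeCode (n : ℕ) (f : ℕ → Fin 3) :
    cubeBnd n (cubeCode n f) =
      bndSum (cubeEdges (cubeCode n f)) (fun g ↦ Finsupp.single (cubeCode n g) 1) f := by
  rw [cubeBnd, bndSum, cubeEdges, Finset.sum_image injective_val_add_one.injOn,
    Finset.sum_filter]
  simp only [cubeCode_update]

lemma cubeCode_piecewise (f : ℕ → Fin 3) (S : Finset (Fin n)) (v : ℕ → Fin 3) (i : Fin n) :
    cubeCode n ((S.image fun i : Fin n ↦ (i : ℕ) + 1).piecewise v f) i =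
      if i ∈ S then v (i + 1) else cubeCode n f i := by
  simp only [cubeCode, Finset.piecewise, injective_val_add_one.mem_finset_image]

lemma cubeDiag_cubeCode (n : ℕ) (f : ℕ → Fin 3) :
    cubeDiag n (cubeCode n f) = serreSum (cubeEdges (cubeCode n f))
      (fun g h ↦ Finsupp.single (cubeCode n g, cubeCode n h) 1) f := by
  rw [cubeDiag, serreSum, cubeEdges, Finset.powerset_image,
    Finset.sum_image (Finset.image_injOn_powerset_of_injOn injective_val_add_one.injOn)]
  refine Finset.sum_congr rfl fun S hS ↦ ?_
  have hS2 : ∀ i ∈ S, cubeCode n f i = 2 := fun i hi ↦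
    (Finset.mem_filter.1 (Finset.mem_powerset.1 hS hi)).2
  rw [← Finset.image_sdiff _ _ injective_val_add_one]
  congr 2 <;> funext i <;> rw [cubeCode_piecewise] <;>
    simp only [Finset.mem_sdiff, Finset.mem_filter, Finset.mem_univ, true_and, Pi.zero_apply,
      Pi.one_apply] <;> have := hS2 i <;> grind

lemma mem_getElem_blockIdx (h : blockIdx u x < u.length) : x ∈ u[blockIdx u x] :=
  of_decide_eq_true (List.findIdx_getElem (w := h))

lemma blockIdx_eq_of_mem (hdisj : u.Pairwise Disjoint) {i : ℕ} (hi : i < u.length)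
    (hx : x ∈ u[i]) : blockIdx u x = i := by
  have hlt : blockIdx u x < u.length :=
    blockIdx_lt_length_iff.2 (mem_blockUnion.2 ⟨_, List.getElem_mem hi, hx⟩)
  have hmem := mem_getElem_blockIdx hlt
  have hdisj' := List.pairwise_iff_getElem.1 hdisj
  obtain h | h | h := lt_trichotomy (blockIdx u x) i
  · exact (Finset.disjoint_left.1 (hdisj' _ _ hlt hi h) hmem hx).elim
  · exact h
  · exact (Finset.disjoint_left.1 (hdisj' _ _ hi hlt h) hx hmem).elim

lemma relCode_eq_two_iff : relCode u x = 2 ↔ blockIdx u x = blockIdx u (x + 1) := by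
  rw [relCode]
  split_ifs <;> simp_all

lemma mem_edges_iff_relCode_eq_two (hdisj : u.Pairwise Disjoint) (hx : x ∈ blockUnion u)
    (hx' : x + 1 ∈ blockUnion u) : x ∈ edges u ↔ relCode u x = 2 := by
  rw [mem_edges, relCode_eq_two_iff]
  refine ⟨fun ⟨s, hs, h, h'⟩ ↦ ?_, fun h ↦ ?_⟩
  · obtain ⟨i, hi, rfl⟩ := List.getElem_of_mem hs
    rw [blockIdx_eq_of_mem hdisj hi h, blockIdx_eq_of_mem hdisj hi h']
  · have hmem' := mem_getElem_blockIdx (blockIdx_lt_length_iff.2 hx')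
    simp only [← h] at hmem'
    exact ⟨_, List.getElem_mem _, mem_getElem_blockIdx (blockIdx_lt_length_iff.2 hx), hmem'⟩

lemma edges_eq_cubeEdges (hu : IsOrderedPartition (Finset.Icc 1 (n + 1)) u) :
    edges u = cubeEdges (cubeCode n (relCode u)) := by
  obtain ⟨-, hdisj, hunion⟩ := hu
  have hmem (y : ℕ) : y ∈ blockUnion u ↔ 1 ≤ y ∧ y ≤ n + 1 := by
    rw [← Finset.mem_Icc, ← hunion, blockUnion]
  have hiff (y : ℕ) (hy : 1 ≤ y) (hy' : y + 1 ≤ n + 1) : y ∈ edges u ↔ relCode u y = 2 :=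
    mem_edges_iff_relCode_eq_two hdisj ((hmem _).2 ⟨hy, by omega⟩) ((hmem _).2 ⟨by omega, hy'⟩)
  ext y
  rw [mem_cubeEdges]
  constructor
  · intro h
    obtain ⟨s, hs, hy, hy'⟩ := mem_edges.1 h
    have := (hmem y).1 (mem_blockUnion.2 ⟨s, hs, hy⟩)
    have := (hmem _).1 (mem_blockUnion.2 ⟨s, hs, hy'⟩)
    obtain ⟨i, rfl⟩ := Nat.exists_eq_add_of_le' (show 1 ≤ y by omega)
    exact ⟨⟨i, by omega⟩, (hiff _ (by omega) (by omega)).1 h, rfl⟩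
  · rintro ⟨i, hi, rfl⟩
    exact (hiff _ (by omega) (by omega)).2 hi

end Projection

/-- Over `ℤ/2`, the map induced by the canonical cellular projection
`P_{n+1} → I^n` is a chain map and commutes with the diagonals (it is a map of
differential graded coalgebras).  Both claims are stated on basis elements, i.e. on
every ordered partition of `{1,…,n+1}`. -/
theorem statement10 (n : ℕ) (hn : 1 ≤ n) (u : List (Finset ℕ))
    (hu : IsOrderedPartition (Finset.Icc 1 (n+1)) u) :
    rhoMap n (bnd (ZMod 2) u) = cubeBndMap n (rhoBasis n u) ∧
    rhoTensor n (deltaFun (ZMod 2) u) = cubeDiagMap n (rhoBasis n u) := by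
  have ⟨hne, hdisj, _⟩ := hu
  rw [rhoMap_eq, rhoTensor_eq, cubeBndMap_rhoBasis, cubeDiagMap_rhoBasis,
    linearCombination_evalCode_bnd _ hdisj, linearCombination_evalPair_deltaFun _ hne hdisj,
    edges_eq_cubeEdges hu]
  exact ⟨evalCode_congr (cubeBnd_cubeCode n _).symm, evalCode_congr (cubeDiag_cubeCode n _).symm⟩

end SU
end Cube
end

section
/- For all n ≥ 1 and r, s, t ≥ 1 with r + s + t = n + 2, and for every ordered partition u of {1,…,n}: writing Δ_{r+s−1,t}(u) = (u′, u″) and Δ_{r,s}(u′) = (u′_1, u′_2), and writing Δ_{r,s+t−1}(u) = (w′, w″) and Δ_{s,t}(w″) = (w″_1, w″_2), one has (u′_1, u′_2, u″) = (w′, w″_1, w″_2); i.e. the projections Δ_{r,s} are coassociative: (Δ_{r,s} × 1) ∘ Δ_{r+s−1,t} = (1 × Δ_{s,t}) ∘ Δ_{r,s+t−1}. -/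
namespace SU

/-- delete empty blocks. -/
def remEmpty (L : List (Finset ℕ)) : List (Finset ℕ) :=
  L.filter (fun s => decide (s ≠ ∅))

/-- translate all blocks down by `z`. -/
def shiftDown (L : List (Finset ℕ)) (z : ℕ) : List (Finset ℕ) :=
  L.map (fun s => s.image (fun x => x - z))

/-- The projection `Δ_{r,s}` (`r + s = m + 1`) from ordered partitions of `{1,…,m}` to
pairs of ordered partitions of `{1,…,r}` and `{1,…,s}`:
(1) if some block contains `{1,…,r}`, the first factor is `{1,…,r}` and the second is
obtained by deleting `{1,…,r−1}` and translating by `r−1`;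
(2) otherwise, if some block contains `{m−s+1,…,m}`, the second factor is `{1,…,s}` and
the first is obtained by deleting `{m−s+2,…,m}`;
(3) otherwise both deletions are performed, one on each factor.
Empty blocks are deleted throughout. -/
def deltaRS (m r s : ℕ) (L : List (Finset ℕ)) :
    List (Finset ℕ) × List (Finset ℕ) :=
  if L.any (fun A => decide (Finset.Icc 1 r ⊆ A)) then
    ([Finset.Icc 1 r],
      remEmpty (shiftDown (L.map (fun A => A \ Finset.Icc 1 (r-1))) (r-1)))
  else if L.any (fun A => decide (Finset.Icc (m - s + 1) m ⊆ A)) then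
    (remEmpty (L.map (fun A => A \ Finset.Icc (m - s + 2) m)), [Finset.Icc 1 s])
  else
    (remEmpty (L.map (fun A => A \ Finset.Icc (m - s + 2) m)),
     remEmpty (shiftDown (L.map (fun A => A \ Finset.Icc 1 (r-1))) (r-1)))

/-! On ordered partitions the three cases of `Δ_{r,s}` collapse into a single formula. If
`{1,…,r}` lies inside one block, then restricting to `{1,…,r}` already gives the one-block
partition, and likewise for the last `s` elements. Hence `Δ_{r,s}` always restricts to the
windows `{1,…,r}` and `{r,…,m}` (renumbered from `1`). Both sides of coassociativity then
restrict to the same three windows, because a window of a window is a window. -/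

section Blocks

variable {S T : Finset ℕ} {f : ℕ → ℕ} {L : List (Finset ℕ)}

theorem mem_remEmpty {B : Finset ℕ} : B ∈ remEmpty L ↔ B ∈ L ∧ B ≠ ∅ := by
  simp [remEmpty]

theorem remEmpty_map_remEmpty {g : Finset ℕ → Finset ℕ} (hg : g ∅ = ∅) (L : List (Finset ℕ)) :
    remEmpty ((remEmpty L).map g) = remEmpty (L.map g) := by
  have ne_empty_of_map (A : Finset ℕ) (h : g A ≠ ∅) : A ≠ ∅ := fun hA => h (hA ▸ hg)
  simp only [remEmpty, List.filter_map, List.filter_filter]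
  congr 1
  refine List.filter_congr fun A _ => ?_
  simpa using ne_empty_of_map A

theorem mem_foldr_union {x : ℕ} : x ∈ L.foldr (· ∪ ·) ∅ ↔ ∃ A ∈ L, x ∈ A := by
  induction L with
  | nil => simp
  | cons A L ih => simp [ih]

theorem IsOrderedPartition.mem_iff (hL : IsOrderedPartition S L) {x : ℕ} :
    x ∈ S ↔ ∃ A ∈ L, x ∈ A := by
  rw [← hL.2.2, mem_foldr_union]

theorem IsOrderedPartition.subset (hL : IsOrderedPartition S L) {A : Finset ℕ} (hA : A ∈ L) :
    A ⊆ S :=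
  fun _ hx => hL.mem_iff.2 ⟨A, hA, hx⟩

theorem IsOrderedPartition.eq_singleton (hL : IsOrderedPartition S L) (hS : S ∈ L) :
    L = [S] := by
  have not_disjoint (B : Finset ℕ) (hB : B ∈ L) : ¬Disjoint S B := fun h =>
    hL.1 B hB (Finset.disjoint_self_iff_empty B |>.1 (h.mono_left (hL.subset hB)))
  obtain ⟨before, after, rfl⟩ := List.append_of_mem hS
  obtain ⟨-, hafter, hbefore⟩ := List.pairwise_append.1 hL.2.1
  have before_nil : before = [] := List.eq_nil_iff_forall_not_mem.2 fun B hB =>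
    not_disjoint B (by simp [hB]) (hbefore B hB S (by simp)).symm
  have after_nil : after = [] := List.eq_nil_iff_forall_not_mem.2 fun B hB =>
    not_disjoint B (by simp [hB]) ((List.pairwise_cons.1 hafter).1 B hB)
  simp [before_nil, after_nil]

/-- The ordered partition of `T` induced by an ordered partition `L` along `f`: its blocks are
the nonempty sets among the `{x ∈ T | f x ∈ A}`, in the order in which `A` runs through `L`. Only
the values of `f` on `T` matter. -/
def pullback (f : ℕ → ℕ) (T : Finset ℕ) (L : List (Finset ℕ)) : List (Finset ℕ) :=
  remEmpty (L.map fun A => {x ∈ T | f x ∈ A})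

theorem mem_pullback {B : Finset ℕ} :
    B ∈ pullback f T L ↔ (∃ A ∈ L, {x ∈ T | f x ∈ A} = B) ∧ B ≠ ∅ := by
  rw [pullback, mem_remEmpty, List.mem_map]

protected theorem IsOrderedPartition.pullback (hL : IsOrderedPartition S L)
    (hf : Set.MapsTo f T S) : IsOrderedPartition T (pullback f T L) := by
  refine ⟨fun B hB => (mem_pullback.1 hB).2, ?_, ?_⟩
  · refine List.Pairwise.filter _ (List.pairwise_map.2 (hL.2.1.imp fun {A B} hAB => ?_))
    refine Finset.disjoint_left.2 fun x hxA hxB => ?_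
    exact Finset.disjoint_left.1 hAB (Finset.mem_filter.1 hxA).2 (Finset.mem_filter.1 hxB).2
  · ext x
    rw [mem_foldr_union]
    constructor
    · rintro ⟨B, hB, hx⟩
      obtain ⟨⟨A, -, rfl⟩, -⟩ := mem_pullback.1 hB
      exact (Finset.mem_filter.1 hx).1
    · intro hx
      obtain ⟨A, hA, hfx⟩ := hL.mem_iff.1 (hf hx)
      have hxA : x ∈ ({y ∈ T | f y ∈ A} : Finset ℕ) := Finset.mem_filter.2 ⟨hx, hfx⟩
      exact ⟨_, mem_pullback.2 ⟨⟨A, hA, rfl⟩, Finset.ne_empty_of_mem hxA⟩, hxA⟩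

theorem IsOrderedPartition.pullback_eq_singleton (hL : IsOrderedPartition S L)
    {A : Finset ℕ} (hA : A ∈ L) (hT : T.Nonempty) (hf : Set.MapsTo f T A) :
    pullback f T L = [T] :=
  (hL.pullback (hf.mono_right (hL.subset hA))).eq_singleton
    (mem_pullback.2 ⟨⟨A, hA, Finset.filter_true_of_mem hf⟩, hT.ne_empty⟩)

theorem pullback_pullback {T' : Finset ℕ} (hf : Set.MapsTo f T T') (g : ℕ → ℕ)
    (L : List (Finset ℕ)) : pullback f T (pullback g T' L) = pullback (g ∘ f) T L := by
  have filter_filter_comp (A : Finset ℕ) :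
      ({x ∈ T | f x ∈ ({y ∈ T' | g y ∈ A} : Finset ℕ)} : Finset ℕ) =
        {x ∈ T | (g ∘ f) x ∈ A} :=
    Finset.filter_congr fun x hx => by
      rw [Finset.mem_filter, and_iff_right (Finset.mem_coe.1 (hf hx)), Function.comp_apply]
  rw [pullback, pullback, remEmpty_map_remEmpty (by simp), List.map_map]
  exact congrArg remEmpty (List.map_congr_left fun A _ => filter_filter_comp A)

end Blocks

section Windows

variable {m k z r s : ℕ} {L : List (Finset ℕ)}

/-- The restriction of an ordered partition to the `k` consecutive integers `{z+1,…,z+k}`,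
renumbered so as to be an ordered partition of `{1,…,k}`. -/
def window (z k : ℕ) (L : List (Finset ℕ)) : List (Finset ℕ) :=
  pullback (· + z) (Finset.Icc 1 k) L

theorem mapsTo_add_Icc (h : z + k ≤ m) :
    Set.MapsTo (· + z) (Finset.Icc 1 k : Finset ℕ) (Finset.Icc 1 m : Finset ℕ) := by
  intro x hx
  simp only [Finset.mem_coe, Finset.mem_Icc] at hx ⊢
  omega

protected theorem IsOrderedPartition.window (hL : IsOrderedPartition (Finset.Icc 1 m) L)
    (h : z + k ≤ m) : IsOrderedPartition (Finset.Icc 1 k) (window z k L) :=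
  hL.pullback (mapsTo_add_Icc h)

theorem window_window (h : z + k ≤ m) (y : ℕ) (L : List (Finset ℕ)) :
    window z k (window y m L) = window (z + y) k L := by
  rw [window, window, pullback_pullback (mapsTo_add_Icc h), window]
  exact congrArg (pullback · _ L) (funext fun x => add_assoc x z y)

theorem IsOrderedPartition.window_eq_singleton (hL : IsOrderedPartition (Finset.Icc 1 m) L)
    {A : Finset ℕ} (hA : A ∈ L) (hk : 1 ≤ k) (h : Finset.Icc (z + 1) (z + k) ⊆ A) :
    window z k L = [Finset.Icc 1 k] := by
  refine hL.pullback_eq_singleton hA (Finset.nonempty_Icc.2 hk) fun x hx => h ?_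
  simp only [Finset.mem_coe, Finset.mem_Icc] at hx ⊢
  omega

theorem IsOrderedPartition.remEmpty_map_sdiff_Icc
    (hL : IsOrderedPartition (Finset.Icc 1 m) L) (k : ℕ) :
    remEmpty (L.map fun A => A \ Finset.Icc (k + 1) m) = window 0 k L := by
  refine congrArg remEmpty (List.map_congr_left fun A hA => ?_)
  ext x
  have bounds (hx : x ∈ A) : 1 ≤ x ∧ x ≤ m := Finset.mem_Icc.1 (hL.subset hA hx)
  simp only [Finset.mem_sdiff, Finset.mem_filter, Finset.mem_Icc, add_zero]
  constructor
  · rintro ⟨hxA, hxk⟩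
    have := bounds hxA
    exact ⟨by omega, hxA⟩
  · rintro ⟨hxk, hxA⟩
    exact ⟨hxA, by omega⟩

theorem IsOrderedPartition.remEmpty_shiftDown_map_sdiff_Icc
    (hL : IsOrderedPartition (Finset.Icc 1 m) L) (z : ℕ) :
    remEmpty (shiftDown (L.map fun A => A \ Finset.Icc 1 z) z) = window z (m - z) L := by
  rw [shiftDown, List.map_map]
  refine congrArg remEmpty (List.map_congr_left fun A hA => ?_)
  ext x
  simp only [Function.comp_apply, Finset.mem_image, Finset.mem_sdiff, Finset.mem_filter,
    Finset.mem_Icc]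
  constructor
  · rintro ⟨y, ⟨hyA, hyz⟩, rfl⟩
    have hy := Finset.mem_Icc.1 (hL.subset hA hyA)
    exact ⟨by omega, by rwa [Nat.sub_add_cancel (by omega)]⟩
  · rintro ⟨hx, hxA⟩
    exact ⟨x + z, ⟨hxA, by omega⟩, Nat.add_sub_cancel x z⟩

theorem IsOrderedPartition.deltaRS_eq (hL : IsOrderedPartition (Finset.Icc 1 m) L)
    (hr : 1 ≤ r) (hs : 1 ≤ s) (h : r + s = m + 1) :
    deltaRS m r s L = (window 0 r L, window (r - 1) s L) := by
  have start_last : m - s + 1 = r - 1 + 1 := by omega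
  have end_last : r - 1 + s = m := by omega
  have first_factor := hL.remEmpty_map_sdiff_Icc r
  have second_factor := hL.remEmpty_shiftDown_map_sdiff_Icc (r - 1)
  rw [show r + 1 = m - s + 2 by omega] at first_factor
  rw [show m - (r - 1) = s by omega] at second_factor
  rw [deltaRS, first_factor, second_factor]
  simp only [List.any_eq_true, decide_eq_true_eq]
  split_ifs with hfirst hlast
  · obtain ⟨A, hA, hsub⟩ := hfirst
    rw [hL.window_eq_singleton hA hr (by simpa using hsub)]
  · obtain ⟨A, hA, hsub⟩ := hlast
    rw [hL.window_eq_singleton hA hs (by rwa [end_last, ← start_last])]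
  · rfl

end Windows

/-- Coassociativity of the projections `Δ_{r,s}`:
`(Δ_{r,s} × 1) ∘ Δ_{r+s−1,t} = (1 × Δ_{s,t}) ∘ Δ_{r,s+t−1}` on every ordered partition
of `{1,…,n}`, for `r + s + t = n + 2`. -/
theorem statement12 (n r s t : ℕ) (hn : 1 ≤ n) (hr : 1 ≤ r) (hs : 1 ≤ s) (ht : 1 ≤ t)
    (hsum : r + s + t = n + 2) (L : List (Finset ℕ))
    (hL : IsOrderedPartition (Finset.Icc 1 n) L) :
    ((deltaRS (r+s-1) r s (deltaRS n (r+s-1) t L).1).1,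
     (deltaRS (r+s-1) r s (deltaRS n (r+s-1) t L).1).2,
     (deltaRS n (r+s-1) t L).2) =
    ((deltaRS n r (s+t-1) L).1,
     (deltaRS (s+t-1) s t (deltaRS n r (s+t-1) L).2).1,
     (deltaRS (s+t-1) s t (deltaRS n r (s+t-1) L).2).2) := by
  have hleft := hL.window (z := 0) (k := r + s - 1) (by omega)
  have hright := hL.window (z := r - 1) (k := s + t - 1) (by omega)
  rw [hL.deltaRS_eq (r := r + s - 1) (s := t) (by omega) ht (by omega),
    hL.deltaRS_eq (r := r) (s := s + t - 1) hr (by omega) (by omega)]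
  dsimp only
  rw [hleft.deltaRS_eq hr hs (by omega), hright.deltaRS_eq hs ht (by omega)]
  dsimp only
  rw [window_window (by omega), window_window (by omega), window_window (by omega),
    window_window (by omega), show s - 1 + (r - 1) = r + s - 1 - 1 by omega]
  simp only [add_zero, zero_add]

end SU
end

section
/- For every n ≥ 2: (i) for every v ∈ {0,1}^{n−1}, the permutation γ_n(v) is a cubical vertex, and (ii) for every σ ∈ S_n, γ_n(ρ_n(σ)) = σ if and only if σ is a cubical vertex. Consequently γ_n and ρ_n restrict to mutually inverse bijections between {0,1}^{n−1} and the set of cubical vertices of S_n. -/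
/-!
In a cubical vertex every letter is smaller than all letters on its left or smaller than all letters
on its right, so the largest letter sits at an end of the word. Removing it leaves a cubical vertex
on one letter fewer; inductively, every cubical vertex is a value of `γ_n`. The later steps of the
construction of `γ_n(v)` do not change the relative order of the letters already placed, so
`ρ_n(γ_n(v)) = v`. Hence `γ_n ∘ ρ_n` fixes exactly the values of `γ_n`.
-/

namespace SU

/-- The word of `γ_n(v)`: start with `[1]`, and for `k ≥ 1` append the letter `k+1` on
the right if coordinate `k−1` (0-based: `v (k-1)`) is `false`(=0) and prepend it on the
left if it is `true`(=1). -/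
def buildWord : ℕ → (ℕ → Bool) → List ℕ
  | 0, _ => []
  | 1, _ => [1]
  | (k+2), v => if v k then (k+2) :: buildWord (k+1) v else buildWord (k+1) v ++ [k+2]

/-- coordinate `k` (0-based) of `ρ_n`: `true`(=1) iff `k+2` occurs before `k+1`. -/
def rhoW (w : List ℕ) (k : ℕ) : Bool :=
  decide (w.idxOf (k+2) < w.idxOf (k+1))

/-- a word is a cubical vertex if it is strictly decreasing up to some position and
strictly increasing thereafter. -/
def IsCubicalWord (w : List ℕ) : Prop :=
  ∃ k < w.length, List.Pairwise (· > ·) (w.take (k+1)) ∧ List.Pairwise (· < ·) (w.drop k)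

theorem permWord_perm_range' (n : ℕ) (σ : Equiv.Perm (Fin n)) :
    (permWord n σ).Perm (List.range' 1 n) := by
  have identity_word : List.ofFn (fun k : Fin n => (k : ℕ) + 1) = List.range' 1 n :=
    List.ext_getElem (by simp) (by simp [add_comm])
  exact identity_word ▸ σ.ofFn_comp_perm (fun k : Fin n => (k : ℕ) + 1)

namespace IsCubicalWord

variable {w : List ℕ} {x : ℕ}

theorem singleton (x : ℕ) : IsCubicalWord [x] :=
  ⟨0, by simp, by simp, by simp⟩

theorem ne_nil (h : IsCubicalWord w) : w ≠ [] := by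
  obtain ⟨k, hk, -⟩ := h
  exact List.ne_nil_of_length_pos (by omega)

theorem reverse (h : IsCubicalWord w) : IsCubicalWord w.reverse := by
  obtain ⟨k, hk, hdec, hinc⟩ := h
  refine ⟨w.length - 1 - k, by rw [List.length_reverse]; omega, ?_, ?_⟩
  · rwa [List.take_reverse, List.pairwise_reverse,
      show w.length - (w.length - 1 - k + 1) = k by omega]
  · rwa [List.drop_reverse, List.pairwise_reverse,
      show w.length - (w.length - 1 - k) = k + 1 by omega]

theorem cons (h : IsCubicalWord w) (hx : ∀ y ∈ w, y < x) : IsCubicalWord (x :: w) := by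
  obtain ⟨k, hk, hdec, hinc⟩ := h
  refine ⟨k + 1, Nat.succ_lt_succ hk, ?_, hinc⟩
  exact hdec.cons fun y hy => hx y (List.mem_of_mem_take hy)

theorem concat (h : IsCubicalWord w) (hx : ∀ y ∈ w, y < x) : IsCubicalWord (w ++ [x]) := by
  simpa using (h.reverse.cons (by simpa using hx)).reverse

theorem of_cons (h : IsCubicalWord (x :: w)) (hw : w ≠ []) : IsCubicalWord w := by
  obtain ⟨_ | k, hk, hdec, hinc⟩ := h
  · refine ⟨0, List.length_pos_iff.2 hw, ?_, hinc.of_cons⟩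
    cases w <;> simp
  · exact ⟨k, Nat.lt_of_succ_lt_succ hk, hdec.of_cons, hinc⟩

theorem of_concat (h : IsCubicalWord (w ++ [x])) (hw : w ≠ []) : IsCubicalWord w := by
  have reversed : IsCubicalWord (x :: w.reverse) := by simpa using h.reverse
  simpa using (reversed.of_cons (by simpa using hw)).reverse

theorem forall_lt_left_or_right {l r : List ℕ} (h : IsCubicalWord (l ++ x :: r)) :
    (∀ y ∈ l, x < y) ∨ ∀ y ∈ r, x < y := by
  obtain ⟨k, -, hdec, hinc⟩ := h
  rcases le_or_gt l.length k with hk | hk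
  · have sublist_take : (l ++ [x]).Sublist ((l ++ x :: r).take (k + 1)) := by
      rw [show l ++ x :: r = (l ++ [x]) ++ r by simp,
        List.take_append, List.take_of_length_le (by simpa using hk)]
      exact List.sublist_append_left _ _
    exact .inl fun y hy =>
      (List.pairwise_append.1 (hdec.sublist sublist_take)).2.2 y hy x (List.mem_singleton_self x)
  · have sublist_drop : (x :: r).Sublist ((l ++ x :: r).drop k) := by
      rw [List.drop_append_of_le_length hk.le]
      exact List.sublist_append_right _ _
    exact .inr (List.pairwise_cons.1 (hinc.sublist sublist_drop)).1

theorem exists_eq_cons_or_eq_concat {n : ℕ} (h : IsCubicalWord w)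
    (hw : w.Perm (List.range' 1 (n + 1))) :
    ∃ u : List ℕ, u.Perm (List.range' 1 n) ∧ (w = (n + 1) :: u ∨ w = u ++ [n + 1]) := by
  have le_max : ∀ y ∈ w, y ≤ n + 1 := fun y hy => by
    have := List.mem_range'_1.1 (hw.subset hy)
    omega
  have max_mem : n + 1 ∈ w := hw.symm.subset (List.mem_range'_1.2 (by omega))
  obtain ⟨l, r, rfl⟩ := List.append_of_mem max_mem
  have remaining_perm : (l ++ r).Perm (List.range' 1 n) := by
    rw [List.range'_1_concat, add_comm 1 n] at hw
    exact (List.perm_middle.symm.trans (hw.trans (List.perm_append_singleton _ _))).cons_inv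
  refine ⟨l ++ r, remaining_perm, ?_⟩
  rcases h.forall_lt_left_or_right with hl | hr
  · obtain rfl : l = [] := List.eq_nil_iff_forall_not_mem.2 fun y hy =>
      (hl y hy).not_ge (le_max y (by simp [hy]))
    exact .inl rfl
  · obtain rfl : r = [] := List.eq_nil_iff_forall_not_mem.2 fun y hy =>
      (hr y hy).not_ge (le_max y (by simp [hy]))
    exact .inr (by simp)

end IsCubicalWord

section rhoW

variable {w : List ℕ} {k : ℕ}

theorem rhoW_cons_of_ne {x : ℕ} (h₁ : x ≠ k + 1) (h₂ : x ≠ k + 2) :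
    rhoW (x :: w) k = rhoW w k := by
  simp [rhoW, List.idxOf_cons_ne _ h₁, List.idxOf_cons_ne _ h₂]

theorem rhoW_cons_self : rhoW ((k + 2) :: w) k = true := by
  simp [rhoW, List.idxOf_cons_ne]

theorem rhoW_append_of_mem (u : List ℕ) (h₁ : k + 1 ∈ w) (h₂ : k + 2 ∈ w) :
    rhoW (w ++ u) k = rhoW w k := by
  simp only [rhoW, List.idxOf_append_of_mem h₁, List.idxOf_append_of_mem h₂]

theorem rhoW_append_of_mem_of_notMem (u : List ℕ) (h₁ : k + 1 ∈ w) (h₂ : k + 2 ∉ w) :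
    rhoW (w ++ u) k = false := by
  rw [rhoW, List.idxOf_append_of_mem h₁, List.idxOf_append_of_notMem h₂, decide_eq_false_iff_not]
  exact not_lt_of_ge ((List.idxOf_lt_length_of_mem h₁).le.trans (Nat.le_add_right _ _))

end rhoW

section buildWord

variable {n : ℕ}

theorem buildWord_perm_range' (n : ℕ) (v : ℕ → Bool) :
    (buildWord n v).Perm (List.range' 1 n) := by
  fun_induction buildWord n v with
  | case1 => rfl
  | case2 => rfl
  | case3 k v _ ih =>
    rw [List.range'_1_concat, show 1 + (k + 1) = k + 2 by omega]
    exact (ih.cons _).trans (List.perm_append_singleton _ _).symm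
  | case4 k v _ ih =>
    rw [List.range'_1_concat, show 1 + (k + 1) = k + 2 by omega]
    exact ih.append_right _

theorem mem_buildWord {v : ℕ → Bool} {m : ℕ} : m ∈ buildWord n v ↔ 1 ≤ m ∧ m ≤ n := by
  rw [(buildWord_perm_range' n v).mem_iff, List.mem_range'_1]
  omega

theorem isCubicalWord_buildWord (hn : n ≠ 0) (v : ℕ → Bool) : IsCubicalWord (buildWord n v) := by
  have lt_new_letter (k : ℕ) (v : ℕ → Bool) : ∀ y ∈ buildWord (k + 1) v, y < k + 2 :=
    fun _ hy => Nat.lt_succ_of_le (mem_buildWord.1 hy).2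
  fun_induction buildWord n v with
  | case1 => exact absurd rfl hn
  | case2 => exact .singleton 1
  | case3 k v _ ih => exact (ih k.succ_ne_zero).cons (lt_new_letter k v)
  | case4 k v _ ih => exact (ih k.succ_ne_zero).concat (lt_new_letter k v)

theorem rhoW_buildWord (v : ℕ → Bool) {k : ℕ} (hk : k + 1 < n) : rhoW (buildWord n v) k = v k := by
  fun_induction buildWord n v with
  | case1 => omega
  | case2 => omega
  | case3 m v hv ih =>
    obtain rfl | hkm := eq_or_ne k m
    · rw [rhoW_cons_self, hv]
    · rw [rhoW_cons_of_ne (by omega) (by omega), ih (by omega)]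
  | case4 m v hv ih =>
    have smaller_mem : k + 1 ∈ buildWord (m + 1) v := mem_buildWord.2 (by omega)
    obtain rfl | hkm := eq_or_ne k m
    · have larger_notMem : k + 2 ∉ buildWord (k + 1) v := by rw [mem_buildWord]; omega
      rw [rhoW_append_of_mem_of_notMem _ smaller_mem larger_notMem, Bool.eq_false_of_not_eq_true hv]
    · rw [rhoW_append_of_mem _ smaller_mem (mem_buildWord.2 (by omega)), ih (by omega)]

theorem buildWord_congr {u v : ℕ → Bool} (h : ∀ k, k + 1 < n → u k = v k) :
    buildWord n u = buildWord n v := by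
  fun_induction buildWord n u with
  | case1 => rfl
  | case2 => rfl
  | case3 k u hu ih =>
    rw [buildWord, ← h k (by omega), if_pos hu, ih fun i hi => h i (by omega)]
  | case4 k u hu ih =>
    rw [buildWord, ← h k (by omega), if_neg hu, ih fun i hi => h i (by omega)]

theorem buildWord_update_of_le (v : ℕ → Bool) {k : ℕ} (hk : n ≤ k + 1) (b : Bool) :
    buildWord n (Function.update v k b) = buildWord n v :=
  buildWord_congr fun _ hi => Function.update_of_ne (by omega) b v

theorem IsCubicalWord.exists_buildWord_eq {w : List ℕ} (h : IsCubicalWord w)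
    (hw : w.Perm (List.range' 1 n)) : ∃ v, buildWord n v = w := by
  induction n generalizing w with
  | zero => exact absurd hw.eq_nil h.ne_nil
  | succ n ih =>
    obtain _ | n := n
    · exact ⟨fun _ => false, (List.perm_singleton.1 hw).symm⟩
    obtain ⟨u, hu, rfl | rfl⟩ := h.exists_eq_cons_or_eq_concat hw <;>
      have u_ne_nil : u ≠ [] := List.ne_nil_of_length_pos (by simp [hu.length_eq])
    · obtain ⟨v, rfl⟩ := ih (h.of_cons u_ne_nil) hu
      exact ⟨Function.update v n true, by simp [buildWord, buildWord_update_of_le]⟩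
    · obtain ⟨v, rfl⟩ := ih (h.of_concat u_ne_nil) hu
      exact ⟨Function.update v n false, by simp [buildWord, buildWord_update_of_le]⟩

theorem buildWord_rhoW_buildWord (n : ℕ) (v : ℕ → Bool) :
    buildWord n (rhoW (buildWord n v)) = buildWord n v :=
  buildWord_congr fun _ hk => rhoW_buildWord v hk

theorem buildWord_rhoW_eq_self_iff {w : List ℕ} (hn : n ≠ 0) (hw : w.Perm (List.range' 1 n)) :
    buildWord n (rhoW w) = w ↔ IsCubicalWord w := by
  constructor
  · intro fixed
    exact fixed ▸ isCubicalWord_buildWord hn _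
  · intro h
    obtain ⟨v, rfl⟩ := h.exists_buildWord_eq hw
    exact buildWord_rhoW_buildWord n v

end buildWord

/-- For `n ≥ 2`:
(i) for every `v ∈ {0,1}^{n−1}`, `γ_n(v)` is a permutation of `{1,…,n}` and a cubical
vertex; (ii) for every `σ ∈ S_n`, `γ_n(ρ_n(σ)) = σ` iff `σ` is a cubical vertex;
and moreover `ρ_n(γ_n(v)) = v` (on the relevant coordinates `k < n−1`), so `γ_n` and
`ρ_n` restrict to mutually inverse bijections between `{0,1}^{n−1}` and the cubical
vertices. -/
theorem statement13 (n : ℕ) (hn : 2 ≤ n) :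
    (∀ v : ℕ → Bool,
        (buildWord n v).Perm (List.range' 1 n) ∧ IsCubicalWord (buildWord n v)) ∧
    (∀ σ : Equiv.Perm (Fin n),
        buildWord n (rhoW (permWord n σ)) = permWord n σ ↔
          IsCubicalWord (permWord n σ)) ∧
    (∀ v : ℕ → Bool, ∀ k, k < n - 1 → rhoW (buildWord n v) k = v k) := by
  have n_ne_zero : n ≠ 0 := by omega
  refine ⟨fun v => ?_, fun σ => ?_, fun v k hk => ?_⟩
  · exact ⟨buildWord_perm_range' n v, isCubicalWord_buildWord n_ne_zero v⟩
  · exact buildWord_rhoW_eq_self_iff n_ne_zero (permWord_perm_range' n σ)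
  · exact rhoW_buildWord v (by omega)

end SU
end

section
/- Let n ≥ 2, let A|B be a 2-block ordered partition of {1,…,n+1} with #A = p and #B = q, and let C|D be a 2-block ordered partition of {1,…,n}. Then there exists a partition of {1,…,n+1} into three nonempty sets arranged as X|Y|Z such that either (A = X, B = Y ∪ Z, and C|D = X□(Y|Z)) or (A = X ∪ Y, B = Z, and C|D = (X|Y)□Z), if and only if: C|D ∈ Q_{q,1}(n) ∪ Q_{1,p}(n) in case n+1 ∈ A, and C|D ∈ Q_{p,1}(n) ∪ Q_{1,q}(n) in case n+1 ∈ B. -/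
namespace SU

/-- `I_S(x)`: the (1-based) position of `x` in the increasing enumeration of `S`. -/
def iord (S : Finset ℕ) (x : ℕ) : ℕ := (S.filter (· ≤ x)).card

/-- `I_S⁻¹(k)`: the `k`-th smallest element of `S` (1-based). -/
def iinv (S : Finset ℕ) (k : ℕ) : ℕ := (S.sort (· ≤ ·)).getD (k - 1) 0

/-- lower disjoint union `A ⊔̲ B` with respect to the ambient set `U`. -/
def lcup (U A B : Finset ℕ) : Finset ℕ :=
  if A = ∅ ∨ B = ∅ then A ∪ B
  else if fmin B = fmin (U \ A) then
    B.image (fun b => iord (U \ A) b + A.card - 1) ∪ Finset.Icc 1 A.card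
  else B.image (fun b => iord (U \ A) b + A.card - 1)

/-- upper disjoint union `A ⊔̄ B` with respect to the ambient set `U`. -/
def ucup (U A B : Finset ℕ) : Finset ℕ :=
  if A = ∅ ∨ B = ∅ then A ∪ B
  else if fmax A = fmax (U \ B) then
    A.image (iord (U \ B)) ∪ Finset.Icc (U.card - B.card) (U.card - 1)
  else A.image (iord (U \ B))

/-- `A □ (B_1|⋯|B_k) = (B_1|⋯|B_k) □ A`, with ambient set `U`. -/
def box (U A : Finset ℕ) (Bs : List (Finset ℕ)) : List (Finset ℕ) :=
  if fmax A = fmax U then Bs.map (fun B => ucup U B A)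
  else Bs.map (fun B => lcup U A B)

/-- 2-block ordered partitions of `{1,…,n}`. -/
def IsPart2 (n : ℕ) (C D : Finset ℕ) : Prop :=
  C ≠ ∅ ∧ D ≠ ∅ ∧ Disjoint C D ∧ C ∪ D = Finset.Icc 1 n

/-- `C|D ∈ Q_{r,1}(n)`. -/
def memQr1 (r n : ℕ) (C D : Finset ℕ) : Prop :=
  IsPart2 n C D ∧ (Finset.Icc 1 r ⊆ C ∨ Finset.Icc 1 r ⊆ D)

/-- `C|D ∈ Q_{1,s}(n)`. -/
def memQ1s (s n : ℕ) (C D : Finset ℕ) : Prop :=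
  IsPart2 n C D ∧ (Finset.Icc (n - s + 1) n ⊆ C ∨ Finset.Icc (n - s + 1) n ⊆ D)

end SU
namespace SU

/-!
Let `#U = n + 1`. Numbering the elements of `T = U ∖ S` by `I_T` turns a bipartition `Y|Z` of `T`
into one of `{1,…,k}`, where `k = #T`. The operation `S □ (Y|Z)` then merely takes preimages of the
two blocks under a monotone surjection `{1,…,n} → {1,…,k}`: `x ↦ min x k` for the upper union and
`x ↦ max (x + 1 - #S) 1` for the lower one. Each of these maps is injective except that it collapses
one interval `J` to a point, `J = {n - #S + 1,…,n}` and `J = {1,…,#S}` respectively. Hence `C|D`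
arises in this way exactly when it is a bipartition that does not separate points of `J`.
-/

section

open Finset

section Bipartition

variable {α β γ : Type*} [DecidableEq α] [DecidableEq β] [DecidableEq γ]

/-- `C|D` is an ordered partition of `S` into two nonempty blocks; `IsPart2 n` is the case
`S = {1,…,n}`. -/
structure IsBipartition (S C D : Finset α) : Prop where
  left_nonempty : C.Nonempty
  right_nonempty : D.Nonempty
  disjoint : Disjoint C D
  union_eq : C ∪ D = S

namespace IsBipartition

variable {S C D : Finset α}

lemma symm (h : IsBipartition S C D) : IsBipartition S D C :=
  ⟨h.right_nonempty, h.left_nonempty, h.disjoint.symm, union_comm C D ▸ h.union_eq⟩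

lemma left_subset (h : IsBipartition S C D) : C ⊆ S :=
  h.union_eq ▸ subset_union_left

lemma right_subset (h : IsBipartition S C D) : D ⊆ S :=
  h.symm.left_subset

lemma mem_iff (h : IsBipartition S C D) {x : α} : x ∈ S ↔ x ∈ C ∨ x ∈ D := by
  rw [← h.union_eq, mem_union]

lemma sdiff_left (h : IsBipartition S C D) : S \ C = D := by
  rw [← h.union_eq, union_sdiff_cancel_left h.disjoint]

lemma card_add_card (h : IsBipartition S C D) : #C + #D = #S := by
  rw [← h.union_eq, card_union_of_disjoint h.disjoint]

lemma image {f : α → β} (h : IsBipartition S C D) (hf : Disjoint (C.image f) (D.image f)) :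
    IsBipartition (S.image f) (C.image f) (D.image f) :=
  ⟨h.left_nonempty.image f, h.right_nonempty.image f, hf, by rw [← image_union, h.union_eq]⟩

lemma preimage {f : α → β} {Y Z : Finset β} (h : IsBipartition (S.image f) Y Z) :
    IsBipartition S {x ∈ S | f x ∈ Y} {x ∈ S | f x ∈ Z} where
  left_nonempty := by
    obtain ⟨y, hy⟩ := h.left_nonempty
    obtain ⟨x, hx, rfl⟩ := mem_image.1 (h.left_subset hy)
    exact ⟨x, mem_filter.2 ⟨hx, hy⟩⟩
  right_nonempty := by
    obtain ⟨z, hz⟩ := h.right_nonempty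
    obtain ⟨x, hx, rfl⟩ := mem_image.1 (h.right_subset hz)
    exact ⟨x, mem_filter.2 ⟨hx, hz⟩⟩
  disjoint := disjoint_filter.2 fun _ _ hY hZ => disjoint_left.1 h.disjoint hY hZ
  union_eq := by
    rw [← filter_or]
    exact filter_true_of_mem fun x hx => h.mem_iff.1 (mem_image_of_mem f hx)

lemma filter_mem_image_left {f : α → β} (h : IsBipartition S C D)
    (hf : Disjoint (C.image f) (D.image f)) : {x ∈ S | f x ∈ C.image f} = C := by
  ext x
  rw [mem_filter]
  refine ⟨fun ⟨hx, hxC⟩ => (h.mem_iff.1 hx).resolve_right fun hxD => ?_,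
    fun hx => ⟨h.left_subset hx, mem_image_of_mem f hx⟩⟩
  exact disjoint_left.1 hf hxC (mem_image_of_mem f hxD)

lemma disjoint_image_iff_of_collapse {f : α → β} {J : Finset α} (h : IsBipartition S C D)
    (hJ : J ⊆ S) (hf : ∀ x ∈ S, ∀ y ∈ S, f x = f y ↔ x = y ∨ x ∈ J ∧ y ∈ J) :
    Disjoint (C.image f) (D.image f) ↔ J ⊆ C ∨ J ⊆ D := by
  have disjoint_iff : Disjoint (C.image f) (D.image f) ↔ ∀ x ∈ C, ∀ y ∈ D, ¬(x ∈ J ∧ y ∈ J) := by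
    simp only [disjoint_iff_ne, forall_mem_image]
    refine forall₂_congr fun x hx => forall₂_congr fun y hy => ?_
    rw [ne_eq, hf x (h.left_subset hx) y (h.right_subset hy),
      or_iff_right (disjoint_iff_ne.1 h.disjoint x hx y hy)]
  rw [disjoint_iff]
  constructor
  · intro hsep
    by_contra! ⟨hJC, hJD⟩
    obtain ⟨y, hyJ, hyC⟩ := not_subset.1 hJC
    obtain ⟨x, hxJ, hxD⟩ := not_subset.1 hJD
    exact hsep x ((h.mem_iff.1 (hJ hxJ)).resolve_right hxD)
      y ((h.mem_iff.1 (hJ hyJ)).resolve_left hyC) ⟨hxJ, hyJ⟩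
  · rintro (hJC | hJD) x hx y hy ⟨hxJ, hyJ⟩
    · exact disjoint_left.1 h.disjoint (hJC hyJ) hy
    · exact disjoint_left.1 h.disjoint hx (hJD hxJ)

end IsBipartition

lemma exists_isBipartition_image_iff {S : Finset α} {f : α → β} (hf : Set.InjOn f S)
    (P : Finset β → Finset β → Prop) :
    (∃ Y Z, IsBipartition S Y Z ∧ P (Y.image f) (Z.image f)) ↔
      ∃ Y Z, IsBipartition (S.image f) Y Z ∧ P Y Z := by
  constructor
  · rintro ⟨Y, Z, h, hP⟩
    have hdisj : Disjoint (Y.image f) (Z.image f) := by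
      rw [← disjoint_coe, coe_image, coe_image]
      exact (disjoint_coe.2 h.disjoint).image hf h.left_subset h.right_subset
    exact ⟨_, _, h.image hdisj, hP⟩
  · rintro ⟨Y, Z, h, hP⟩
    have image_preimage {W : Finset β} (hW : W ⊆ S.image f) : {x ∈ S | f x ∈ W}.image f = W :=
      (filter_image (p := (· ∈ W))).symm.trans (by rw [filter_mem_eq_inter, inter_eq_right.2 hW])
    refine ⟨_, _, h.preimage, ?_⟩
    rwa [image_preimage h.left_subset, image_preimage h.right_subset]

lemma exists_eq_preimage_iff {S C D : Finset α} {f : α → β} :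
    (∃ Y Z, IsBipartition (S.image f) Y Z ∧ C = {x ∈ S | f x ∈ Y} ∧ D = {x ∈ S | f x ∈ Z}) ↔
      IsBipartition S C D ∧ Disjoint (C.image f) (D.image f) := by
  constructor
  · rintro ⟨Y, Z, h, rfl, rfl⟩
    refine ⟨h.preimage, h.disjoint.mono ?_ ?_⟩ <;>
      exact image_subset_iff.2 fun x hx => (mem_filter.1 hx).2
  · rintro ⟨h, hf⟩
    exact ⟨_, _, h.image hf, (h.filter_mem_image_left hf).symm,
      (h.symm.filter_mem_image_left hf.symm).symm⟩

lemma exists_eq_preimage_image_iff_of_collapse {S J C D : Finset α} {T : Finset γ} {f : α → β}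
    {g : γ → β} (hg : Set.InjOn g T) (hfg : S.image f = T.image g) (hJ : J ⊆ S)
    (hf : ∀ x ∈ S, ∀ y ∈ S, f x = f y ↔ x = y ∨ x ∈ J ∧ y ∈ J) :
    (∃ Y Z, IsBipartition T Y Z ∧
        C = {x ∈ S | f x ∈ Y.image g} ∧ D = {x ∈ S | f x ∈ Z.image g}) ↔
      IsBipartition S C D ∧ (J ⊆ C ∨ J ⊆ D) := by
  rw [exists_isBipartition_image_iff hg
      fun Y Z => C = {x ∈ S | f x ∈ Y} ∧ D = {x ∈ S | f x ∈ Z},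
    ← hfg, exists_eq_preimage_iff]
  exact and_congr_right fun h => h.disjoint_image_iff_of_collapse hJ hf

lemma exists_tripartition_iff {U A B : Finset α} (hAB : IsBipartition U A B)
    (P Q : Finset α → Finset α → Finset α → Prop) :
    (∃ X Y Z : Finset α, X ≠ ∅ ∧ Y ≠ ∅ ∧ Z ≠ ∅ ∧ Disjoint X Y ∧ Disjoint X Z ∧ Disjoint Y Z ∧
        X ∪ Y ∪ Z = U ∧ ((A = X ∧ B = Y ∪ Z ∧ P X Y Z) ∨ (A = X ∪ Y ∧ B = Z ∧ Q X Y Z))) ↔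
      (∃ Y Z, IsBipartition B Y Z ∧ P A Y Z) ∨ ∃ X Y, IsBipartition A X Y ∧ Q X Y B := by
  simp only [← nonempty_iff_ne_empty]
  constructor
  · rintro ⟨X, Y, Z, hX, hY, hZ, hXY, -, hYZ, -, ⟨rfl, rfl, hP⟩ | ⟨rfl, rfl, hQ⟩⟩
    · exact Or.inl ⟨Y, Z, ⟨hY, hZ, hYZ, rfl⟩, hP⟩
    · exact Or.inr ⟨X, Y, ⟨hX, hY, hXY, rfl⟩, hQ⟩
  · rintro (⟨Y, Z, ⟨hY, hZ, hYZ, rfl⟩, hP⟩ | ⟨X, Y, ⟨hX, hY, hXY, rfl⟩, hQ⟩)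
    · obtain ⟨hAY, hAZ⟩ := disjoint_union_right.1 hAB.disjoint
      exact ⟨A, Y, Z, hAB.left_nonempty, hY, hZ, hAY, hAZ, hYZ,
        by rw [union_assoc, hAB.union_eq], Or.inl ⟨rfl, rfl, hP⟩⟩
    · obtain ⟨hXB, hYB⟩ := disjoint_union_left.1 hAB.disjoint
      exact ⟨X, Y, B, hX, hY, hAB.right_nonempty, hXY, hXB, hYB,
        hAB.union_eq, Or.inr ⟨rfl, rfl, hQ⟩⟩

end Bipartition

lemma isPart2_iff {n : ℕ} {C D : Finset ℕ} : IsPart2 n C D ↔ IsBipartition (Icc 1 n) C D :=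
  ⟨fun ⟨hC, hD, hCD, h⟩ => ⟨nonempty_iff_ne_empty.2 hC, nonempty_iff_ne_empty.2 hD, hCD, h⟩,
    fun ⟨hC, hD, hCD, h⟩ => ⟨hC.ne_empty, hD.ne_empty, hCD, h⟩⟩

section Extrema

variable {S T Y : Finset ℕ}

lemma isGreatest_fmax (hS : S.Nonempty) : IsGreatest (S : Set ℕ) (fmax S) := by
  rw [fmax, ← coe_max' hS]
  exact S.isGreatest_max' hS

lemma isLeast_fmin (hS : S.Nonempty) : IsLeast (S : Set ℕ) (fmin S) := by
  rw [fmin, ← coe_min' hS]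
  exact S.isLeast_min' hS

lemma fmax_eq_fmax_iff_mem (hY : Y.Nonempty) (hYT : Y ⊆ T) : fmax Y = fmax T ↔ fmax T ∈ Y :=
  ⟨fun h => h ▸ (isGreatest_fmax hY).1, fun h => (isGreatest_fmax hY).unique
    ⟨h, fun _ hy => (isGreatest_fmax (hY.mono hYT)).2 (hYT hy)⟩⟩

lemma fmin_eq_fmin_iff_mem (hY : Y.Nonempty) (hYT : Y ⊆ T) : fmin Y = fmin T ↔ fmin T ∈ Y :=
  ⟨fun h => h ▸ (isLeast_fmin hY).1, fun h => (isLeast_fmin hY).unique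
    ⟨h, fun _ hy => (isLeast_fmin (hY.mono hYT)).2 (hYT hy)⟩⟩

lemma fmax_Icc {a b : ℕ} (hab : a ≤ b) : fmax (Icc a b) = b :=
  (isGreatest_fmax (nonempty_Icc.2 hab)).unique (by simpa using isGreatest_Icc hab)

lemma iord_strictMonoOn (T : Finset ℕ) : StrictMonoOn (iord T) T := fun a _ b hb hab =>
  card_lt_card <| ssubset_iff_of_subset (monotone_filter_right T fun _ _ hx => hx.trans hab.le) |>.2
    ⟨b, by simpa using hb, by simp [hab]⟩

lemma image_iord (T : Finset ℕ) : T.image (iord T) = Icc 1 #T := by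
  refine eq_of_subset_of_card_le (image_subset_iff.2 fun x hx => mem_Icc.2 ⟨?_, ?_⟩) ?_
  · exact card_pos.2 ⟨x, by simpa using hx⟩
  · exact card_filter_le _ _
  · rw [card_image_of_injOn (iord_strictMonoOn T).injOn, Nat.card_Icc, Nat.add_sub_cancel]

lemma iord_fmax (hT : T.Nonempty) : iord T (fmax T) = #T := by
  rw [iord, filter_true_of_mem fun x hx => (isGreatest_fmax hT).2 hx]

lemma iord_fmin (hT : T.Nonempty) : iord T (fmin T) = 1 := by
  refine card_eq_one.2 ⟨fmin T, eq_singleton_iff_unique_mem.2 ⟨?_, fun x hx => ?_⟩⟩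
  · simpa using (isLeast_fmin hT).1
  · obtain ⟨hxT, hx⟩ := mem_filter.1 hx
    exact hx.antisymm ((isLeast_fmin hT).2 hxT)

lemma iord_mem_image_iord_iff {x : ℕ} (hYT : Y ⊆ T) (hx : x ∈ T) :
    iord T x ∈ Y.image (iord T) ↔ x ∈ Y := by
  simpa using (iord_strictMonoOn T).injOn.mem_image_iff (coe_subset.2 hYT) hx

lemma fmax_eq_fmax_iff_card_mem (hY : Y.Nonempty) (hYT : Y ⊆ T) :
    fmax Y = fmax T ↔ #T ∈ Y.image (iord T) := by
  have hT : T.Nonempty := hY.mono hYT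
  rw [fmax_eq_fmax_iff_mem hY hYT, ← iord_mem_image_iord_iff hYT (isGreatest_fmax hT).1,
    iord_fmax hT]

lemma fmin_eq_fmin_iff_one_mem (hY : Y.Nonempty) (hYT : Y ⊆ T) :
    fmin Y = fmin T ↔ 1 ∈ Y.image (iord T) := by
  have hT : T.Nonempty := hY.mono hYT
  rw [fmin_eq_fmin_iff_mem hY hYT, ← iord_mem_image_iord_iff hYT (isLeast_fmin hT).1, iord_fmin hT]

end Extrema

section Collapse

variable {n k s : ℕ} {W : Finset ℕ}

lemma filter_min_mem_eq (hW : W ⊆ Icc 1 k) (hkn : k ≤ n) :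
    {x ∈ Icc 1 n | min x k ∈ W} = if k ∈ W then W ∪ Icc k n else W := by
  ext x
  have hWk {y : ℕ} (hy : y ∈ W) : 1 ≤ y ∧ y ≤ k := mem_Icc.1 (hW hy)
  split_ifs <;> simp only [mem_union, mem_filter, mem_Icc] <;> grind

lemma filter_max_mem_eq (hW : W ⊆ Icc 1 k) (hs : 1 ≤ s) (hsk : s + k = n + 1) :
    {x ∈ Icc 1 n | max (x + 1 - s) 1 ∈ W} =
      if 1 ∈ W then W.image (· + s - 1) ∪ Icc 1 s else W.image (· + s - 1) := by
  ext x
  have hWk {y : ℕ} (hy : y ∈ W) : 1 ≤ y ∧ y ≤ k := mem_Icc.1 (hW hy)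
  have mem_shift : x ∈ W.image (· + s - 1) ↔ s ≤ x ∧ x + 1 - s ∈ W := by
    rw [mem_image]
    constructor
    · rintro ⟨y, hy, rfl⟩
      have hy1 : 1 ≤ y := (hWk hy).1
      exact ⟨by omega, by rwa [show y + s - 1 + 1 - s = y by omega]⟩
    · rintro ⟨hsx, hx⟩
      exact ⟨_, hx, by omega⟩
  split_ifs <;> simp only [mem_union, mem_shift, mem_filter, mem_Icc] <;> grind

lemma image_min_Icc (hk : 1 ≤ k) (hkn : k ≤ n) : (Icc 1 n).image (min · k) = Icc 1 k := by
  ext y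
  simp only [mem_image, mem_Icc]
  exact ⟨by omega, fun hy => ⟨y, by omega⟩⟩

lemma image_max_Icc (hs : 1 ≤ s) (hk : 1 ≤ k) (hsk : s + k = n + 1) :
    (Icc 1 n).image (fun x => max (x + 1 - s) 1) = Icc 1 k := by
  ext y
  simp only [mem_image, mem_Icc]
  exact ⟨by omega, fun hy => ⟨y + s - 1, by omega⟩⟩

end Collapse

section Box

variable {n : ℕ} {U S T Y C D : Finset ℕ}

lemma ucup_eq_filter (hST : IsBipartition U S T) (hU : #U = n + 1) (hY : Y.Nonempty)
    (hYT : Y ⊆ T) : ucup U Y S = {x ∈ Icc 1 n | min x #T ∈ Y.image (iord T)} := by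
  have hcard : #S + #T = n + 1 := hU ▸ hST.card_add_card
  have hS : 0 < #S := hST.left_nonempty.card_pos
  have hYk : Y.image (iord T) ⊆ Icc 1 #T := image_iord T ▸ image_subset_image hYT
  rw [ucup, if_neg (by simp [hY.ne_empty, hST.left_nonempty.ne_empty]), hST.sdiff_left,
    filter_min_mem_eq hYk (by omega)]
  simp only [fmax_eq_fmax_iff_card_mem hY hYT]
  rw [show #U - #S = #T by omega, show #U - 1 = n by omega]

lemma lcup_eq_filter (hST : IsBipartition U S T) (hU : #U = n + 1) (hY : Y.Nonempty)
    (hYT : Y ⊆ T) :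
    lcup U S Y = {x ∈ Icc 1 n | max (x + 1 - #S) 1 ∈ Y.image (iord T)} := by
  have hcard : #S + #T = n + 1 := hU ▸ hST.card_add_card
  have hYk : Y.image (iord T) ⊆ Icc 1 #T := image_iord T ▸ image_subset_image hYT
  rw [lcup, if_neg (by simp [hY.ne_empty, hST.left_nonempty.ne_empty]), hST.sdiff_left,
    filter_max_mem_eq hYk hST.left_nonempty.card_pos hcard, image_image]
  simp only [fmin_eq_fmin_iff_one_mem hY hYT, Function.comp_def]

lemma exists_box_iff_memQ1s (hST : IsBipartition U S T) (hU : #U = n + 1) (hmax : fmax U ∈ S) :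
    (∃ Y Z, IsBipartition T Y Z ∧ [C, D] = box U S [Y, Z]) ↔ memQ1s #S n C D := by
  have hcard : #S + #T = n + 1 := hU ▸ hST.card_add_card
  have hS : 0 < #S := hST.left_nonempty.card_pos
  have hT : 0 < #T := hST.right_nonempty.card_pos
  have box_eq {Y Z} (h : IsBipartition T Y Z) : [C, D] = box U S [Y, Z] ↔
      C = {x ∈ Icc 1 n | min x #T ∈ Y.image (iord T)} ∧
        D = {x ∈ Icc 1 n | min x #T ∈ Z.image (iord T)} := by
    rw [box, if_pos ((fmax_eq_fmax_iff_mem hST.left_nonempty hST.left_subset).2 hmax),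
      ← ucup_eq_filter hST hU h.left_nonempty h.left_subset,
      ← ucup_eq_filter hST hU h.right_nonempty h.right_subset]
    simp
  rw [exists₂_congr fun Y Z => and_congr_right box_eq, memQ1s, isPart2_iff,
    show n - #S + 1 = #T by omega]
  refine exists_eq_preimage_image_iff_of_collapse (iord_strictMonoOn T).injOn ?_
    (Icc_subset_Icc_left hT) ?_
  · rw [image_min_Icc hT (by omega), image_iord]
  · simp only [mem_Icc]
    omega

lemma exists_box_iff_memQr1 (hST : IsBipartition U S T) (hU : #U = n + 1) (hmax : fmax U ∉ S) :
    (∃ Y Z, IsBipartition T Y Z ∧ [C, D] = box U S [Y, Z]) ↔ memQr1 #S n C D := by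
  have hcard : #S + #T = n + 1 := hU ▸ hST.card_add_card
  have hS : 0 < #S := hST.left_nonempty.card_pos
  have hT : 0 < #T := hST.right_nonempty.card_pos
  have box_eq {Y Z} (h : IsBipartition T Y Z) : [C, D] = box U S [Y, Z] ↔
      C = {x ∈ Icc 1 n | max (x + 1 - #S) 1 ∈ Y.image (iord T)} ∧
        D = {x ∈ Icc 1 n | max (x + 1 - #S) 1 ∈ Z.image (iord T)} := by
    rw [box, if_neg (mt (fmax_eq_fmax_iff_mem hST.left_nonempty hST.left_subset).1 hmax),
      ← lcup_eq_filter hST hU h.left_nonempty h.left_subset,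
      ← lcup_eq_filter hST hU h.right_nonempty h.right_subset]
    simp
  rw [exists₂_congr fun Y Z => and_congr_right box_eq, memQr1, isPart2_iff]
  refine exists_eq_preimage_image_iff_of_collapse (iord_strictMonoOn T).injOn ?_
    (Icc_subset_Icc_right (by omega)) ?_
  · rw [image_max_Icc hS hT hcard, image_iord]
  · simp only [mem_Icc]
    omega

end Box

theorem statement14_general {n : ℕ} {U A B : Finset ℕ} (hU : #U = n + 1)
    (hAB : IsBipartition U A B) (C D : Finset ℕ) :
    (∃ X Y Z : Finset ℕ, X ≠ ∅ ∧ Y ≠ ∅ ∧ Z ≠ ∅ ∧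
        Disjoint X Y ∧ Disjoint X Z ∧ Disjoint Y Z ∧ X ∪ Y ∪ Z = U ∧
        ((A = X ∧ B = Y ∪ Z ∧ [C, D] = box U X [Y, Z]) ∨
         (A = X ∪ Y ∧ B = Z ∧ [C, D] = box U Z [X, Y]))) ↔
      ((fmax U ∈ A ∧ (memQr1 #B n C D ∨ memQ1s #A n C D)) ∨
       (fmax U ∈ B ∧ (memQr1 #A n C D ∨ memQ1s #B n C D))) := by
  rw [exists_tripartition_iff hAB (fun X Y Z => [C, D] = box U X [Y, Z])
    fun X Y Z => [C, D] = box U Z [X, Y]]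
  have hmax : fmax U ∈ A ∨ fmax U ∈ B :=
    hAB.mem_iff.1 (isGreatest_fmax (hAB.left_nonempty.mono hAB.left_subset)).1
  rcases hmax with hA | hB
  · have hB : fmax U ∉ B := disjoint_left.1 hAB.disjoint hA
    rw [exists_box_iff_memQ1s hAB hU hA, exists_box_iff_memQr1 hAB.symm hU hB]
    tauto
  · have hA : fmax U ∉ A := disjoint_right.1 hAB.disjoint hB
    rw [exists_box_iff_memQr1 hAB hU hA, exists_box_iff_memQ1s hAB.symm hU hB]
    tauto

end

/-- Let `A|B` be a 2-block ordered partition of `{1,…,n+1}` with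
`#A = p`, `#B = q`, and let `C|D` be a 2-block ordered partition of `{1,…,n}`.  There
is a partition `X|Y|Z` of `{1,…,n+1}` into three nonempty sets with either
(`A = X`, `B = Y∪Z`, `C|D = X□(Y|Z)`) or (`A = X∪Y`, `B = Z`, `C|D = (X|Y)□Z`)
if and only if `C|D ∈ Q_{q,1}(n) ∪ Q_{1,p}(n)` when `n+1 ∈ A`, and
`C|D ∈ Q_{p,1}(n) ∪ Q_{1,q}(n)` when `n+1 ∈ B`. -/
theorem statement14 (n : ℕ) (hn : 2 ≤ n) (A B C D : Finset ℕ)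
    (hAB : IsPart2 (n+1) A B) (hCD : IsPart2 n C D) :
    (∃ X Y Z : Finset ℕ, X ≠ ∅ ∧ Y ≠ ∅ ∧ Z ≠ ∅ ∧
        Disjoint X Y ∧ Disjoint X Z ∧ Disjoint Y Z ∧
        X ∪ Y ∪ Z = Finset.Icc 1 (n+1) ∧
        ((A = X ∧ B = Y ∪ Z ∧ [C, D] = box (Finset.Icc 1 (n+1)) X [Y, Z]) ∨
         (A = X ∪ Y ∧ B = Z ∧ [C, D] = box (Finset.Icc 1 (n+1)) Z [X, Y]))) ↔
      (((n+1) ∈ A ∧ (memQr1 B.card n C D ∨ memQ1s A.card n C D)) ∨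
       ((n+1) ∈ B ∧ (memQr1 A.card n C D ∨ memQ1s B.card n C D))) := by
  simpa only [fmax_Icc (Nat.le_add_left 1 n)] using
    statement14_general (by simp) (isPart2_iff.1 hAB) C D

end SU
end
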